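/- (Łojasiewicz gradient inequality) Let M = (M_0, M_1, M_2, …) be an increasing sequence of positive real numbers with M_0 = 1 that is logarithmically convex, satisfies ∑_{k≥0} M_k/((k+1)M_{k+1}) = ∞, and satisfies sup_{j≥1} (M_{j+1}/M_j)^{1/j} < ∞. Let U ⊆ ℝ^N be a connected open set and f ∈ C^ℝ_M(U), and suppose that for all x ∈ U, ∇f(x) = 0 implies f(x) = 0, where ∇f = (∂f/∂x_1, …, ∂f/∂x_N). Then for every compact K ⊆ U there exist a constant C > 0, a real μ with 0 < μ ≤ 1, and an open neighborhood W of K in U such that |∇f(x)| ≥ C·|f(x)|^{1−μ} for all x ∈ W. -/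

import Mathlib

/-- The `i`-th partial derivative of a function on Euclidean space. -/
noncomputable def pd {ι : Type} [Fintype ι] [DecidableEq ι] {W : Type} [NormedAddCommGroup W]
    [NormedSpace ℝ W] (i : ι) (f : EuclideanSpace ℝ ι → W) : EuclideanSpace ℝ ι → W :=
  fun x => fderiv ℝ f x (EuclideanSpace.single i 1)

/-- The multi-index derivative `D^α f`. -/
noncomputable def mderiv {ι : Type} [Fintype ι] [DecidableEq ι] {W : Type} [NormedAddCommGroup W]
    [NormedSpace ℝ W] (α : ι → ℕ) (f : EuclideanSpace ℝ ι → W) : EuclideanSpace ℝ ι → W :=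
  (Finset.univ : Finset ι).toList.foldr (fun i g => (pd i)^[α i] g) f

/-- Membership in the real Denjoy-Carleman class `C^ℝ_M(U)`: `f` is `C^∞` on `U` and on every
compact `K ⊆ U` there are `A, B > 0` with `|(1/α!) D^α f(x)| ≤ A B^{|α|} M_{|α|}`. -/
def CRM {ι : Type} [Fintype ι] [DecidableEq ι] (M : ℕ → ℝ)
    (U : Set (EuclideanSpace ℝ ι)) (f : EuclideanSpace ℝ ι → ℝ) : Prop :=
  ContDiffOn ℝ (⊤ : ℕ∞) f U ∧
  ∀ K : Set (EuclideanSpace ℝ ι), K ⊆ U → IsCompact K →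
    ∃ A B : ℝ, 0 < A ∧ 0 < B ∧ ∀ x ∈ K, ∀ α : ι → ℕ,
      (1 / (∏ i, ((α i).factorial : ℝ))) * |mderiv α f x| ≤
        A * B ^ (∑ i, α i) * M (∑ i, α i)


namespace LG

open Filter Topology Set
open scoped ContDiff Nat

/-- Standing hypotheses on the weight sequence. -/
structure HM (M : ℕ → ℝ) : Prop where
  pos : ∀ j, 0 < M j
  one_le : ∀ j, 1 ≤ M j
  zero : M 0 = 1
  mul_le : ∀ i j, M i * M j ≤ M (i + j)
  der : ∃ C D : ℝ, 0 < C ∧ 0 < D ∧ ∀ j, M (j + 1) ≤ C * D ^ j * M j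

/-- Denjoy-Carleman germs at `0`. -/
def Q (M : ℕ → ℝ) {E W : Type} [NormedAddCommGroup E] [NormedSpace ℝ E]
    [NormedAddCommGroup W] [NormedSpace ℝ W] (f : E → W) : Prop :=
  ∃ A B : ℝ, 0 < A ∧ 0 < B ∧ ∀ᶠ x in 𝓝 (0 : E), ContDiffAt ℝ ∞ f x ∧
    ∀ m : ℕ, ‖iteratedFDeriv ℝ m f x‖ ≤ A * B ^ m * ((m ! : ℝ) * M m)

variable {M : ℕ → ℝ}
variable {E F G W W' V : Type} [NormedAddCommGroup E] [NormedSpace ℝ E]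
  [NormedAddCommGroup F] [NormedSpace ℝ F]
  [NormedAddCommGroup G] [NormedSpace ℝ G]
  [NormedAddCommGroup W] [NormedSpace ℝ W] [NormedAddCommGroup W'] [NormedSpace ℝ W']
  [NormedAddCommGroup V] [NormedSpace ℝ V]

lemma leibniz_at (L : V →L[ℝ] W →L[ℝ] W') {f : E → V} {g : E → W} {x : E}
    (hf : ContDiffAt ℝ ∞ f x) (hg : ContDiffAt ℝ ∞ g x) (n : ℕ) :
    ‖iteratedFDeriv ℝ n (fun y => L (f y) (g y)) x‖ ≤
      ‖L‖ * ∑ i ∈ Finset.range (n + 1), (n.choose i : ℝ) * ‖iteratedFDeriv ℝ i f x‖ *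
        ‖iteratedFDeriv ℝ (n - i) g x‖ := by
  have hn : ((n : ℕ) : WithTop ℕ∞) ≠ (∞ : WithTop ℕ∞) := by
    exact_mod_cast WithTop.coe_ne_top
  obtain ⟨u, hu, hfu⟩ := (hf.of_le (m := n) (by exact_mod_cast le_top)).contDiffOn le_rfl (by simp)
  obtain ⟨v, hv, hgv⟩ := (hg.of_le (m := n) (by exact_mod_cast le_top)).contDiffOn le_rfl (by simp)
  obtain ⟨s, hs, hso, hxs⟩ := mem_nhds_iff.1 (inter_mem hu hv)
  have := L.norm_iteratedFDerivWithin_le_of_bilinear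
    (hfu.mono (fun y hy => (hs hy).1)) (hgv.mono (fun y hy => (hs hy).2)) hso.uniqueDiffOn hxs
    (n := n) le_rfl
  rw [iteratedFDerivWithin_of_isOpen n hso hxs] at this
  refine this.trans (le_of_eq ?_)
  congr 1
  refine Finset.sum_congr rfl fun i _ => ?_
  rw [iteratedFDerivWithin_of_isOpen i hso hxs, iteratedFDerivWithin_of_isOpen (n - i) hso hxs]

lemma fact_ineq (s m b : ℕ) (hb : b ≤ m) :
    (m.choose b : ℝ) * (b ! : ℝ) * ((s + (m - b)) ! : ℝ) ≤ ((s + m) ! : ℝ) := by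
  have h1 : m.choose b * b ! = m.descFactorial b := by
    rw [Nat.descFactorial_eq_factorial_mul_choose, mul_comm]
  have h2 : (s + m).descFactorial b * (s + m - b)! = (s + m)! := by
    rw [mul_comm]; exact Nat.factorial_mul_descFactorial (by omega)
  have h3 : m.descFactorial b ≤ (s + m).descFactorial b := Nat.descFactorial_le b (by omega)
  have : m.choose b * b ! * (s + (m - b))! ≤ (s + m)! := by
    rw [h1, ← h2, show s + (m - b) = s + m - b by omega]
    exact Nat.mul_le_mul_right _ h3
  exact_mod_cast this

lemma bilin_est (hM : HM M) (L : V →L[ℝ] W →L[ℝ] W') {f : E → V} {g : E → W} {x : E}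
    (hf : ContDiffAt ℝ ∞ f x) (hg : ContDiffAt ℝ ∞ g x) {A₁ B₁ A B : ℝ} (s : ℕ)
    (hA₁ : 0 ≤ A₁) (hA : 0 ≤ A) (hB₁ : 0 < B₁) (hB : 2 * B₁ ≤ B)
    (h1 : ∀ m, ‖iteratedFDeriv ℝ m f x‖ ≤ A₁ * B₁ ^ m * ((m ! : ℝ) * M m))
    (h2 : ∀ m, ‖iteratedFDeriv ℝ m g x‖ ≤ A * B ^ m * (((s + m) ! : ℝ) * M (s + m))) (m : ℕ) :
    ‖iteratedFDeriv ℝ m (fun y => L (f y) (g y)) x‖ ≤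
      (2 * ‖L‖ * A₁ * A) * B ^ m * (((s + m) ! : ℝ) * M (s + m)) := by
  have hBp : 0 < B := by linarith
  refine (leibniz_at L hf hg m).trans ?_
  have key : ∀ i ∈ Finset.range (m + 1), (m.choose i : ℝ) * ‖iteratedFDeriv ℝ i f x‖ *
        ‖iteratedFDeriv ℝ (m - i) g x‖ ≤
        (1 / 2) ^ i * (A₁ * A * B ^ m * (((s + m) ! : ℝ) * M (s + m))) := by
    intro i hi
    have hi' : i ≤ m := by simpa [Nat.lt_succ_iff] using hi
    have e1 : B ^ m = B ^ i * B ^ (m - i) := by rw [← pow_add]; congr 1; omega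
    have e2 : B₁ ^ i ≤ (1 / 2) ^ i * B ^ i := by
      rw [← mul_pow]; exact pow_le_pow_left₀ hB₁.le (by linarith) i
    have e3 := fact_ineq s m i hi'
    have e4 : M i * M (s + (m - i)) ≤ M (s + m) := by
      have := hM.mul_le i (s + (m - i))
      rwa [show i + (s + (m - i)) = s + m by omega] at this
    have p1 := (hM.pos i).le
    have p2 := (hM.pos (s + (m - i))).le
    have p3 := (hM.pos (s + m)).le
    calc (m.choose i : ℝ) * ‖iteratedFDeriv ℝ i f x‖ * ‖iteratedFDeriv ℝ (m - i) g x‖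
        ≤ (m.choose i : ℝ) * (A₁ * B₁ ^ i * ((i ! : ℝ) * M i)) *
          (A * B ^ (m - i) * (((s + (m - i)) ! : ℝ) * M (s + (m - i)))) := by
          have := h1 i
          have := h2 (m - i)
          gcongr
      _ = (A₁ * A * (B₁ ^ i * B ^ (m - i))) *
          (((m.choose i : ℝ) * (i ! : ℝ) * ((s + (m - i)) ! : ℝ)) * (M i * M (s + (m - i)))) := by
          ring
      _ ≤ (A₁ * A * ((1 / 2) ^ i * B ^ i * B ^ (m - i))) * (((s + m) ! : ℝ) * M (s + m)) := by
          gcongr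
      _ = _ := by rw [e1]; ring
  have hsum : ∑ i ∈ Finset.range (m + 1), ((1 : ℝ) / 2) ^ i ≤ 2 := by
    have := sum_geometric_two_le (m + 1)
    simpa using this
  have p3 := (hM.pos (s + m)).le
  calc _ ≤ ‖L‖ * ∑ i ∈ Finset.range (m + 1),
        (1 / 2 : ℝ) ^ i * (A₁ * A * B ^ m * (((s + m) ! : ℝ) * M (s + m))) := by
          exact mul_le_mul_of_nonneg_left (Finset.sum_le_sum key) (by positivity)
    _ = ‖L‖ * ((∑ i ∈ Finset.range (m + 1), (1 / 2 : ℝ) ^ i) *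
        (A₁ * A * B ^ m * (((s + m) ! : ℝ) * M (s + m)))) := by rw [Finset.sum_mul]
    _ ≤ ‖L‖ * (2 * (A₁ * A * B ^ m * (((s + m) ! : ℝ) * M (s + m)))) := by gcongr
    _ = _ := by ring

/-- enlarge constants -/
lemma bd_mono (hM : HM M) {a A B A' B' : ℝ} {m s : ℕ} (h : a ≤ A * B ^ m * ((s ! : ℝ) * M s))
    (hA : 0 ≤ A) (hB : 0 ≤ B) (hAA : A ≤ A') (hBB : B ≤ B') :
    a ≤ A' * B' ^ m * ((s ! : ℝ) * M s) := by
  have := (hM.pos s).le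
  refine h.trans ?_
  have := hA.trans hAA
  gcongr

lemma Q.congr {f g : E → W} (hf : Q M f) (h : f =ᶠ[𝓝 0] g) : Q M g := by
  obtain ⟨A, B, hA, hB, hx⟩ := hf
  refine ⟨A, B, hA, hB, ?_⟩
  filter_upwards [hx, h.eventually_nhds] with x hx hfg
  have hfg : f =ᶠ[𝓝 x] g := hfg
  refine ⟨hx.1.congr_of_eventuallyEq hfg.symm, fun m => ?_⟩
  rw [← hfg.iteratedFDeriv ℝ m |>.eq_of_nhds]
  exact hx.2 m

lemma Q.contDiffAt {f : E → W} (hf : Q M f) : ∀ᶠ x in 𝓝 (0 : E), ContDiffAt ℝ ∞ f x := by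
  obtain ⟨A, B, hA, hB, hx⟩ := hf
  exact hx.mono fun x h => h.1

lemma Q.continuousAt {f : E → W} (hf : Q M f) : ContinuousAt f 0 :=
  hf.contDiffAt.self_of_nhds.continuousAt

lemma Q.clm_comp (hM : HM M) {f : E → W} (hf : Q M f) (L : W →L[ℝ] W') :
    Q M (fun x => L (f x)) := by
  obtain ⟨A, B, hA, hB, hx⟩ := hf
  refine ⟨(‖L‖ + 1) * A, B, by positivity, hB, ?_⟩
  filter_upwards [hx] with x hx
  refine ⟨L.contDiff.contDiffAt.comp x hx.1, fun m => ?_⟩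
  have := L.norm_iteratedFDeriv_comp_left (n := m) hx.1 (by exact_mod_cast le_top)
  refine this.trans ?_
  have p := (hM.pos m).le
  calc ‖L‖ * ‖iteratedFDeriv ℝ m f x‖ ≤ (‖L‖ + 1) * (A * B ^ m * ((m ! : ℝ) * M m)) := by
        gcongr
        · linarith
        · exact hx.2 m
    _ = _ := by ring

lemma comp_right_at (L : F →L[ℝ] E) {f : E → W} {x : F} (hf : ContDiffAt ℝ ∞ f (L x)) (m : ℕ) :
    ‖iteratedFDeriv ℝ m (fun y => f (L y)) x‖ ≤ ‖iteratedFDeriv ℝ m f (L x)‖ * ‖L‖ ^ m := by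
  obtain ⟨u, hu, hfu⟩ := (hf.of_le (m := m) (by exact_mod_cast le_top)).contDiffOn le_rfl (by simp)
  obtain ⟨s, hs, hso, hxs⟩ := mem_nhds_iff.1 hu
  have ho : IsOpen (L ⁻¹' s) := hso.preimage L.continuous
  have := L.iteratedFDerivWithin_comp_right (hfu.mono hs) hso.uniqueDiffOn ho.uniqueDiffOn hxs
    (i := m) le_rfl
  rw [iteratedFDerivWithin_of_isOpen m ho hxs, iteratedFDerivWithin_of_isOpen m hso hxs] at this
  change ‖iteratedFDeriv ℝ m (f ∘ L) x‖ ≤ _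
  rw [this]
  refine (ContinuousMultilinearMap.norm_compContinuousLinearMap_le _ _).trans (le_of_eq ?_)
  simp

lemma Q.comp_clm (hM : HM M) {f : E → W} (hf : Q M f) (L : F →L[ℝ] E) :
    Q M (fun x => f (L x)) := by
  obtain ⟨A, B, hA, hB, hx⟩ := hf
  refine ⟨A, B * (‖L‖ + 1), hA, by positivity, ?_⟩
  have hc : Tendsto L (𝓝 0) (𝓝 0) := by simpa using L.continuous.tendsto 0
  filter_upwards [hc.eventually hx] with x hx
  refine ⟨hx.1.comp x L.contDiff.contDiffAt, fun m => ?_⟩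
  have p := (hM.pos m).le
  calc _ ≤ ‖iteratedFDeriv ℝ m f (L x)‖ * ‖L‖ ^ m := comp_right_at L hx.1 m
    _ ≤ (A * B ^ m * ((m ! : ℝ) * M m)) * (‖L‖ + 1) ^ m := by
        gcongr
        · exact hx.2 m
        · linarith
    _ = _ := by rw [mul_pow]; ring

lemma Q.const (hM : HM M) (c : W) : Q M (fun _ : E => c) := by
  refine ⟨‖c‖ + 1, 1, by positivity, one_pos, Eventually.of_forall fun x => ⟨contDiffAt_const, ?_⟩⟩
  intro m
  have p := (hM.pos m).le
  rcases Nat.eq_zero_or_pos m with rfl | hm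
  · simp [hM.zero]
  · rw [iteratedFDeriv_const_of_ne hm.ne']
    simp only [Pi.zero_apply, norm_zero]
    positivity

lemma Q.bilin (hM : HM M) (L : V →L[ℝ] W →L[ℝ] W') {f : E → V} {g : E → W}
    (hf : Q M f) (hg : Q M g) : Q M (fun x => L (f x) (g x)) := by
  obtain ⟨A, B, hA, hB, hx⟩ := hf
  obtain ⟨A', B', hA', hB', hx'⟩ := hg
  refine ⟨2 * (‖L‖ + 1) * A * A', 2 * B + B', by positivity, by positivity, ?_⟩
  filter_upwards [hx, hx'] with x hx hx'
  refine ⟨?_, fun m => ?_⟩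
  · exact (L.isBoundedBilinearMap.contDiff.contDiffAt).comp x (hx.1.prodMk hx'.1)
  · have := bilin_est hM L hx.1 hx'.1 (s := 0) (B := 2 * B + B') hA.le hA'.le hB (by linarith) hx.2
      (fun m => by
        simp only [zero_add]
        exact bd_mono hM (hx'.2 m) hA'.le hB'.le le_rfl (by linarith)) m
    simp only [zero_add] at this
    refine bd_mono hM this (by positivity) (by positivity) ?_ le_rfl
    gcongr
    linarith

lemma Q.add (hM : HM M) {f g : E → W} (hf : Q M f) (hg : Q M g) : Q M (fun x => f x + g x) := by
  obtain ⟨A, B, hA, hB, hx⟩ := hf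
  obtain ⟨A', B', hA', hB', hx'⟩ := hg
  refine ⟨A + A', B + B', by positivity, by positivity, ?_⟩
  filter_upwards [hx, hx'] with x hx hx'
  refine ⟨hx.1.add hx'.1, fun m => ?_⟩
  have e : iteratedFDeriv ℝ m (fun x => f x + g x) x
      = iteratedFDeriv ℝ m f x + iteratedFDeriv ℝ m g x :=
    iteratedFDeriv_add_apply (hx.1.of_le (by exact_mod_cast le_top))
      (hx'.1.of_le (by exact_mod_cast le_top))
  rw [e]
  have h1 := bd_mono hM (hx.2 m) hA.le hB.le le_rfl (show B ≤ B + B' by linarith)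
  have h2 := bd_mono hM (hx'.2 m) hA'.le hB'.le le_rfl (show B' ≤ B + B' by linarith)
  refine (norm_add_le _ _).trans ((add_le_add h1 h2).trans (le_of_eq ?_))
  ring

lemma Q.fderiv (hM : HM M) {f : E → W} (hf : Q M f) : Q M (fun x => fderiv ℝ f x) := by
  obtain ⟨A, B, hA, hB, hx⟩ := hf
  obtain ⟨C, D, hC, hD, hCD⟩ := hM.der
  refine ⟨A * B * C, B * D * 2, by positivity, by positivity, ?_⟩
  filter_upwards [hx] with x hx
  refine ⟨hx.1.fderiv_right (by simp), fun m => ?_⟩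
  change ‖iteratedFDeriv ℝ m (_root_.fderiv ℝ f) x‖ ≤ _
  rw [norm_iteratedFDeriv_fderiv]
  refine (hx.2 (m + 1)).trans ?_
  have h2 : ((m : ℝ) + 1) ≤ 2 ^ m := by
    exact_mod_cast Nat.lt_two_pow_self (n := m)
  have p := (hM.pos m).le
  have p' := (hM.pos (m + 1)).le
  rw [Nat.factorial_succ]
  push_cast
  calc A * B ^ (m + 1) * (((m : ℝ) + 1) * (m ! : ℝ) * M (m + 1))
      ≤ A * B ^ (m + 1) * (2 ^ m * (m ! : ℝ) * (C * D ^ m * M m)) := by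
        gcongr
        exact hCD m
    _ = _ := by rw [mul_pow, mul_pow]; ring

lemma Q.clm (hM : HM M) (L : E →L[ℝ] W) : Q M (fun x => L x) := by
  refine ⟨‖L‖ + 1, 1, by positivity, one_pos, ?_⟩
  filter_upwards [Metric.ball_mem_nhds (0 : E) one_pos] with x hx
  refine ⟨L.contDiff.contDiffAt, fun m => ?_⟩
  have p := hM.one_le m
  have hx : ‖x‖ < 1 := by simpa using hx
  match m with
  | 0 =>
    simp only [norm_iteratedFDeriv_zero, hM.zero]
    have := L.le_opNorm x
    simp
    nlinarith [norm_nonneg L]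
  | 1 =>
    rw [← zero_add 1, ← norm_iteratedFDeriv_fderiv]
    simp
    nlinarith [norm_nonneg L]
  | (k + 2) =>
    rw [← norm_iteratedFDeriv_fderiv]
    have : _root_.fderiv ℝ (fun x => L x) = fun _ => L := by ext1 y; exact L.fderiv
    rw [this, iteratedFDeriv_const_of_ne (by omega)]
    simp only [Pi.zero_apply, norm_zero]
    positivity

/-- flow lemma -/
lemma flow_bound (hM : HM M) {Φ : F → E} {H : E → F →L[ℝ] E} {U : Set F} {S : Set E}
    (hU : IsOpen U) (hUS : ∀ x ∈ U, Φ x ∈ S)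
    (hΦ : ∀ x ∈ U, ContDiffAt ℝ ∞ Φ x) (hd : ∀ x ∈ U, fderiv ℝ Φ x = H (Φ x))
    {A₁ B₁ B : ℝ} (hA₁ : 0 < A₁) (hB₁ : 0 < B₁) (hB : 2 * B₁ ≤ B)
    (hH : ∀ y ∈ S, ContDiffAt ℝ ∞ H y ∧
      ∀ m : ℕ, ‖iteratedFDeriv ℝ m H y‖ ≤ A₁ * B₁ ^ m * ((m ! : ℝ) * M m)) (k : ℕ) :
    ∀ (W : Type) [NormedAddCommGroup W] [NormedSpace ℝ W] (g : E → W) (s : ℕ) (A : ℝ), 0 < A →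
      (∀ y ∈ S, ContDiffAt ℝ ∞ g y ∧
        ∀ m : ℕ, ‖iteratedFDeriv ℝ m g y‖ ≤ A * B ^ m * (((s + m)! : ℝ) * M (s + m))) →
      ∀ x ∈ U, ‖iteratedFDeriv ℝ k (fun z => g (Φ z)) x‖ ≤
        A * (2 * A₁ * B) ^ k * (((s + k)! : ℝ) * M (s + k)) := by
  induction k with
  | zero =>
    intro W _ _ g s A hA hg x hx
    have := (hg _ (hUS x hx)).2 0
    simpa using this
  | succ k ih =>
    intro W _ _ g s A hA hg x hx
    have hBp : 0 < B := by linarith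
    rw [← norm_iteratedFDeriv_fderiv]
    let L := (ContinuousLinearMap.compL ℝ F E W).flip
    have hL : ‖L‖ ≤ 1 := by
      rw [ContinuousLinearMap.opNorm_flip]
      exact ContinuousLinearMap.norm_compL_le ℝ F E W
    have heq : fderiv ℝ (fun z => g (Φ z)) =ᶠ[𝓝 x]
        fun z => (fun y => L (H y) (fderiv ℝ g y)) (Φ z) := by
      filter_upwards [hU.mem_nhds hx] with z hz
      have h1 : DifferentiableAt ℝ g (Φ z) := (hg _ (hUS z hz)).1.differentiableAt (by simp)
      have h2 : DifferentiableAt ℝ Φ z := (hΦ z hz).differentiableAt (by simp)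
      have := fderiv_comp z h1 h2
      change fderiv ℝ (g ∘ Φ) z = _
      rw [this, hd z hz]
      rfl
    rw [(heq.iteratedFDeriv ℝ k).eq_of_nhds]
    have := ih (F →L[ℝ] W) (fun y => L (H y) (fderiv ℝ g y)) (s + 1) (2 * A₁ * (A * B))
      (by positivity) (fun y hy => ?_) x hx
    · refine this.trans (le_of_eq ?_)
      rw [show s + 1 + k = s + (k + 1) by omega]
      ring
    · have hc : ContDiffAt ℝ ∞ (fderiv ℝ g) y := (hg y hy).1.fderiv_right (by simp)
      refine ⟨(L.isBoundedBilinearMap.contDiff.contDiffAt).comp y ((hH y hy).1.prodMk hc),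
        fun m => ?_⟩
      have := bilin_est hM L (hH y hy).1 hc (s + 1) hA₁.le (A := A * B) (by positivity) hB₁ hB
        (hH y hy).2 (fun m => by
          rw [norm_iteratedFDeriv_fderiv]
          refine ((hg y hy).2 (m + 1)).trans (le_of_eq ?_)
          rw [show s + 1 + m = s + (m + 1) by omega]
          ring) m
      refine bd_mono hM this (by positivity) hBp.le ?_ le_rfl
      have : ‖L‖ * (A₁ * (A * B)) ≤ 1 * (A₁ * (A * B)) := by gcongr
      linarith

lemma Q.flow (hM : HM M) {Φ : F → E} {H : E → F →L[ℝ] E} (h0 : Φ 0 = 0)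
    (hΦ : ∀ᶠ x in 𝓝 0, ContDiffAt ℝ ∞ Φ x) (hd : ∀ᶠ x in 𝓝 0, _root_.fderiv ℝ Φ x = H (Φ x))
    (hH : Q M H) {g : E → W} (hg : Q M g) : Q M (fun x => g (Φ x)) := by
  obtain ⟨A₁, B₁, hA₁, hB₁, hH⟩ := hH
  obtain ⟨A, B, hA, hB, hg⟩ := hg
  obtain ⟨S, hS, hSo, h0S⟩ := mem_nhds_iff.1 (hH.and hg)
  have hcont : ContinuousAt Φ 0 := hΦ.self_of_nhds.continuousAt
  have hpre : ∀ᶠ x in 𝓝 (0 : F), Φ x ∈ S :=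
    hcont.eventually (by rw [h0]; exact hSo.mem_nhds h0S)
  obtain ⟨U, hU, hUo, h0U⟩ := mem_nhds_iff.1 (hΦ.and (hd.and hpre))
  refine ⟨A, 2 * A₁ * (2 * B₁ + B), hA, by positivity, ?_⟩
  filter_upwards [hUo.mem_nhds h0U] with x hx
  refine ⟨?_, fun m => ?_⟩
  · exact (hS (hU hx).2.2).2.1.comp x (hU hx).1
  have := flow_bound hM hUo (fun x hx => (hU hx).2.2) (fun x hx => (hU hx).1)
    (fun x hx => (hU hx).2.1) hA₁ hB₁ (B := 2 * B₁ + B) (by linarith) (fun y hy => (hS hy).1) m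
    W g 0 A hA (fun y hy => ⟨(hS hy).2.1, fun m => by
      simp only [zero_add]
      exact bd_mono hM ((hS hy).2.2 m) hA.le hB.le le_rfl (by linarith)⟩) x hx
  simpa only [zero_add] using this

lemma Q.comp (hM : HM M) {f : E → W} (hf : Q M f) {π : F → E} (hπ : Q M π) (h0 : π 0 = 0) :
    Q M (fun x => f (π x)) := by
  let H : F × E → F →L[ℝ] F × E := fun p =>
    ContinuousLinearMap.inl ℝ F E +
      (ContinuousLinearMap.compL ℝ F E (F × E) (ContinuousLinearMap.inr ℝ F E))
        (_root_.fderiv ℝ π p.1)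
  have hH : Q M H := by
    refine Q.add hM (Q.const hM _) (Q.clm_comp hM ?_ _)
    exact (hπ.fderiv hM).comp_clm hM (ContinuousLinearMap.fst ℝ F E)
  have hg : Q M (fun p : F × E => f p.2) := hf.comp_clm hM (ContinuousLinearMap.snd ℝ F E)
  refine Q.flow hM (Φ := fun z => (z, π z)) (H := H) (by simp [h0]) ?_ ?_ hH hg
  · exact hπ.contDiffAt.mono fun x hx => contDiffAt_id.prodMk hx
  · refine hπ.contDiffAt.mono fun x hx => ?_
    have h2 : HasFDerivAt π (_root_.fderiv ℝ π x) x :=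
      (hx.differentiableAt (by simp)).hasFDerivAt
    have := (hasFDerivAt_id x).prodMk h2
    rw [show (fun z => (z, π z)) = fun z => (id z, π z) from rfl, this.fderiv]
    ext v <;> simp [H]

lemma Q.mul (hM : HM M) {f g : E → ℝ} (hf : Q M f) (hg : Q M g) : Q M (fun x => f x * g x) :=
  Q.bilin hM (ContinuousLinearMap.mul ℝ ℝ) hf hg

lemma Q.smul (hM : HM M) {f : E → ℝ} {g : E → W} (hf : Q M f) (hg : Q M g) :
    Q M (fun x => f x • g x) :=
  Q.bilin hM (ContinuousLinearMap.lsmul ℝ ℝ) hf hg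

lemma Q.neg (hM : HM M) {f : E → W} (hf : Q M f) : Q M (fun x => - f x) :=
  hf.clm_comp hM (-ContinuousLinearMap.id ℝ W)

lemma Q.sub (hM : HM M) {f g : E → W} (hf : Q M f) (hg : Q M g) : Q M (fun x => f x - g x) := by
  simpa only [sub_eq_add_neg] using hf.add hM (hg.neg hM)

lemma Q.pow (hM : HM M) {f : E → ℝ} (hf : Q M f) (k : ℕ) : Q M (fun x => f x ^ k) := by
  induction k with
  | zero => simpa using Q.const hM (1 : ℝ)
  | succ k ih => simpa only [pow_succ] using ih.mul hM hf

lemma Q.sum (hM : HM M) {ι : Type*} (s : Finset ι) {f : ι → E → W} (hf : ∀ i ∈ s, Q M (f i)) :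
    Q M (fun x => ∑ i ∈ s, f i x) := by
  classical
  induction s using Finset.induction_on with
  | empty => simpa using Q.const hM (0 : W)
  | insert a s ha ih =>
    simp only [Finset.sum_insert ha]
    exact (hf a (by simp)).add hM (ih fun i hi => hf i (by simp [hi]))

lemma Q.prod (hM : HM M) {ι : Type*} (s : Finset ι) {f : ι → E → ℝ} (hf : ∀ i ∈ s, Q M (f i)) :
    Q M (fun x => ∏ i ∈ s, f i x) := by
  classical
  induction s using Finset.induction_on with
  | empty => simpa using Q.const hM (1 : ℝ)
  | insert a s ha ih =>
    simp only [Finset.prod_insert ha]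
    exact (hf a (by simp)).mul hM (ih fun i hi => hf i (by simp [hi]))

lemma Q.prodMk (hM : HM M) {f : E → V} {g : E → W} (hf : Q M f) (hg : Q M g) :
    Q M (fun x => (f x, g x)) := by
  have h1 := hf.clm_comp hM (ContinuousLinearMap.inl ℝ V W)
  have h2 := hg.clm_comp hM (ContinuousLinearMap.inr ℝ V W)
  simpa using h1.add hM h2

lemma Q.pi (hM : HM M) {ι : Type} [Fintype ι] {f : ι → E → ℝ} (hf : ∀ i, Q M (f i)) :
    Q M (fun x => fun i => f i x) := by
  classical
  have := Q.sum hM Finset.univ (f := fun i x => f i x • (Pi.single i (1 : ℝ) : ι → ℝ))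
    (fun i _ => (hf i).smul hM (Q.const hM _))
  refine this.congr (Eventually.of_forall fun x => ?_)
  ext j
  simp [Finset.sum_apply, Pi.single_apply]

lemma Q.inv_shift (hM : HM M) {c : ℝ} (hc : c ≠ 0) : Q M (fun w : ℝ => (c + w)⁻¹) := by
  have hc' : 0 < |c| := abs_pos.2 hc
  refine ⟨2 / |c|, 2 / |c|, by positivity, by positivity, ?_⟩
  filter_upwards [Metric.ball_mem_nhds (0 : ℝ) (half_pos hc')] with w hw
  have hw : |w| < |c| / 2 := by simpa using hw
  have hcw : |c| / 2 ≤ |c + w| := by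
    have := abs_sub_abs_le_abs_sub c (-w)
    rw [abs_neg, sub_neg_eq_add] at this
    linarith
  have hne : c + w ≠ 0 := abs_pos.1 (by linarith)
  refine ⟨?_, fun m => ?_⟩
  · exact (contDiffAt_const.add contDiffAt_id).inv hne
  · rw [norm_iteratedFDeriv_eq_norm_iteratedDeriv]
    have e : iteratedDeriv m (fun w : ℝ => (c + w)⁻¹) w = iteratedDeriv m Inv.inv (c + w) := by
      have := congrFun (iteratedDeriv_comp_const_add m (fun z : ℝ => z⁻¹) c) w
      exact this
    rw [e, iteratedDeriv_eq_iterate, iter_deriv_inv']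
    have h1 := hM.one_le m
    have e2 : ‖(-1 : ℝ) ^ m * (m ! : ℝ) * (c + w) ^ (-1 - m : ℤ)‖
        = (m ! : ℝ) * (|c + w|⁻¹) ^ (m + 1) := by
      rw [norm_mul, norm_mul, norm_pow, norm_neg, norm_one, one_pow, one_mul, norm_zpow,
        show (-1 - m : ℤ) = -((m + 1 : ℕ) : ℤ) by push_cast; ring, zpow_neg, zpow_natCast,
        inv_pow, Real.norm_eq_abs, Real.norm_eq_abs, Nat.abs_cast]
    have e3 : |c + w|⁻¹ ≤ 2 / |c| := by
      rw [inv_le_comm₀ (by linarith) (by positivity)]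
      simpa using hcw
    calc _ = (m ! : ℝ) * (|c + w|⁻¹) ^ (m + 1) := by simpa using e2
      _ ≤ (m ! : ℝ) * (2 / |c|) ^ (m + 1) * M m := by
        have : (m ! : ℝ) * (|c + w|⁻¹) ^ (m + 1) ≤ (m ! : ℝ) * (2 / |c|) ^ (m + 1) := by gcongr
        have p : 0 ≤ (m ! : ℝ) * (2 / |c|) ^ (m + 1) := by positivity
        nlinarith
      _ = _ := by ring

lemma Q.inv (hM : HM M) {f : E → ℝ} (hf : Q M f) (h0 : f 0 ≠ 0) : Q M (fun x => (f x)⁻¹) := by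
  have h1 : Q M (fun x => f x - f 0) := hf.sub hM (Q.const hM _)
  simpa using (Q.inv_shift hM h0).comp hM h1 (by simp)

/-- Implicit function theorem in the class. -/
lemma Q.implicit [CompleteSpace E] (hM : HM M) {c : E × ℝ → ℝ} (hc : Q M c) (h0 : c 0 = 0)
    (hs : _root_.fderiv ℝ c 0 (0, 1) ≠ 0) :
    ∃ ph : E → ℝ, Q M ph ∧ ph 0 = 0 ∧ ∀ᶠ x in 𝓝 0, c (x, ph x) = 0 := by
  have cd : ContDiffAt ℝ ∞ c (0 : E × ℝ) := hc.contDiffAt.self_of_nhds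
  have hinv : (_root_.fderiv ℝ c 0 ∘L .inr ℝ E ℝ).IsInvertible := by
    refine ⟨ContinuousLinearEquiv.unitsEquivAut ℝ (Units.mk0 _ hs), ?_⟩
    ext
    simp
  have hn : (∞ : WithTop ℕ∞) ≠ 0 := by simp
  let ph := cd.implicitFunction hn hinv
  have ph0 : ph 0 = 0 := cd.implicitFunction_apply_self hn hinv
  have phc : ContDiffAt ℝ ∞ ph 0 := cd.contDiffAt_implicitFunction hn hinv
  have phe : ∀ᶠ x in 𝓝 (0 : E), c (x, ph x) = 0 := by
    have := cd.eventually_apply_implicitFunction hn hinv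
    rw [h0] at this
    exact this
  let cs : E × ℝ → ℝ := fun p => _root_.fderiv ℝ c p (0, 1)
  have hcs : Q M cs := (hc.fderiv hM).clm_comp hM (ContinuousLinearMap.apply ℝ ℝ ((0 : E), (1 : ℝ)))
  let H : E × ℝ → E →L[ℝ] E × ℝ := fun p => ContinuousLinearMap.inl ℝ E ℝ -
    (ContinuousLinearMap.compL ℝ E ℝ (E × ℝ) (ContinuousLinearMap.inr ℝ E ℝ))
      ((cs p)⁻¹ • ((ContinuousLinearMap.compL ℝ E (E × ℝ) ℝ).flip (ContinuousLinearMap.inl ℝ E ℝ))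
        (_root_.fderiv ℝ c p))
  have hH : Q M H := by
    refine Q.sub hM (Q.const hM _) (Q.clm_comp hM ?_ _)
    exact (hcs.inv hM hs).smul hM ((hc.fderiv hM).clm_comp hM _)
  have tend : Tendsto (fun x => (x, ph x)) (𝓝 (0 : E)) (𝓝 (0 : E × ℝ)) := by
    have : ContinuousAt (fun x => (x, ph x)) (0 : E) := continuousAt_id.prodMk phc.continuousAt
    rw [ContinuousAt, ph0] at this
    exact this
  have phcd : ∀ᶠ x in 𝓝 (0 : E), ContDiffAt ℝ ∞ ph x := by
    have hne : ∀ᶠ p in 𝓝 (0 : E × ℝ), cs p ≠ 0 := hcs.continuousAt.eventually_ne hs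
    have ph1 : ∀ᶠ x in 𝓝 (0 : E), ContDiffAt ℝ 1 ph x :=
      (phc.of_le (by exact_mod_cast le_top)).eventually (by simp)
    filter_upwards [ph1, phe.eventually_nhds, tend.eventually hne, tend.eventually hc.contDiffAt]
      with x hx hex hcx hccx
    have hinvx : (_root_.fderiv ℝ c (x, ph x) ∘L .inr ℝ E ℝ).IsInvertible := by
      refine ⟨ContinuousLinearEquiv.unitsEquivAut ℝ (Units.mk0 _ hcx), ?_⟩
      ext
      simp [cs]
    have hiff := hccx.eventually_apply_eq_iff_implicitFunction hn hinvx
    have hcd := hccx.contDiffAt_implicitFunction hn hinvx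
    refine hcd.congr_of_eventuallyEq ?_
    have tx : Tendsto (fun z => (z, ph z)) (𝓝 x) (𝓝 (x, ph x)) :=
      continuousAt_id.prodMk hx.continuousAt
    filter_upwards [tx.eventually hiff, hex] with z hz hz'
    exact (hz.1 (by rw [hz', hex.self_of_nhds])).symm
  refine ⟨ph, ?_, ph0, phe⟩
  refine Q.flow hM (Φ := fun z => (z, ph z)) (H := H) (by simp [ph0]) ?_ ?_ hH
    (Q.clm hM (ContinuousLinearMap.snd ℝ E ℝ))
  · exact phcd.mono fun x hx => contDiffAt_id.prodMk hx
  · have hne : ∀ᶠ p in 𝓝 (0 : E × ℝ), cs p ≠ 0 := hcs.continuousAt.eventually_ne hs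
    filter_upwards [phcd, phe.eventually_nhds, tend.eventually hne, tend.eventually hc.contDiffAt]
      with x hx hex hcx hccx
    have h2 : HasFDerivAt ph (_root_.fderiv ℝ ph x) x :=
      (hx.differentiableAt (by simp)).hasFDerivAt
    have h3 := (hasFDerivAt_id x).prodMk h2
    have h4 : HasFDerivAt c (_root_.fderiv ℝ c (x, ph x)) (x, ph x) :=
      (hccx.differentiableAt (by simp)).hasFDerivAt
    have h5 := h4.comp x h3
    have h6 : HasFDerivAt (fun x => c (x, ph x)) (0 : E →L[ℝ] ℝ) x :=
      (hasFDerivAt_const (0 : ℝ) x).congr_of_eventuallyEq hex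
    have h7 := h5.unique h6
    rw [show (fun z => (z, ph z)) = fun z => (id z, ph z) from rfl, h3.fderiv]
    refine ContinuousLinearMap.ext fun v => ?_
    have h8 := congrArg (fun T => T v) h7
    simp at h8
    have h9 : ((v, _root_.fderiv ℝ ph x v) : E × ℝ) = (v, 0) + (_root_.fderiv ℝ ph x v) • (0, 1) := by
      simp
    rw [h9, map_add, map_smul] at h8
    ext
    · simp [H]
    · simp [H, cs]
      simp at h8
      have : cs (x, ph x) ≠ 0 := hcx
      simp only [cs] at this
      field_simp
      linarith

end LG


namespace LG

open Filter Topology Set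
open scoped ContDiff Nat

variable {M : ℕ → ℝ}
variable {E F G W W' V : Type} [NormedAddCommGroup E] [NormedSpace ℝ E]
  [NormedAddCommGroup F] [NormedSpace ℝ F]
  [NormedAddCommGroup G] [NormedSpace ℝ G]
  [NormedAddCommGroup W] [NormedSpace ℝ W] [NormedAddCommGroup W'] [NormedSpace ℝ W']
  [NormedAddCommGroup V] [NormedSpace ℝ V]

lemma int_hasFDerivAt [CompleteSpace W] {S : Set E} (hS : IsOpen S) {g : ℝ × E → W} {C : ℝ}
    (hg : ∀ t ∈ Icc (0 : ℝ) 1, ∀ x ∈ S, ContDiffAt ℝ ∞ g (t, x))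
    (hb : ∀ t ∈ Icc (0 : ℝ) 1, ∀ x ∈ S, ‖iteratedFDeriv ℝ 1 (fun y => g (t, y)) x‖ ≤ C)
    {x : E} (hx : x ∈ S) :
    HasFDerivAt (fun x => ∫ t in (0 : ℝ)..1, g (t, x))
      (∫ t in (0 : ℝ)..1, (fderiv ℝ g (t, x)).comp (ContinuousLinearMap.inr ℝ ℝ E)) x := by
  have hu : uIoc (0 : ℝ) 1 ⊆ Icc 0 1 := by
    rw [uIoc_of_le zero_le_one]; exact Ioc_subset_Icc_self
  have hcont : ∀ y ∈ S, ContinuousOn (fun t => g (t, y)) (Icc 0 1) := fun y hy t ht =>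
    ((hg t ht y hy).continuousAt.comp (f := fun t : ℝ => (t, y)) (by fun_prop)).continuousWithinAt
  have hcont' : ContinuousOn (fun t => (fderiv ℝ g (t, x)).comp (ContinuousLinearMap.inr ℝ ℝ E))
      (Icc 0 1) := fun t ht => by
    have h1 : ContDiffAt ℝ ∞ (fderiv ℝ g) (t, x) := (hg t ht x hx).fderiv_right (by simp)
    have h2 : ContinuousAt (fun t : ℝ => fderiv ℝ g (t, x)) t :=
      h1.continuousAt.comp (f := fun t : ℝ => (t, x)) (by fun_prop)
    exact (h2.clm_comp continuousAt_const).continuousWithinAt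
  have hd : ∀ t ∈ Icc (0 : ℝ) 1, ∀ y ∈ S, HasFDerivAt (fun y => g (t, y))
      ((fderiv ℝ g (t, y)).comp (ContinuousLinearMap.inr ℝ ℝ E)) y := fun t ht y hy =>
    (((hg t ht y hy).differentiableAt (by simp)).hasFDerivAt).comp y (hasFDerivAt_prodMk_right t y)
  refine intervalIntegral.hasFDerivAt_integral_of_dominated_of_fderiv_le (bound := fun _ => C)
    (F := fun x t => g (t, x))
    (F' := fun x t => (fderiv ℝ g (t, x)).comp (ContinuousLinearMap.inr ℝ ℝ E)) (hS.mem_nhds hx)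
    ?_ ?_ ?_ ?_ ?_ ?_
  · filter_upwards [hS.mem_nhds hx] with y hy
    exact ((hcont y hy).mono hu).aestronglyMeasurable measurableSet_uIoc
  · refine ContinuousOn.intervalIntegrable ?_
    rw [uIcc_of_le zero_le_one]; exact hcont x hx
  · exact (hcont'.mono hu).aestronglyMeasurable measurableSet_uIoc
  · refine Eventually.of_forall fun t ht y hy => ?_
    have := hb t (hu ht) y hy
    rw [← norm_iteratedFDeriv_fderiv, norm_iteratedFDeriv_zero, (hd t (hu ht) y hy).fderiv] at this
    exact this
  · exact intervalIntegrable_const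
  · exact Eventually.of_forall fun t ht y hy => hd t (hu ht) y hy

lemma int_bound (m : ℕ) : ∀ (W : Type) [NormedAddCommGroup W] [NormedSpace ℝ W] [CompleteSpace W]
    {S : Set E} (_ : IsOpen S) {g : ℝ × E → W} {C : ℕ → ℝ}
    (_ : ∀ t ∈ Icc (0 : ℝ) 1, ∀ x ∈ S, ContDiffAt ℝ ∞ g (t, x))
    (_ : ∀ m, ∀ t ∈ Icc (0 : ℝ) 1, ∀ x ∈ S, ‖iteratedFDeriv ℝ m (fun y => g (t, y)) x‖ ≤ C m),
    ContDiffOn ℝ m (fun x => ∫ t in (0 : ℝ)..1, g (t, x)) S ∧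
    ∀ x ∈ S, ‖iteratedFDeriv ℝ m (fun x => ∫ t in (0 : ℝ)..1, g (t, x)) x‖ ≤ C m := by
  induction m with
  | zero =>
    intro W _ _ _ S hS g C hg hb
    constructor
    · have : ContinuousOn (fun x => ∫ t in (0 : ℝ)..1, g (t, x)) S := fun x hx =>
        (int_hasFDerivAt hS hg (hb 1) hx).continuousAt.continuousWithinAt
      simpa [contDiffOn_zero] using this
    · intro x hx
      rw [norm_iteratedFDeriv_zero]
      have := intervalIntegral.norm_integral_le_of_norm_le_const (a := (0 : ℝ)) (b := 1) (C := C 0)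
        (f := fun t => g (t, x)) (fun t ht => by
          have ht' : t ∈ Icc (0 : ℝ) 1 := by
            rw [uIoc_of_le zero_le_one] at ht; exact Ioc_subset_Icc_self ht
          simpa using hb 0 t ht' x hx)
      simpa using this
  | succ m ih =>
    intro W _ _ _ S hS g C hg hb
    let g' : ℝ × E → E →L[ℝ] W := fun p => (fderiv ℝ g p).comp (ContinuousLinearMap.inr ℝ ℝ E)
    have hg' : ∀ t ∈ Icc (0 : ℝ) 1, ∀ x ∈ S, ContDiffAt ℝ ∞ g' (t, x) := fun t ht x hx =>
      ((hg t ht x hx).fderiv_right (by simp)).clm_comp contDiffAt_const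
    have hd : ∀ t ∈ Icc (0 : ℝ) 1, ∀ y ∈ S, fderiv ℝ (fun y => g (t, y)) y = g' (t, y) :=
      fun t ht y hy => ((((hg t ht y hy).differentiableAt (by simp)).hasFDerivAt).comp y
        (hasFDerivAt_prodMk_right t y)).fderiv
    obtain ⟨h1, h2⟩ := ih (E →L[ℝ] W) hS (g := g') (C := fun m => C (m + 1)) hg' (by
      intro m t ht x hx
      have : (fun y => g' (t, y)) =ᶠ[𝓝 x] fderiv ℝ (fun y => g (t, y)) := by
        filter_upwards [hS.mem_nhds hx] with y hy
        exact (hd t ht y hy).symm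
      rw [(this.iteratedFDeriv ℝ m).eq_of_nhds, norm_iteratedFDeriv_fderiv]
      exact hb _ t ht x hx)
    have hfd : ∀ x ∈ S, fderiv ℝ (fun x => ∫ t in (0 : ℝ)..1, g (t, x)) x =
        ∫ t in (0 : ℝ)..1, g' (t, x) := fun x hx => (int_hasFDerivAt hS hg (hb 1) hx).fderiv
    constructor
    · push_cast
      rw [contDiffOn_succ_iff_fderiv_of_isOpen hS]
      refine ⟨fun x hx => (int_hasFDerivAt hS hg (hb 1) hx).differentiableAt.differentiableWithinAt,
        by simp, h1.congr hfd⟩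
    · intro x hx
      rw [← norm_iteratedFDeriv_fderiv]
      have : fderiv ℝ (fun x => ∫ t in (0 : ℝ)..1, g (t, x)) =ᶠ[𝓝 x]
          fun x => ∫ t in (0 : ℝ)..1, g' (t, x) := by
        filter_upwards [hS.mem_nhds hx] with y hy using hfd y hy
      rw [(this.iteratedFDeriv ℝ m).eq_of_nhds]
      exact h2 x hx

/-- Division by a linear form in the class. -/
lemma Q.div (hM : HM M) {f : E → ℝ} (hf : Q M f) (l : E →L[ℝ] ℝ) (v : E) (hlv : l v = 1)
    (h0 : ∀ᶠ x in 𝓝 0, l x = 0 → f x = 0) :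
    ∃ g : E → ℝ, Q M g ∧ ∀ᶠ x in 𝓝 0, f x = l x * g x := by
  have hf' : Q M (fun x => _root_.fderiv ℝ f x v) :=
    (hf.fderiv hM).clm_comp hM (ContinuousLinearMap.apply ℝ ℝ v)
  obtain ⟨A, B, hA, hB, hx⟩ := hf'
  obtain ⟨r, hr, hball⟩ := Metric.eventually_nhds_iff_ball.1 ((hx.and hf.contDiffAt).and h0)
  let Lt : ℝ → E →L[ℝ] E := fun t => ContinuousLinearMap.id ℝ E - (1 - t) • l.smulRight v
  let K : ℝ := 1 + ‖l‖ * ‖v‖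
  have hK : 0 < K := by positivity
  have hK1 : 1 ≤ K := by simp only [K]; nlinarith [norm_nonneg l, norm_nonneg v, mul_nonneg (norm_nonneg l) (norm_nonneg v)]
  have hLt : ∀ t ∈ Icc (0 : ℝ) 1, ‖Lt t‖ ≤ K := by
    intro t ht
    refine (norm_sub_le _ _).trans ?_
    refine add_le_add ContinuousLinearMap.norm_id_le ?_
    rw [norm_smul, ContinuousLinearMap.norm_smulRight_apply]
    have : ‖1 - t‖ ≤ 1 := by rw [Real.norm_eq_abs, abs_le]; constructor <;> linarith [ht.1, ht.2]
    exact mul_le_of_le_one_left (by positivity) this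
  let S := Metric.ball (0 : E) (r / K)
  have hLS : ∀ t ∈ Icc (0 : ℝ) 1, ∀ x ∈ S, Lt t x ∈ Metric.ball (0 : E) r := by
    intro t ht x hx
    have hx : ‖x‖ < r / K := by simpa [S] using hx
    rw [mem_ball_zero_iff]
    calc ‖Lt t x‖ ≤ K * ‖x‖ := (Lt t).le_of_opNorm_le (hLt t ht) x
      _ < r := by rw [lt_div_iff₀ hK] at hx; linarith
  let g : ℝ × E → ℝ := fun p => _root_.fderiv ℝ f (Lt p.1 p.2) v
  have hLc : ContDiff ℝ ∞ (fun p : ℝ × E => Lt p.1 p.2) := by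
    simp only [Lt]
    have : (fun p : ℝ × E => (ContinuousLinearMap.id ℝ E - (1 - p.1) • l.smulRight v) p.2)
      = fun p : ℝ × E => p.2 - (1 - p.1) • (l p.2 • v) := by ext p; simp
    rw [this]
    fun_prop
  have hgs : ∀ t ∈ Icc (0 : ℝ) 1, ∀ x ∈ S, ContDiffAt ℝ ∞ g (t, x) := fun t ht x hx =>
    ((hball _ (hLS t ht x hx)).1.1.1).comp (t, x) (f := fun p : ℝ × E => Lt p.1 p.2) hLc.contDiffAt
  have hgb : ∀ m, ∀ t ∈ Icc (0 : ℝ) 1, ∀ x ∈ S, ‖iteratedFDeriv ℝ m (fun y => g (t, y)) x‖ ≤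
      A * (B * K) ^ m * ((m ! : ℝ) * M m) := by
    intro m t ht x hx
    have h1 := (hball _ (hLS t ht x hx)).1.1
    have h2 := comp_right_at (Lt t) h1.1 m
    have p := (hM.pos m).le
    calc _ ≤ ‖iteratedFDeriv ℝ m (fun x => _root_.fderiv ℝ f x v) (Lt t x)‖ * ‖Lt t‖ ^ m := h2
      _ ≤ (A * B ^ m * ((m ! : ℝ) * M m)) * K ^ m := by
        have := h1.2 m
        have := hLt t ht
        gcongr
      _ = _ := by rw [mul_pow]; ring
  have hSo : IsOpen S := Metric.isOpen_ball
  have hS0 : S ∈ 𝓝 (0 : E) := Metric.ball_mem_nhds _ (by positivity)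
  have main := fun m => int_bound m ℝ hSo hgs hgb
  refine ⟨fun x => ∫ t in (0 : ℝ)..1, g (t, x), ⟨A, B * K, hA, by positivity, ?_⟩, ?_⟩
  · filter_upwards [hS0] with x hx
    refine ⟨?_, fun m => (main m).2 x hx⟩
    exact (contDiffOn_infty.2 fun m => (main m).1).contDiffAt (hSo.mem_nhds hx)
  · filter_upwards [hS0] with x hx
    have hd : ∀ t ∈ uIcc (0 : ℝ) 1, HasDerivAt (fun t => f (Lt t x)) (l x * g (t, x)) t := by
      intro t ht
      rw [uIcc_of_le zero_le_one] at ht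
      have h1 := ((hball _ (hLS t ht x hx)).1.2.differentiableAt (by simp)).hasFDerivAt
      have h2 : HasDerivAt (fun t => Lt t x) (l x • v) t := by
        have : (fun t => Lt t x) = fun t => x - (1 - t) • (l x • v) := by ext t; simp [Lt]
        rw [this]
        have := (((hasDerivAt_id t).const_sub 1).smul_const (l x • v)).const_sub x
        simpa using this
      have h3 := h1.comp_hasDerivAt t h2
      rw [map_smul, smul_eq_mul] at h3
      exact h3
    have hIntg : IntervalIntegrable (fun t => l x * g (t, x)) MeasureTheory.volume 0 1 := by
      refine ContinuousOn.intervalIntegrable fun t ht => ?_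
      rw [uIcc_of_le zero_le_one] at ht
      have : ContinuousAt (fun t => g (t, x)) t :=
        (hgs t ht x hx).continuousAt.comp (f := fun t : ℝ => (t, x)) (by fun_prop)
      exact (continuousAt_const.mul this).continuousWithinAt
    have := intervalIntegral.integral_eq_sub_of_hasDerivAt hd hIntg
    rw [intervalIntegral.integral_const_mul] at this
    rw [this]
    have e1 : Lt 1 x = x := by simp [Lt]
    have e0 : f (Lt 0 x) = 0 := by
      refine (hball _ (hLS 0 (by simp) x hx)).2 ?_
      simp [Lt, hlv]
    rw [e1, e0, sub_zero]

end LG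


namespace LG

open Filter Topology Set
open scoped ContDiff Nat

set_option linter.unusedSectionVars false

/-- Standing hypotheses, including quasianalyticity. -/
structure HQ (M : ℕ → ℝ) : Prop extends HM M where
  log : ∀ j : ℕ, M (j + 1) / M j ≤ M (j + 2) / M (j + 1)
  qa : ¬ Summable (fun k : ℕ => M k / (((k : ℝ) + 1) * M (k + 1)))

variable {M : ℕ → ℝ}
variable {E F G W W' V : Type} [NormedAddCommGroup E] [NormedSpace ℝ E]
  [NormedAddCommGroup F] [NormedSpace ℝ F]
  [NormedAddCommGroup G] [NormedSpace ℝ G]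
  [NormedAddCommGroup W] [NormedSpace ℝ W] [NormedAddCommGroup W'] [NormedSpace ℝ W']
  [NormedAddCommGroup V] [NormedSpace ℝ V]

lemma bang_step {N : ℕ → ℝ} (hN : ∀ k, 0 < N k)
    (hlog : ∀ k, N (k + 1) / N k ≤ N (k + 2) / N (k + 1)) {H : ℕ → ℝ → ℝ}
    (hH : ∀ k, ∀ t ∈ Icc (0 : ℝ) 1, HasDerivAt (H k) (H (k + 1) t) t)
    (hb : ∀ k, ∀ t ∈ Icc (0 : ℝ) 1, |H k t| ≤ N k) (n : ℕ) {x y : ℝ} (hx : 0 ≤ x) (hxy : x ≤ y)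
    (hy : y ≤ 1) (hd : y - x ≤ N n / (Real.exp 1 * N (n + 1)))
    (hP : ∀ k, |H k x| ≤ Real.exp ((k : ℝ) - (n + 1 : ℕ)) * N k) (k : ℕ) :
    |H k y| ≤ Real.exp ((k : ℝ) - n) * N k := by
  set ν := N (n + 1) / N n with hν
  have hνp : 0 < ν := div_pos (hN _) (hN _)
  have hmono : Monotone (fun k => N (k + 1) / N k) := monotone_nat_of_le_succ hlog
  have key : ∀ j, j ≤ n + 1 → ∀ z ∈ Icc x y, |H (n + 1 - j) z| ≤
      Real.exp (((n + 1 - j : ℕ) : ℝ) - (n + 1 : ℕ)) * N (n + 1 - j) *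
        Real.exp (Real.exp 1 * ν * (z - x)) := by
    intro j
    induction j with
    | zero =>
      intro _ z hz
      have h1 := hb (n + 1) z ⟨hx.trans hz.1, hz.2.trans hy⟩
      have h2 : 1 ≤ Real.exp (Real.exp 1 * ν * (z - x)) :=
        Real.one_le_exp (mul_nonneg (by positivity) (by linarith [hz.1]))
      simp only [Nat.sub_zero, sub_self, Real.exp_zero, one_mul]
      nlinarith [hN (n + 1)]
    | succ j ih =>
      intro hj z hz
      set i := n + 1 - (j + 1) with hi
      have hi1 : n + 1 - j = i + 1 := by omega
      rw [hi1] at ih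
      have ih := ih (by omega)
      have hin : i ≤ n := by omega
      have hr : N (i + 1) ≤ N i * ν := by
        have := hmono hin
        simp only at this
        rw [div_le_iff₀ (hN i)] at this
        linarith
      set a := Real.exp ((i : ℝ) - (n + 1 : ℕ)) * N i with ha
      have := image_norm_le_of_norm_deriv_right_le_deriv_boundary (f := H i) (f' := H (i + 1))
        (a := x) (b := y) (B := fun z => a * Real.exp (Real.exp 1 * ν * (z - x)))
        (B' := fun z => a * (Real.exp (Real.exp 1 * ν * (z - x)) * (Real.exp 1 * ν)))
        (fun z hz => (hH i z ⟨hx.trans hz.1, hz.2.trans hy⟩).continuousAt.continuousWithinAt)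
        (fun z hz => (hH i z ⟨hx.trans hz.1, hz.2.le.trans hy⟩).hasDerivWithinAt)
        (by simpa [ha] using hP i)
        (fun z => by
          have h1 : HasDerivAt (fun z => Real.exp 1 * ν * (z - x)) (Real.exp 1 * ν) z := by
            simpa using ((hasDerivAt_id z).sub_const x).const_mul (Real.exp 1 * ν)
          exact h1.exp.const_mul a)
        (fun z hz => by
          have h1 := ih z ⟨hz.1, hz.2.le⟩
          rw [Real.norm_eq_abs]
          refine h1.trans ?_
          have e : Real.exp (((i + 1 : ℕ) : ℝ) - (n + 1 : ℕ)) =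
              Real.exp ((i : ℝ) - (n + 1 : ℕ)) * Real.exp 1 := by
            rw [← Real.exp_add]; congr 1; push_cast; ring
          rw [e, ha]
          have p : 0 < Real.exp ((i : ℝ) - (n + 1 : ℕ)) * Real.exp 1 *
            Real.exp (Real.exp 1 * ν * (z - x)) := by positivity
          calc _ = (Real.exp ((i : ℝ) - (n + 1 : ℕ)) * Real.exp 1 *
            Real.exp (Real.exp 1 * ν * (z - x))) * N (i + 1) := by ring
            _ ≤ (Real.exp ((i : ℝ) - (n + 1 : ℕ)) * Real.exp 1 *
            Real.exp (Real.exp 1 * ν * (z - x))) * (N i * ν) := by gcongr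
            _ = _ := by ring)
      have := this hz
      rwa [Real.norm_eq_abs] at this
  have hexp : Real.exp (Real.exp 1 * ν * (y - x)) ≤ Real.exp 1 := by
    rw [Real.exp_le_exp]
    have e : N n / (Real.exp 1 * N (n + 1)) = 1 / (Real.exp 1 * ν) := by
      rw [hν]; have := (hN n).ne'; have := (hN (n+1)).ne'; field_simp
    rw [e, le_div_iff₀ (by positivity)] at hd
    linarith
  by_cases hk : k ≤ n + 1
  · have h1 := key (n + 1 - k) (by omega) y ⟨hxy, le_rfl⟩
    rw [show n + 1 - (n + 1 - k) = k by omega] at h1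
    refine h1.trans ?_
    have e : Real.exp ((k : ℝ) - n) = Real.exp ((k : ℝ) - (n + 1 : ℕ)) * Real.exp 1 := by
      rw [← Real.exp_add]; congr 1; push_cast; ring
    rw [e]
    have := (hN k).le
    calc _ ≤ Real.exp ((k : ℝ) - (n + 1 : ℕ)) * N k * Real.exp 1 := by gcongr
      _ = _ := by ring
  · have h1 := hb k y ⟨hx.trans hxy, hy⟩
    have h2 : 1 ≤ Real.exp ((k : ℝ) - n) := by
      refine Real.one_le_exp ?_
      have : (n : ℝ) ≤ k := by exact_mod_cast (by omega)
      linarith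
    nlinarith [hN k]

lemma bang {N : ℕ → ℝ} (hN : ∀ k, 0 < N k)
    (hlog : ∀ k, N (k + 1) / N k ≤ N (k + 2) / N (k + 1))
    (hdiv : ¬ Summable (fun k => N k / N (k + 1))) {H : ℕ → ℝ → ℝ}
    (hH : ∀ k, ∀ t ∈ Icc (0 : ℝ) 1, HasDerivAt (H k) (H (k + 1) t) t)
    (hb : ∀ k, ∀ t ∈ Icc (0 : ℝ) 1, |H k t| ≤ N k) (h0 : ∀ k, H k 0 = 0) :
    ∀ t ∈ Icc (0 : ℝ) 1, H 0 t = 0 := by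
  let c : ℕ → ℝ := fun n => N n / (Real.exp 1 * N (n + 1))
  have hc : ∀ n, 0 ≤ c n := fun n => (div_pos (hN _) (mul_pos (Real.exp_pos _) (hN _))).le
  have hcs : ¬ Summable c := by
    intro h
    refine hdiv ?_
    have := h.mul_left (Real.exp 1)
    refine this.congr fun n => ?_
    simp only [c]
    have := (hN (n+1)).ne'
    field_simp
  have iter : ∀ j m : ℕ, ∀ x y : ℝ, 0 ≤ x → x ≤ y → y ≤ 1 →
      y - x ≤ ∑ i ∈ Finset.range j, c (m + i) →
      (∀ k, |H k x| ≤ Real.exp ((k : ℝ) - (m + j : ℕ)) * N k) →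
      ∀ k, |H k y| ≤ Real.exp ((k : ℝ) - m) * N k := by
    intro j
    induction j with
    | zero =>
      intro m x y hx hxy hy hd hP k
      have : y = x := by simp at hd; linarith
      subst this
      simpa using hP k
    | succ j ih =>
      intro m x y hx hxy hy hd hP k
      have hz1 : x ≤ max x (y - c m) := le_max_left _ _
      have hz2 : max x (y - c m) ≤ y := max_le hxy (by linarith [hc m])
      refine bang_step hN hlog hH hb m (hx.trans hz1) hz2 hy ?_ ?_ k
      · have := le_max_right x (y - c m)
        have e : c m = N m / (Real.exp 1 * N (m + 1)) := rfl
        linarith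
      · refine ih (m + 1) x _ hx hz1 (hz2.trans hy) ?_ ?_
        · rw [Finset.sum_range_succ'] at hd
          have hs : 0 ≤ ∑ i ∈ Finset.range j, c (m + 1 + i) := Finset.sum_nonneg fun i _ => hc _
          have he : ∑ i ∈ Finset.range j, c (m + 1 + i) = ∑ i ∈ Finset.range j, c (m + (i + 1)) := by
            refine Finset.sum_congr rfl fun i _ => ?_
            congr 1; omega
          rw [he] at hs ⊢
          rcases max_cases x (y - c m) with h | h <;> rw [h.1]
          · simpa using hs
          · simp at hd; linarith
        · intro k
          rw [show m + 1 + j = m + (j + 1) by omega]; exact hP k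
  intro t ht
  have hsm : ∀ m : ℕ, |H 0 t| ≤ Real.exp (-(m : ℝ)) * N 0 := by
    intro m
    have hns : ¬ Summable (fun i => c (m + i)) := by
      have := (summable_nat_add_iff (f := c) m).not.2 hcs
      simpa [add_comm] using this
    have htop := not_summable_iff_tendsto_nat_atTop_of_nonneg (fun i => hc (m + i)) |>.1 hns
    obtain ⟨j, hj⟩ := (htop.eventually_ge_atTop t).exists
    have := iter j m 0 t le_rfl ht.1 ht.2 (by simpa using hj) (fun k => by
      rw [h0, abs_zero]; exact mul_nonneg (Real.exp_pos _).le (hN k).le) 0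
    simpa using this
  have hlim : Tendsto (fun m : ℕ => Real.exp (-(m : ℝ)) * N 0) atTop (𝓝 (0 * N 0)) :=
    ((Real.tendsto_exp_neg_atTop_nhds_zero.comp tendsto_natCast_atTop_atTop)).mul_const _
  rw [zero_mul] at hlim
  have := ge_of_tendsto' hlim hsm
  exact abs_nonpos_iff.1 this

/-- Directional derivative. -/
noncomputable def dv (v : E) (f : E → ℝ) : E → ℝ := fun x => fderiv ℝ f x v

lemma iter_hasDerivAt {f : E → ℝ} {p w : E} {t : ℝ} (k : ℕ) (hf : ContDiffAt ℝ ∞ f (p + t • w)) :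
    HasDerivAt (fun t => iteratedFDeriv ℝ k f (p + t • w) (fun _ => w))
      (iteratedFDeriv ℝ (k + 1) f (p + t • w) (fun _ => w)) t := by
  have h1 : DifferentiableAt ℝ (iteratedFDeriv ℝ k f) (p + t • w) :=
    hf.differentiableAt_iteratedFDeriv (by exact_mod_cast WithTop.coe_lt_top _)
  have h2 : HasDerivAt (fun t => p + t • w) w t := by
    simpa using ((hasDerivAt_id t).smul_const w).const_add p
  have h3 := h1.hasFDerivAt.comp_hasDerivAt t h2
  have h4 := (ContinuousMultilinearMap.apply ℝ (fun _ : Fin k => E) ℝ (fun _ => w)).hasFDerivAt.comp_hasDerivAt t h3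
  rw [iteratedFDeriv_succ_apply_left]
  exact h4

lemma Q.ray (hM : HQ M) {f : E → ℝ} (hf : Q M f) : ∃ r > 0,
    (∀ x ∈ Metric.ball (0 : E) r, ContDiffAt ℝ ∞ f x) ∧
    ∀ p ∈ Metric.ball (0 : E) r, ∀ x ∈ Metric.ball (0 : E) r,
      (∀ k, iteratedFDeriv ℝ k f p (fun _ => x - p) = 0) → f x = 0 := by
  obtain ⟨A, B, hA, hB, hx⟩ := hf
  obtain ⟨r, hr, hball⟩ := Metric.eventually_nhds_iff_ball.1 hx
  refine ⟨r, hr, fun x hx => (hball x hx).1, fun p hp x hx h0 => ?_⟩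
  set w := x - p with hw
  have hseg : ∀ t ∈ Icc (0 : ℝ) 1, p + t • w ∈ Metric.ball (0 : E) r := by
    intro t ht
    have := (convex_ball (0 : E) r).add_smul_sub_mem hp hx ht
    simpa [hw] using this
  have := bang (N := fun k => A * (B * (‖w‖ + 1)) ^ k * ((k ! : ℝ) * M k))
    (H := fun k t => iteratedFDeriv ℝ k f (p + t • w) (fun _ => w)) ?_ ?_ ?_ ?_ ?_ ?_ 1 (by simp)
  · simpa [hw] using this
  · intro k
    have := hM.pos k
    positivity
  · intro k
    have p1 := hM.pos k
    have p2 := hM.pos (k + 1)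
    have p3 := hM.pos (k + 2)
    have e : ∀ k, A * (B * (‖w‖ + 1)) ^ (k + 1) * (((k + 1)! : ℝ) * M (k + 1)) /
        (A * (B * (‖w‖ + 1)) ^ k * ((k ! : ℝ) * M k)) =
        (B * (‖w‖ + 1)) * ((k + 1) * (M (k + 1) / M k)) := by
      intro k
      have := (hM.pos k).ne'
      have : (B * (‖w‖ + 1)) ≠ 0 := by positivity
      rw [Nat.factorial_succ, pow_succ]
      push_cast
      have : (k ! : ℝ) ≠ 0 := by positivity
      have : (B * (‖w‖ + 1)) ^ k ≠ 0 := by positivity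
      field_simp
    rw [e k, e (k + 1)]
    have := hM.log k
    have q : 0 < M (k + 1) / M k := by positivity
    push_cast
    gcongr
    linarith
  · intro hs
    refine hM.qa ?_
    refine (hs.mul_left (B * (‖w‖ + 1))).congr fun k => ?_
    have := (hM.pos k).ne'
    have := (hM.pos (k+1)).ne'
    have : (B * (‖w‖ + 1)) ≠ 0 := by positivity
    have : (B * (‖w‖ + 1)) ^ k ≠ 0 := by positivity
    have : (k ! : ℝ) ≠ 0 := by positivity
    rw [Nat.factorial_succ, pow_succ]
    push_cast
    field_simp
  · intro k t ht
    exact iter_hasDerivAt k (hball _ (hseg t ht)).1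
  · intro k t ht
    have h1 := (iteratedFDeriv ℝ k f (p + t • w)).le_opNorm (fun _ => w)
    have h2 := (hball _ (hseg t ht)).2 k
    have pk := (hM.pos k).le
    simp only [Finset.prod_const, Finset.card_univ, Fintype.card_fin, Real.norm_eq_abs] at h1
    refine h1.trans ?_
    calc _ ≤ (A * B ^ k * ((k ! : ℝ) * M k)) * (‖w‖ + 1) ^ k := by
          gcongr
          linarith
      _ = _ := by rw [mul_pow]; ring
  · intro k
    simpa using h0 k

/-- Quasianalyticity. -/
lemma Q.qz (hM : HQ M) {f : E → ℝ} (hf : Q M f) : ∃ r > 0, 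
    (∀ x ∈ Metric.ball (0 : E) r, ContDiffAt ℝ ∞ f x) ∧
    ∀ p ∈ Metric.ball (0 : E) r,
      f =ᶠ[𝓝 p] 0 → ∀ x ∈ Metric.ball (0 : E) r, f x = 0 := by
  obtain ⟨r, hr, hc, h⟩ := hf.ray hM
  refine ⟨r, hr, hc, fun p hp hfp x hx => h p hp x hx fun k => ?_⟩
  rw [(hfp.iteratedFDeriv ℝ k).eq_of_nhds]
  simp

lemma iter_dv {f : E → ℝ} {v : E} {S : Set E} (hS : IsOpen S) (hf : ∀ x ∈ S, ContDiffAt ℝ ∞ f x)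
    (k : ℕ) : ∀ x ∈ S, (dv v)^[k] f x = iteratedFDeriv ℝ k f x (fun _ => v) := by
  induction k with
  | zero => intro x _; simp
  | succ k ih =>
    intro x hx
    rw [Function.iterate_succ_apply', dv]
    have h1 : (dv v)^[k] f =ᶠ[𝓝 x] fun x => iteratedFDeriv ℝ k f x (fun _ => v) := by
      filter_upwards [hS.mem_nhds hx] with y hy using ih y hy
    rw [h1.fderiv_eq, iteratedFDeriv_succ_apply_left]
    have h2 : DifferentiableAt ℝ (iteratedFDeriv ℝ k f) x :=
      (hf x hx).differentiableAt_iteratedFDeriv (by exact_mod_cast WithTop.coe_lt_top _)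
    have h4 := (ContinuousMultilinearMap.apply ℝ (fun _ : Fin k => E) ℝ
      (fun _ => v)).hasFDerivAt.comp x h2.hasFDerivAt
    have h5 : fderiv ℝ (fun x => iteratedFDeriv ℝ k f x (fun _ => v)) x = _ := h4.fderiv
    rw [h5]
    rfl

lemma Q.dv (hM : HM M) {f : E → ℝ} (hf : Q M f) (v : E) : Q M (LG.dv v f) :=
  (hf.fderiv hM).clm_comp hM (ContinuousLinearMap.apply ℝ ℝ v)

lemma Q.dv_iter (hM : HM M) {f : E → ℝ} (hf : Q M f) (v : E) (k : ℕ) : Q M ((LG.dv v)^[k] f) := by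
  induction k with
  | zero => exact hf
  | succ k ih => rw [Function.iterate_succ_apply']; exact ih.dv hM v

lemma dv_congr {f g : E → ℝ} {x : E} (h : f =ᶠ[𝓝 x] g) (v : E) : dv v f =ᶠ[𝓝 x] dv v g := by
  filter_upwards [h.fderiv (𝕜 := ℝ)] with y hy
  simp only [dv, hy]

lemma dv_iter_congr {f g : E → ℝ} {x : E} (h : f =ᶠ[𝓝 x] g) (v : E) (k : ℕ) :
    (dv v)^[k] f =ᶠ[𝓝 x] (dv v)^[k] g := by
  induction k with
  | zero => exact h
  | succ k ih => simp only [Function.iterate_succ_apply']; exact dv_congr ih v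

lemma Q.mul_zero (hM : HQ M) {f g : E → ℝ} (hf : Q M f) (hg : Q M g)
    (h : ∀ᶠ x in 𝓝 0, f x * g x = 0) : (∀ᶠ x in 𝓝 0, f x = 0) ∨ ∀ᶠ x in 𝓝 0, g x = 0 := by
  obtain ⟨r, hr, hc, hg⟩ := hg.qz hM
  obtain ⟨s, hs, h⟩ := Metric.eventually_nhds_iff_ball.1 (h.and hf.contDiffAt)
  by_cases hz : ∀ x ∈ Metric.ball (0 : E) (min r s), f x = 0
  · left
    filter_upwards [Metric.ball_mem_nhds (0 : E) (lt_min hr hs)] with x hx using hz x hx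
  · right
    push Not at hz
    obtain ⟨p, hp, hfp⟩ := hz
    have hpr : p ∈ Metric.ball (0 : E) r := Metric.ball_subset_ball (min_le_left _ _) hp
    have hps : p ∈ Metric.ball (0 : E) s := Metric.ball_subset_ball (min_le_right _ _) hp
    filter_upwards [Metric.ball_mem_nhds (0 : E) hr] with x hx
    refine hg p hpr ?_ x hx
    filter_upwards [(h p hps).2.continuousAt.eventually_ne hfp, Metric.isOpen_ball.mem_nhds hps]
      with y hy hys
    exact (mul_eq_zero.1 (h y hys).1).resolve_left hy

lemma Q.exists_dv (hM : HQ M) {f : E → ℝ} (hf : Q M f) (h : ¬ ∀ᶠ x in 𝓝 0, f x = 0) :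
    ∃ (v : E) (d : ℕ), (LG.dv v)^[d] f 0 ≠ 0 := by
  obtain ⟨r, hr, hc, hg⟩ := hf.ray hM
  by_contra hcon
  push Not at hcon
  refine h ?_
  filter_upwards [Metric.ball_mem_nhds (0 : E) hr] with x hx
  refine hg 0 (by simpa) x hx fun k => ?_
  rw [← iter_dv Metric.isOpen_ball hc k 0 (by simpa)]
  exact hcon _ k

/-- Pullback of iterated directional derivatives along a continuous linear map plus shift. -/
lemma dv_iter_comp {f : E → ℝ} (L : F →L[ℝ] E) (v : F) (hM : HM M) (hf : Q M f) (k : ℕ) :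
    ∀ᶠ x in 𝓝 0, (dv v)^[k] (fun x => f (L x)) x = (dv (L v))^[k] f (L x) := by
  induction k with
  | zero => simp
  | succ k ih =>
    simp only [Function.iterate_succ_apply']
    have hc : Tendsto L (𝓝 0) (𝓝 0) := by simpa using L.continuous.tendsto 0
    filter_upwards [dv_congr ih v, hc.eventually (hf.dv_iter hM (L v) k).contDiffAt] with x hx h1
    rw [hx]
    simp only [dv]
    have h2 := (h1.differentiableAt (by simp)).hasFDerivAt.comp x L.hasFDerivAt
    have h3 : fderiv ℝ (fun x => (fun x => fderiv ℝ ((fun f x => fderiv ℝ f x (L v))^[k] f) x) (L x)) x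
      = fderiv ℝ (fun x => fderiv ℝ ((fun f x => fderiv ℝ f x (L v))^[k] f) (L x)) x := rfl
    exact congrArg (fun T => T v) h2.fderiv

lemma tend_left : Tendsto (fun x : E => (x, (0 : ℝ))) (𝓝 0) (𝓝 (0 : E × ℝ)) := by
  have : ContinuousAt (fun x : E => (x, (0 : ℝ))) 0 := by fun_prop
  exact this

lemma tend_fst : Tendsto (fun p : E × ℝ => p.1) (𝓝 0) (𝓝 (0 : E)) := by
  have : ContinuousAt (fun p : E × ℝ => p.1) 0 := by fun_prop
  exact this

lemma Q.fst (hM : HM M) {f : E → W} (hf : Q M f) : Q M (fun p : E × ℝ => f p.1) :=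
  hf.comp_clm hM (ContinuousLinearMap.fst ℝ E ℝ)

lemma Q.slice (hM : HM M) {f : E × ℝ → W} (hf : Q M f) : Q M (fun x : E => f (x, 0)) :=
  hf.comp_clm hM (ContinuousLinearMap.inl ℝ E ℝ)

lemma Q.y (hM : HM M) : Q M (fun p : E × ℝ => p.2) := Q.clm hM (ContinuousLinearMap.snd ℝ E ℝ)

lemma Q.taylorY (hM : HM M) {g : E × ℝ → ℝ} (hg : Q M g) (k : ℕ) :
    ∃ (c : ℕ → E → ℝ) (u : E × ℝ → ℝ), (∀ i, Q M (c i)) ∧ Q M u ∧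
      ∀ᶠ p in 𝓝 0, g p = ∑ i ∈ Finset.range k, c i p.1 * p.2 ^ i + p.2 ^ k * u p := by
  induction k with
  | zero => exact ⟨fun _ _ => 0, g, fun _ => Q.const hM 0, hg, by simp⟩
  | succ k ih =>
    obtain ⟨c, u, hc, hu, h⟩ := ih
    have hu0 : Q M (fun x : E => u (x, 0)) := hu.slice hM
    obtain ⟨w, hw, huw⟩ := (hu.sub hM (hu0.fst hM)).div hM (ContinuousLinearMap.snd ℝ E ℝ) (0, 1)
      (by simp) (Eventually.of_forall fun p hp => by
        have : p.2 = 0 := hp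
        simp [← this])
    refine ⟨Function.update c k (fun x => u (x, 0)), w, fun i => ?_, hw, ?_⟩
    · by_cases hi : i = k
      · subst hi; simpa using hu0
      · simpa [hi] using hc i
    · filter_upwards [h, huw] with p hp hq
      have hq : u p - u (p.1, 0) = p.2 * w p := hq
      rw [hp, Finset.sum_range_succ]
      have : ∑ i ∈ Finset.range k, Function.update c k (fun x => u (x, 0)) i p.1 * p.2 ^ i =
          ∑ i ∈ Finset.range k, c i p.1 * p.2 ^ i := by
        refine Finset.sum_congr rfl fun i hi => ?_
        rw [Function.update_of_ne (by simp at hi; omega)]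
      rw [this, Function.update_self, show u p = u (p.1, 0) + p.2 * w p by linarith]
      ring

/-- derivative in the last variable -/
noncomputable abbrev dy (f : E × ℝ → ℝ) : E × ℝ → ℝ := dv ((0 : E), (1 : ℝ)) f

lemma dy_horner (hM : HM M) {c : E → ℝ} {g : E × ℝ → ℝ} (hc : Q M c) (hg : Q M g) (i : ℕ) :
    ∀ᶠ p in 𝓝 0, dy^[i + 1] (fun p => c p.1 + p.2 * g p) p =
      p.2 * dy^[i + 1] g p + (i + 1) * dy^[i] g p := by
  have hstep : ∀ {a b : E × ℝ → ℝ}, Q M a → Q M b → ∀ᶠ p in 𝓝 0,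
      dy (fun p => p.2 * a p + b p) p = a p + p.2 * dy a p + dy b p := by
    intro a b ha hb
    filter_upwards [ha.contDiffAt, hb.contDiffAt] with p h1 h2
    have h1 := (h1.differentiableAt (by simp)).hasFDerivAt
    have h2 := (h2.differentiableAt (by simp)).hasFDerivAt
    have h3 : HasFDerivAt (fun p : E × ℝ => p.2) (ContinuousLinearMap.snd ℝ E ℝ) p :=
      (ContinuousLinearMap.snd ℝ E ℝ).hasFDerivAt
    have h4 := (h3.mul h1).add h2
    have h5 : fderiv ℝ (fun p => p.2 * a p + b p) p = _ := h4.fderiv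
    simp only [dy, dv]
    rw [h5]
    simp
    ring
  induction i with
  | zero =>
    have h1 := hstep hg (hc.fst hM)
    filter_upwards [h1, (tend_fst (E := E)).eventually hc.contDiffAt] with p h1 h2
    have h2 := ((h2.differentiableAt (by simp)).hasFDerivAt).comp p
      (ContinuousLinearMap.fst ℝ E ℝ).hasFDerivAt
    have h3 : dy (fun p : E × ℝ => c p.1) p = 0 := by
      have h5 : fderiv ℝ (fun p : E × ℝ => c p.1) p = _ := h2.fderiv
      simp only [dy, dv, h5]
      simp
    simp only [zero_add, Function.iterate_one, Function.iterate_zero, id]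
    rw [h3] at h1
    have e : (fun p : E × ℝ => c p.1 + p.2 * g p) = fun p => p.2 * g p + c p.1 := by
      ext p; ring
    rw [e, h1]; simp; ring
  | succ i ih =>
    have h1 := hstep (hg.dv_iter hM ((0 : E), (1 : ℝ)) (i + 1))
      ((Q.const hM (i + 1 : ℝ)).mul hM (hg.dv_iter hM ((0 : E), (1 : ℝ)) i))
    filter_upwards [h1, dv_congr ih (0, 1), (hg.dv_iter hM ((0 : E), (1 : ℝ)) i).contDiffAt]
      with p h1 h2 h3
    rw [Function.iterate_succ_apply', dy, h2]
    refine h1.trans ?_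
    have h6 : dy (fun x => ((i : ℝ) + 1) * dy^[i] g x) p = (i + 1) * dy^[i + 1] g p := by
      have h4 := ((h3.differentiableAt (by simp)).hasFDerivAt).const_mul ((i : ℝ) + 1)
      have h5 : fderiv ℝ (fun x => ((i : ℝ) + 1) * dy^[i] g x) p = _ := h4.fderiv
      rw [Function.iterate_succ_apply']
      simp only [dy, dv] at h5 ⊢
      rw [h5]
      simp
    have h7 : dy (dy^[i+1] g) p = dy^[i + 1 + 1] g p := by
      rw [Function.iterate_succ_apply' _ (i + 1)]
    change dy^[i + 1] g p + p.2 * dy (dy^[i+1] g) p + dy (fun x => ((i : ℝ) + 1) * dy^[i] g x) p = _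
    rw [h6, h7]
    push_cast
    ring

lemma taylor_coeff (hM : HM M) (k : ℕ) : ∀ {g : E × ℝ → ℝ} {c : ℕ → E → ℝ} {u : E × ℝ → ℝ},
    (∀ i, Q M (c i)) → Q M u →
    (∀ᶠ p in 𝓝 0, g p = ∑ i ∈ Finset.range k, c i p.1 * p.2 ^ i + p.2 ^ k * u p) →
    (∀ᶠ x in 𝓝 0, (∀ i < k, dy^[i] g (x, 0) = (i ! : ℝ) * c i x) ∧
      dy^[k] g (x, 0) = (k ! : ℝ) * u (x, 0)) := by
  induction k with
  | zero =>
    intro g c u hc hu h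
    filter_upwards [tend_left.eventually h] with x hx
    simpa using hx
  | succ k ih =>
    intro g c u hc hu h
    let g1 : E × ℝ → ℝ := fun p => ∑ i ∈ Finset.range k, c (i + 1) p.1 * p.2 ^ i + p.2 ^ k * u p
    have hg1 : Q M g1 := by
      refine Q.add hM (Q.sum hM _ fun i _ => ((hc _).fst hM).mul hM ((Q.y hM).pow hM i))
        (((Q.y hM).pow hM k).mul hM hu)
    have hgg : ∀ᶠ p in 𝓝 0, g p = c 0 p.1 + p.2 * g1 p := by
      filter_upwards [h] with p hp
      rw [hp, Finset.sum_range_succ']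
      simp only [g1, mul_add, Finset.mul_sum]
      rw [show ∑ i ∈ Finset.range k, p.2 * (c (i + 1) p.1 * p.2 ^ i) =
        ∑ i ∈ Finset.range k, c (i + 1) p.1 * p.2 ^ (i + 1) from
        Finset.sum_congr rfl fun i _ => by ring]
      ring
    have h1 := ih (g := g1) (c := fun i => c (i + 1)) (fun i => hc _) hu
      (Eventually.of_forall fun p => rfl)
    have h2 : ∀ᶠ x in 𝓝 (0 : E), ∀ i < k + 1, dy^[i + 1] g (x, 0) = (i + 1) * dy^[i] g1 (x, 0) := by
      have : ∀ᶠ p in 𝓝 (0 : E × ℝ), ∀ i < k + 1, dy^[i + 1] g p =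
          p.2 * dy^[i + 1] g1 p + (i + 1) * dy^[i] g1 p := by
        have : ∀ᶠ p in 𝓝 (0 : E × ℝ), ∀ i ∈ Finset.range (k + 1), dy^[i + 1] g p =
          p.2 * dy^[i + 1] g1 p + (i + 1) * dy^[i] g1 p := by
          rw [Filter.eventually_all_finset]
          intro i _
          filter_upwards [dy_horner hM (hc 0) hg1 i, dv_iter_congr hgg (0, 1) (i + 1)] with p h1 h2
          exact h2.trans h1
        simpa using this
      filter_upwards [tend_left.eventually this] with x hx i hi
      simpa using hx i hi
    filter_upwards [h1, h2, tend_left.eventually hgg] with x h1 h2 h3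
    constructor
    · intro i hi
      match i with
      | 0 => simpa using h3
      | i + 1 =>
        rw [h2 i (by omega), h1.1 i (by omega), Nat.factorial_succ]
        push_cast; ring
    · rw [h2 k (by omega), h1.2, Nat.factorial_succ]
      push_cast; ring

end LG


namespace LG

open Filter Topology Set
open scoped ContDiff Nat

set_option linter.unusedSectionVars false

variable {M : ℕ → ℝ}
variable {E F : Type} [NormedAddCommGroup E] [NormedSpace ℝ E]
  [NormedAddCommGroup F] [NormedSpace ℝ F]

/-- A family of maps is a local cover: images of arbitrary neighbourhoods of `0` of finitely many
members cover a neighbourhood of `0`. -/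
def Cov {J : Type} (π : J → E → F) : Prop :=
  ∀ V : J → Set E, (∀ j, V j ∈ 𝓝 0) → ∃ T : Finset J, (⋃ j ∈ T, π j '' V j) ∈ 𝓝 (0 : F)

/-- Germs which can be brought into the form `P` by a finite sequence of local covers. -/
inductive Res (M : ℕ → ℝ) (P : (E → ℝ) → Prop) : (E → ℝ) → Prop
  | base (f : E → ℝ) (h : P f) : Res M P f
  | step {J : Type} (π : J → E → E) (hQ : ∀ j, Q M (π j)) (h0 : ∀ j, π j 0 = 0) (hcov : Cov π)
      (f : E → ℝ) (h : ∀ j, Res M P (fun x => f (π j x))) : Res M P f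

lemma Q.tendsto {f : E → F} (hf : Q M f) (h0 : f 0 = 0) : Tendsto f (𝓝 0) (𝓝 0) := by
  have := hf.continuousAt
  rwa [ContinuousAt, h0] at this

lemma Res.congr {P : (E → ℝ) → Prop} (hP : ∀ f g : E → ℝ, f =ᶠ[𝓝 0] g → P f → P g) {f : E → ℝ}
    (h : Res M P f) : ∀ g : E → ℝ, f =ᶠ[𝓝 0] g → Res M P g := by
  induction h with
  | base f h => intro g hg; exact .base _ (hP _ _ hg h)
  | step π hQ h0 hcov f h ih =>
    intro g hg
    exact .step π hQ h0 hcov g fun j => ih j _ (((hQ j).tendsto (h0 j)).eventually hg)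

lemma Cov.single {π : E → F} (σ : F → E) (hσ : Tendsto σ (𝓝 0) (𝓝 0))
    (h : ∀ᶠ x in 𝓝 0, π (σ x) = x) : Cov (fun _ : Unit => π) := by
  intro V hV
  refine ⟨{()}, ?_⟩
  filter_upwards [hσ (hV ()), h] with x hx hx'
  simp only [Finset.mem_singleton, mem_iUnion]
  exact ⟨(), trivial, σ x, hx, hx'⟩

lemma Cov.prod {J : Type} {π : J → E → F} (h : Cov π) :
    Cov (fun j (p : E × ℝ) => (π j p.1, p.2)) := by
  intro V hV
  have : ∀ j, ∃ A ∈ 𝓝 (0 : E), ∃ B ∈ 𝓝 (0 : ℝ), A ×ˢ B ⊆ V j := fun j => mem_nhds_prod_iff.1 (hV j)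
  choose A hA B hB hAB using this
  obtain ⟨T, hT⟩ := h A hA
  refine ⟨T, ?_⟩
  have hBT : (⋂ j ∈ T, B j) ∈ 𝓝 (0 : ℝ) := (Finset.iInter_mem_sets T).2 fun j _ => hB j
  refine mem_of_superset (prod_mem_nhds hT hBT) ?_
  rintro ⟨x, y⟩ ⟨hx, hy⟩
  simp only [mem_iUnion, mem_iInter] at hx hy ⊢
  obtain ⟨j, hj, z, hz, rfl⟩ := hx
  exact ⟨j, hj, (z, y), hAB j ⟨hz, hy j hj⟩, rfl⟩

/-- one-map step -/
lemma Res.single {P : (E → ℝ) → Prop} {π : E → E} (hQ : Q M π) (h0 : π 0 = 0) (σ : E → E)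
    (hσ : Tendsto σ (𝓝 0) (𝓝 0)) (hs : ∀ᶠ x in 𝓝 0, π (σ x) = x) {f : E → ℝ}
    (h : Res M P (fun x => f (π x))) : Res M P f :=
  .step (fun _ : Unit => π) (fun _ => hQ) (fun _ => h0) (Cov.single σ hσ hs) f fun _ => h

lemma Res.transfer (hM : HM M) {P : (E → ℝ) → Prop} {P' : (F → ℝ) → Prop} (e : F ≃L[ℝ] E)
    (hP : ∀ f, P f → P' (fun x => f (e x))) {f : E → ℝ} (h : Res M P f) :
    Res M P' (fun x => f (e x)) := by
  have te : Tendsto e (𝓝 0) (𝓝 0) := by simpa using e.continuous.tendsto 0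
  have te' : Tendsto e.symm (𝓝 0) (𝓝 0) := by simpa using e.symm.continuous.tendsto 0
  induction h with
  | base f h => exact .base _ (hP _ h)
  | step π hQ h0 hcov f h ih =>
    refine .step (fun j x => e.symm (π j (e x))) (fun j => ?_) (fun j => by simp [h0]) ?_ _ fun j => ?_
    · exact ((hQ j).comp_clm hM (e : F →L[ℝ] E)).clm_comp hM (e.symm : E →L[ℝ] F)
    · intro V hV
      obtain ⟨T, hT⟩ := hcov (fun j => e.symm ⁻¹' V j) (fun j => te' (hV j))
      refine ⟨T, mem_of_superset (te hT) ?_⟩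
      intro x hx
      simp only [mem_preimage, mem_iUnion] at hx ⊢
      obtain ⟨j, hj, z, hz, hzx⟩ := hx
      exact ⟨j, hj, e.symm z, hz, by simp [hzx]⟩
    · simpa using ih j

/-! ### Monomials and normal crossings -/

variable {n : ℕ}

/-- monomial -/
def mon (γ : Fin n → ℕ) (x : Fin n → ℝ) : ℝ := ∏ i, x i ^ γ i

lemma mon_add (α β : Fin n → ℕ) (x : Fin n → ℝ) : mon (α + β) x = mon α x * mon β x := by
  simp [mon, pow_add, Finset.prod_mul_distrib]

lemma mon_zero (x : Fin n → ℝ) : mon 0 x = 1 := by simp [mon]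

lemma mon_smul (k : ℕ) (α : Fin n → ℕ) (x : Fin n → ℝ) : mon (k • α) x = mon α x ^ k := by
  simp only [mon, ← Finset.prod_pow]
  refine Finset.prod_congr rfl fun i _ => ?_
  rw [← pow_mul, Pi.smul_apply, smul_eq_mul, mul_comm]

lemma mon_single (i : Fin n) (k : ℕ) (x : Fin n → ℝ) : mon (Pi.single i k) x = x i ^ k := by
  classical
  rw [mon, Finset.prod_eq_single i]
  · simp
  · intro j _ hj; simp [hj]
  · simp

lemma mon_eq_zero {γ : Fin n → ℕ} {x : Fin n → ℝ} (i : Fin n) (hγ : γ i ≠ 0) (hx : x i = 0) :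
    mon γ x = 0 := Finset.prod_eq_zero (Finset.mem_univ i) (by rw [hx, zero_pow hγ])

lemma mon_zero_ne {γ : Fin n → ℕ} (hγ : γ ≠ 0) : mon γ 0 = 0 := by
  obtain ⟨i, hi⟩ := Function.ne_iff.1 hγ
  exact mon_eq_zero i hi rfl

/-- coordinate functional -/
noncomputable def cproj (i : Fin n) : (Fin n → ℝ) →L[ℝ] ℝ := ContinuousLinearMap.proj i

lemma cproj_apply (i : Fin n) (x : Fin n → ℝ) : cproj i x = x i := rfl

lemma Q.coord (hM : HM M) (i : Fin n) : Q M (fun x : Fin n → ℝ => x i) :=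
  Q.clm hM (cproj i)

lemma Q.mon (hM : HM M) (γ : Fin n → ℕ) : Q M (LG.mon γ) :=
  Q.prod hM Finset.univ fun i _ => (Q.coord hM i).pow hM (γ i)

lemma sub_single {γ : Fin n → ℕ} {i : Fin n} (h : γ i ≠ 0) :
    γ = (γ - Pi.single i 1) + Pi.single i 1 := by
  classical
  ext j
  by_cases hj : j = i
  · subst hj; simp; omega
  · simp [hj]

/-- `mon γ * u` with `u 0 ≠ 0` is not the zero germ -/
lemma mon_mul_ne {γ : Fin n → ℕ} {u : (Fin n → ℝ) → ℝ} (hu : ContinuousAt u 0) (h0 : u 0 ≠ 0) :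
    ¬ ∀ᶠ x in 𝓝 0, mon γ x * u x = 0 := by
  intro h
  have t : Tendsto (fun s : ℝ => (fun _ : Fin n => s)) (𝓝[>] 0) (𝓝 0) := by
    have : Continuous (fun s : ℝ => (fun _ : Fin n => s)) := by fun_prop
    exact (this.tendsto 0).mono_left nhdsWithin_le_nhds
  have h1 := t.eventually h
  have h2 := t.eventually (hu.eventually_ne h0)
  obtain ⟨s, hs⟩ := (h1.and (h2.and self_mem_nhdsWithin)).exists
  obtain ⟨hs1, hs2, hs3⟩ := hs
  have hs3 : 0 < s := hs3
  rcases mul_eq_zero.1 hs1 with h | h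
  · have : 0 < mon γ (fun _ : Fin n => s) := Finset.prod_pos fun i _ => pow_pos hs3 _
    exact this.ne' h
  · exact hs2 h

/-- normal crossings germs -/
def NC (M : ℕ → ℝ) (f : (Fin n → ℝ) → ℝ) : Prop :=
  ∃ (γ : Fin n → ℕ) (u : (Fin n → ℝ) → ℝ), Q M u ∧ u 0 ≠ 0 ∧ ∀ᶠ x in 𝓝 0, f x = mon γ x * u x

/-- normal crossings germs on `ℝ^n × ℝ` -/
def NC' (M : ℕ → ℝ) (f : (Fin n → ℝ) × ℝ → ℝ) : Prop :=
  ∃ (γ : Fin n → ℕ) (k : ℕ) (u : (Fin n → ℝ) × ℝ → ℝ), Q M u ∧ u 0 ≠ 0 ∧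
    ∀ᶠ p in 𝓝 0, f p = mon γ p.1 * p.2 ^ k * u p

lemma NC.congr (f g : (Fin n → ℝ) → ℝ) (h : f =ᶠ[𝓝 0] g) (hf : NC M f) : NC M g := by
  obtain ⟨γ, u, hu, h0, hx⟩ := hf
  refine ⟨γ, u, hu, h0, ?_⟩
  filter_upwards [h, hx] with x h1 h2
  rw [← h1, h2]

lemma NC'.congr (f g : (Fin n → ℝ) × ℝ → ℝ) (h : f =ᶠ[𝓝 0] g) (hf : NC' M f) : NC' M g := by
  obtain ⟨γ, k, u, hu, h0, hx⟩ := hf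
  refine ⟨γ, k, u, hu, h0, ?_⟩
  filter_upwards [h, hx] with x h1 h2
  rw [← h1, h2]

lemma Q.cancel (hM : HQ M) {a f g : E → ℝ} (ha : Q M a) (hf : Q M f) (hg : Q M g)
    (h0 : ¬ ∀ᶠ x in 𝓝 0, a x = 0) (h : ∀ᶠ x in 𝓝 0, a x * f x = a x * g x) :
    ∀ᶠ x in 𝓝 0, f x = g x := by
  rcases ha.mul_zero hM (hf.sub hM.toHM hg) (by
    filter_upwards [h] with x hx; rw [mul_sub, hx, sub_self]) with h | h
  · exact absurd h h0
  · filter_upwards [h] with x hx; linarith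

/-- projection killing one coordinate -/
noncomputable def kill (i : Fin n) : (Fin n → ℝ) →L[ℝ] (Fin n → ℝ) :=
  ContinuousLinearMap.pi fun j => if j = i then 0 else ContinuousLinearMap.proj j

lemma kill_same (i : Fin n) (x : Fin n → ℝ) : kill i x i = 0 := by simp [kill]

lemma kill_ne {i j : Fin n} (h : j ≠ i) (x : Fin n → ℝ) : kill i x j = x j := by simp [kill, h]

lemma kill_eq {i : Fin n} {x : Fin n → ℝ} (h : x i = 0) : kill i x = x := by
  ext j
  by_cases hj : j = i
  · subst hj; rw [kill_same, h]
  · rw [kill_ne hj]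

lemma tend_kill (i : Fin n) : Tendsto (kill i) (𝓝 0) (𝓝 0) := by
  simpa using (kill i).continuous.tendsto 0

lemma mon_kill {γ : Fin n → ℕ} {i : Fin n} (h : γ i = 0) (x : Fin n → ℝ) :
    mon γ (kill i x) = mon γ x := by
  refine Finset.prod_congr rfl fun j _ => ?_
  by_cases hj : j = i
  · subst hj; simp [h]
  · rw [kill_ne hj]

lemma coord_ne (i : Fin n) : ¬ ∀ᶠ x : Fin n → ℝ in 𝓝 0, x i = 0 := by
  have := mon_mul_ne (γ := Pi.single i 1) (u := fun _ : Fin n → ℝ => 1) continuousAt_const one_ne_zero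
  simpa [mon_single] using this

/-- division by a coordinate -/
lemma Q.div_coord (hM : HM M) {g : (Fin n → ℝ) → ℝ} (hg : Q M g) (i : Fin n)
    (h : ∀ᶠ x in 𝓝 0, g (kill i x) = 0) :
    ∃ g1, Q M g1 ∧ ∀ᶠ x in 𝓝 0, g x = x i * g1 x := by
  classical
  refine hg.div hM (cproj i) (Pi.single i 1)
    (by simp [cproj_apply]) ?_
  filter_upwards [h] with x hx h0
  rwa [kill_eq h0] at hx

lemma NC.factor_aux (hM : HQ M) (s : ℕ) : ∀ (γ : Fin n → ℕ) (_ : ∑ i, γ i = s)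
    (g h u : (Fin n → ℝ) → ℝ), Q M g → Q M h → Q M u → u 0 ≠ 0 →
    (∀ᶠ x in 𝓝 0, g x * h x = mon γ x * u x) → NC M g := by
  induction s with
  | zero =>
    intro γ hγ g h u hg hh hu h0 hx
    have hγ0 : γ = 0 := by
      ext i
      have := Finset.sum_eq_zero_iff.1 hγ i (Finset.mem_univ i)
      simpa using this
    have := hx.self_of_nhds
    rw [hγ0, mon_zero, one_mul] at this
    refine ⟨0, g, hg, ?_, by simp [mon_zero]⟩
    intro hg0
    rw [hg0, zero_mul] at this
    exact h0 this.symm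
  | succ s ih =>
    intro γ hγ g h u hg hh hu h0 hx
    obtain ⟨i, hi⟩ : ∃ i, γ i ≠ 0 := by
      by_contra hcon
      push Not at hcon
      simp [hcon] at hγ
    classical
    have hγ' := sub_single hi
    set γ' := γ - Pi.single i 1 with hγ'd
    have hs : ∑ i, γ' i = s := by
      have : ∑ j, γ j = ∑ j, γ' j + 1 := by
        conv_lhs => rw [hγ']
        simp [Finset.sum_add_distrib]
      omega
    have hmon : ∀ x, mon γ x = x i * mon γ' x := by
      intro x; rw [hγ', mon_add, mon_single, pow_one, mul_comm]
    have hk : ∀ᶠ x in 𝓝 0, g (kill i x) * h (kill i x) = 0 := by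
      filter_upwards [(tend_kill i).eventually hx] with x hx
      rw [hx, mon_eq_zero i hi (kill_same i x), zero_mul]
    have hM' := hM.toHM
    rcases (hg.comp_clm hM' (kill i)).mul_zero hM (hh.comp_clm hM' (kill i)) hk with h1 | h1
    · obtain ⟨g1, hg1, hgg⟩ := hg.div_coord hM' i h1
      have h2 : ∀ᶠ x in 𝓝 0, g1 x * h x = mon γ' x * u x := by
        refine Q.cancel hM (Q.coord hM' i) (hg1.mul hM' hh) ((Q.mon hM' γ').mul hM' hu) (coord_ne i) ?_
        filter_upwards [hx, hgg] with x h1 h2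
        rw [h2, hmon] at h1
        linarith
      obtain ⟨δ, w, hw, hw0, hgw⟩ := ih γ' hs g1 h u hg1 hh hu h0 h2
      refine ⟨δ + Pi.single i 1, w, hw, hw0, ?_⟩
      filter_upwards [hgw, hgg] with x h1 h2
      rw [h2, h1, mon_add, mon_single]; ring
    · obtain ⟨g1, hg1, hgg⟩ := hh.div_coord hM' i h1
      have h2 : ∀ᶠ x in 𝓝 0, g x * g1 x = mon γ' x * u x := by
        refine Q.cancel hM (Q.coord hM' i) (hg.mul hM' hg1) ((Q.mon hM' γ').mul hM' hu) (coord_ne i) ?_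
        filter_upwards [hx, hgg] with x h1 h2
        rw [h2, hmon] at h1
        linarith
      exact ih γ' hs g g1 u hg hg1 hu h0 h2

lemma NC.factor (hM : HQ M) {g h : (Fin n → ℝ) → ℝ} (hg : Q M g) (hh : Q M h)
    (hgh : NC M (fun x => g x * h x)) : NC M g := by
  obtain ⟨γ, u, hu, h0, hx⟩ := hgh
  exact NC.factor_aux hM _ γ rfl g h u hg hh hu h0 hx

lemma NC.factor_prod (hM : HQ M) {ι : Type} (s : Finset ι) {g : ι → (Fin n → ℝ) → ℝ}
    (hg : ∀ i ∈ s, Q M (g i)) (h : NC M (fun x => ∏ i ∈ s, g i x)) (i : ι) (hi : i ∈ s) :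
    NC M (g i) := by
  classical
  refine NC.factor hM (hg i hi) (h := fun x => ∏ j ∈ s.erase i, g j x)
    (Q.prod hM.toHM _ fun j hj => hg j (Finset.mem_of_mem_erase hj)) ?_
  have e : (fun x => g i x * ∏ j ∈ s.erase i, g j x) = fun x => ∏ i ∈ s, g i x := by
    ext x
    exact Finset.mul_prod_erase s (fun j => g j x) hi
  rw [e]
  exact h

lemma comparable_aux (hM : HQ M) {α β : Fin n → ℕ} {u v : (Fin n → ℝ) → ℝ} (hv : Q M v)
    (hv0 : v 0 ≠ 0) {i : Fin n} (hi : α i ≠ 0) (hi' : β i = 0) :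
    ¬ ∀ᶠ x in 𝓝 0, mon α x * u x = mon β x * v x := by
  intro h
  have h1 := (tend_kill i).eventually h
  refine mon_mul_ne (γ := β) (u := fun x => v (kill i x))
    (hv.comp_clm hM.toHM (kill i)).continuousAt (by simpa using hv0) ?_
  filter_upwards [h1] with x hx
  rw [mon_kill hi', mon_eq_zero i hi (kill_same i x), zero_mul] at hx
  exact hx.symm

lemma comparable (hM : HQ M) {α β : Fin n → ℕ} {u v : (Fin n → ℝ) → ℝ} (hu : Q M u) (hv : Q M v)
    (hu0 : u 0 ≠ 0) (hv0 : v 0 ≠ 0)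
    (h : NC M (fun x => mon α x * u x - mon β x * v x) ∨
      ∀ᶠ x in 𝓝 0, mon α x * u x - mon β x * v x = 0) : α ≤ β ∨ β ≤ α := by
  have hM' := hM.toHM
  by_contra hcon
  rw [not_or, Pi.le_def, Pi.le_def] at hcon
  push Not at hcon
  obtain ⟨⟨i, hi⟩, ⟨j, hj⟩⟩ := hcon
  let δ : Fin n → ℕ := fun k => min (α k) (β k)
  let a : Fin n → ℕ := fun k => α k - δ k
  let b : Fin n → ℕ := fun k => β k - δ k
  have ha : α = δ + a := by ext k; simp [a, δ]
  have hb : β = δ + b := by ext k; simp [b, δ]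
  have hai : a i ≠ 0 := by simp only [a, δ]; omega
  have hbi : b i = 0 := by simp only [b, δ]; omega
  have haj : a j = 0 := by simp only [a, δ]; omega
  have hbj : b j ≠ 0 := by simp only [b, δ]; omega
  have hab : ∀ k, a k = 0 ∨ b k = 0 := by intro k; simp only [a, b, δ]; omega
  have hQa := (Q.mon hM' a).mul hM' hu
  have hQb := (Q.mon hM' b).mul hM' hv
  have hQd := hQa.sub hM' hQb
  have e : ∀ x, mon α x * u x - mon β x * v x = mon δ x * (mon a x * u x - mon b x * v x) := by
    intro x; rw [ha, hb, mon_add, mon_add]; ring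
  have hδ : ¬ ∀ᶠ x in 𝓝 0, mon δ x = 0 := by
    have := mon_mul_ne (γ := δ) (u := fun _ => 1) continuousAt_const one_ne_zero
    simpa using this
  rcases h with h | h
  · have h1 : NC M (fun x => mon a x * u x - mon b x * v x) := by
      refine NC.factor hM hQd (Q.mon hM' δ) (NC.congr _ _ (Eventually.of_forall fun x => ?_) h)
      simp only [e]; ring
    obtain ⟨γ, w, hw, hw0, hx⟩ := h1
    by_cases hγ : γ = 0
    · have := hx.self_of_nhds
      simp only [] at this
      rw [hγ, mon_zero, one_mul, mon_eq_zero (x := 0) i hai rfl, mon_eq_zero (x := 0) j hbj rfl] at this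
      simp at this
      exact hw0 this.symm
    · obtain ⟨k, hk⟩ := Function.ne_iff.1 hγ
      have h2 : ∀ᶠ x in 𝓝 0, mon a (kill k x) * u (kill k x) = mon b (kill k x) * v (kill k x) := by
        filter_upwards [(tend_kill k).eventually hx] with x hx
        rw [mon_eq_zero k hk (kill_same k x), zero_mul] at hx
        linarith
      have huk := hu.comp_clm hM' (kill k)
      have hvk := hv.comp_clm hM' (kill k)
      by_cases hak : a k = 0
      · by_cases hbk : b k = 0
        · refine comparable_aux hM (u := fun x => u (kill k x)) hvk (by simpa using hv0) hai hbi ?_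
          filter_upwards [h2] with x hx
          rwa [mon_kill hak, mon_kill hbk] at hx
        · refine comparable_aux hM (u := v) hu hu0 hbk hak ?_
          refine absurd ?_ (mon_mul_ne (γ := a) huk.continuousAt (by simpa using hu0))
          filter_upwards [h2] with x hx
          rwa [mon_kill hak, mon_eq_zero k hbk (kill_same k x), zero_mul] at hx
      · have hbk := (hab k).resolve_left hak
        refine absurd ?_ (mon_mul_ne (γ := b) hvk.continuousAt (by simpa using hv0))
        filter_upwards [h2] with x hx
        rw [mon_kill hbk, mon_eq_zero k hak (kill_same k x), zero_mul] at hx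
        exact hx.symm
  · have h1 : ∀ᶠ x in 𝓝 0, mon a x * u x - mon b x * v x = 0 := by
      have := Q.cancel hM (Q.mon hM' δ) hQd (Q.const hM' (0 : ℝ)) hδ (by
        filter_upwards [h] with x hx; rw [e] at hx; rw [hx, MulZeroClass.mul_zero])
      exact this
    refine comparable_aux hM (u := u) hv hv0 hai hbi ?_
    filter_upwards [h1] with x hx
    linarith

end LG


namespace LG

open Filter Topology Set
open scoped ContDiff Nat

set_option linter.unusedSectionVars false

variable {M : ℕ → ℝ} {n : ℕ}
variable {E F : Type} [NormedAddCommGroup E] [NormedSpace ℝ E]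
  [NormedAddCommGroup F] [NormedSpace ℝ F]

/-- sign -/
def sg (b : Bool) : ℝ := if b then 1 else -1

lemma sg_ne (b : Bool) : sg b ≠ 0 := by cases b <;> simp [sg]

/-- ramification maps -/
def ram (m : ℕ) (s : Fin n → Bool) (x : Fin n → ℝ) : Fin n → ℝ := fun i => sg (s i) * x i ^ m

lemma ram_zero {m : ℕ} (hm : m ≠ 0) (s : Fin n → Bool) : ram m s 0 = 0 := by
  ext i; simp [ram, hm]

lemma Q.ram (hM : HM M) (m : ℕ) (s : Fin n → Bool) : Q M (LG.ram m s) :=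
  Q.pi hM fun i => (Q.const hM (sg (s i))).mul hM ((Q.coord hM i).pow hM m)

/-- sign factor of a monomial -/
def sgm (γ : Fin n → ℕ) (s : Fin n → Bool) : ℝ := ∏ i, sg (s i) ^ γ i

lemma sgm_ne (γ : Fin n → ℕ) (s : Fin n → Bool) : sgm γ s ≠ 0 :=
  Finset.prod_ne_zero_iff.2 fun _ _ => pow_ne_zero _ (sg_ne _)

lemma mon_ram (m : ℕ) (s : Fin n → Bool) (γ : Fin n → ℕ) (x : Fin n → ℝ) :
    mon γ (ram m s x) = sgm γ s * mon (m • γ) x := by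
  simp only [mon, ram, sgm, ← Finset.prod_mul_distrib]
  refine Finset.prod_congr rfl fun i _ => ?_
  rw [mul_pow, ← pow_mul]; rfl

lemma Cov.ram {m : ℕ} (hm : m ≠ 0) : Cov (fun s : Fin n → Bool => LG.ram m s) := by
  intro V hV
  refine ⟨Finset.univ, ?_⟩
  have hW : (⋂ s, V s) ∈ 𝓝 (0 : Fin n → ℝ) := Filter.iInter_mem.2 hV
  have hρ : Continuous (fun z : Fin n → ℝ => fun i => |z i| ^ ((m : ℝ)⁻¹)) := by
    refine continuous_pi fun i => ?_
    exact (continuous_abs.comp (continuous_apply i)).rpow_const fun x => Or.inr (by positivity)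
  have hm' : (m : ℝ)⁻¹ ≠ 0 := by positivity
  have t := hρ.tendsto 0
  have e0 : (fun i : Fin n => |(0 : Fin n → ℝ) i| ^ ((m : ℝ)⁻¹)) = 0 := by
    ext i; simp [Real.zero_rpow hm']
  rw [e0] at t
  filter_upwards [t hW] with z hz
  simp only [Finset.mem_univ, mem_iUnion]
  refine ⟨fun i => decide (0 ≤ z i), trivial, _, mem_iInter.1 hz _, ?_⟩
  ext i
  simp only [LG.ram]
  rw [Real.rpow_inv_natCast_pow (abs_nonneg _) hm]
  by_cases h : 0 ≤ z i
  · simp [sg, h, abs_of_nonneg h]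
  · simp [sg, h, abs_of_neg (not_le.1 h)]

/-- blow-up charts -/
def bl (k : Fin n) : Option ℝ → (Fin n → ℝ) × ℝ → (Fin n → ℝ) × ℝ
  | some l, p => (p.1, p.1 k * (l + p.2))
  | none, p => (Function.update p.1 k (p.1 k * p.2), p.2)

lemma bl_zero (k : Fin n) (j : Option ℝ) : bl k j 0 = 0 := by
  cases j <;> simp [bl]

lemma Q.upd (hM : HM M) (k : Fin n) :
    Q M (fun p : (Fin n → ℝ) × ℝ => Function.update p.1 k (p.1 k * p.2)) := by
  refine (Q.pi hM (f := fun i (p : (Fin n → ℝ) × ℝ) => if i = k then p.1 k * p.2 else p.1 i)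
    fun i => ?_).congr (Eventually.of_forall fun p => ?_)
  · by_cases hi : i = k
    · simpa [hi] using ((Q.coord hM k).fst hM).mul hM (Q.y hM)
    · simpa [hi] using ((Q.coord hM i).fst hM)
  · ext i
    simp [Function.update_apply]

lemma Q.bl (hM : HM M) (k : Fin n) (j : Option ℝ) : Q M (LG.bl k j) := by
  have hy : Q M (fun p : (Fin n → ℝ) × ℝ => p.2) := Q.y hM
  have hx : Q M (fun p : (Fin n → ℝ) × ℝ => p.1) :=
    Q.clm hM (ContinuousLinearMap.fst ℝ (Fin n → ℝ) ℝ)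
  cases j with
  | some l =>
    exact hx.prodMk hM (((Q.coord hM k).fst hM).mul hM ((Q.const hM l).add hM hy))
  | none => exact (Q.upd hM k).prodMk hM hy

lemma Cov.bl (k : Fin n) : Cov (LG.bl k) := by
  classical
  intro V hV
  have : ∀ j, ∃ r > 0, ∀ p : (Fin n → ℝ) × ℝ, ‖p.1‖ < r → |p.2| < r → p ∈ V j := by
    intro j
    obtain ⟨r, hr, h⟩ := Metric.mem_nhds_iff.1 (hV j)
    refine ⟨r, hr, fun p h1 h2 => h ?_⟩
    rw [mem_ball_zero_iff, Prod.norm_def]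
    exact max_lt h1 h2
  choose r hr hrV using this
  set R := 2 / r none with hR
  have hr0 := hr none
  have hRp : 0 < R := by positivity
  obtain ⟨T0, hTc⟩ := (isCompact_Icc (a := -R) (b := R)).elim_nhds_subcover'
    (fun l _ => Metric.ball l (r (some l))) (fun l _ => Metric.ball_mem_nhds _ (hr _))
  let T : Finset (Option ℝ) := insert none (T0.image fun l => some l.1)
  obtain ⟨δ, hδ, hδr⟩ : ∃ δ > 0, ∀ j ∈ T, δ ≤ r j := by
    have hne : T.Nonempty := ⟨none, by simp [T]⟩
    refine ⟨T.inf' hne r, ?_, fun j hj => Finset.inf'_le _ hj⟩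
    rw [gt_iff_lt, Finset.lt_inf'_iff]
    exact fun j _ => hr j
  refine ⟨T, ?_⟩
  filter_upwards [Metric.ball_mem_nhds (0 : (Fin n → ℝ) × ℝ) hδ] with p hp
  rw [mem_ball_zero_iff, Prod.norm_def, max_lt_iff, Real.norm_eq_abs] at hp
  obtain ⟨hp1, hp2⟩ := hp
  simp only [mem_iUnion]
  by_cases hc : |p.2| ≤ R * |p.1 k|
  · have hq : p.1 k * (p.2 / p.1 k) = p.2 := by
      by_cases hk : p.1 k = 0
      · rw [hk, abs_zero, mul_zero] at hc
        rw [hk, abs_nonpos_iff.1 hc]; simp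
      · field_simp
    have hqR : p.2 / p.1 k ∈ Icc (-R) R := by
      rw [mem_Icc, ← abs_le, abs_div]
      exact div_le_of_le_mul₀ (abs_nonneg _) hRp.le hc
    obtain ⟨l, hl⟩ := mem_iUnion.1 (hTc hqR)
    obtain ⟨hlT, hl⟩ := mem_iUnion.1 hl
    have hmem : (some l.1 : Option ℝ) ∈ T := by
      simp only [T, Finset.mem_insert, Finset.mem_image]
      exact Or.inr ⟨l, hlT, rfl⟩
    refine ⟨some l.1, hmem, (p.1, p.2 / p.1 k - l.1), hrV _ _ (hp1.trans_le (hδr _ hmem)) ?_, ?_⟩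
    · simpa [Real.dist_eq] using hl
    · simp only [LG.bl]
      rw [show l.1 + (p.2 / p.1 k - l.1) = p.2 / p.1 k by ring, hq]
  · push Not at hc
    have hmem : (none : Option ℝ) ∈ T := by simp [T]
    have hy : 0 < |p.2| := lt_of_le_of_lt (by positivity) hc
    have hy0 : p.2 ≠ 0 := abs_pos.1 hy
    have hq : |p.1 k / p.2| < r none := by
      rw [abs_div, div_lt_iff₀ hy]
      rw [hR, div_mul_eq_mul_div, div_lt_iff₀ hr0] at hc
      nlinarith [abs_nonneg (p.1 k)]
    refine ⟨none, hmem, (Function.update p.1 k (p.1 k / p.2), p.2),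
      hrV _ _ ?_ (hp2.trans_le (hδr _ hmem)), ?_⟩
    · rw [pi_norm_lt_iff hr0]
      intro i
      by_cases hi : i = k
      · subst hi; simpa only [Function.update_self, Real.norm_eq_abs] using hq
      · simp only [Function.update_of_ne hi]
        exact (norm_le_pi_norm p.1 i).trans_lt (hp1.trans_le (hδr _ hmem))
    · simp only [LG.bl, Function.update_self, Function.update_idem]
      rw [div_mul_cancel₀ _ hy0, Function.update_eq_self]

lemma mon_upd (γ : Fin n → ℕ) (k : Fin n) (x : Fin n → ℝ) (y : ℝ) :
    mon γ (Function.update x k (x k * y)) = mon γ x * y ^ γ k := by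
  classical
  have h : ∀ i, Function.update x k (x k * y) i ^ γ i =
      x i ^ γ i * (if i = k then y ^ γ k else 1) := by
    intro i
    by_cases hi : i = k
    · subst hi; simp [mul_pow]
    · simp [hi]
  simp only [mon]
  rw [Finset.prod_congr rfl fun i _ => h i, Finset.prod_mul_distrib]
  simp

lemma dv_one_iter (h : ℝ → ℝ) (k : ℕ) : (dv (1 : ℝ))^[k] h = deriv^[k] h := by
  have : (dv (1 : ℝ)) = deriv := by
    ext h x
    simp [dv]
  rw [this]

lemma deriv_iter_poly (p : Polynomial ℝ) (k : ℕ) :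
    deriv^[k] (fun x => p.eval x) = fun x => (Polynomial.derivative^[k] p).eval x := by
  induction k with
  | zero => rfl
  | succ k ih =>
    rw [Function.iterate_succ_apply', Function.iterate_succ_apply', ih]
    ext x
    simp

/-- the `d-1`-st derivative of the restriction to the `y`-axis for the chart `l ≠ 0`. -/
lemma dy_poly (hM : HM M) {d : ℕ} {f : E × ℝ → ℝ} (hf : Q M f) (c : ℕ → ℝ) (u l : ℝ)
    (h : ∀ᶠ t in 𝓝 (0 : ℝ), f (0, t) = ∑ i ∈ Finset.range d, c i * (l + t) ^ i + (l + t) ^ (d + 1) * u) :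
    dy^[d] f 0 = ((d + 1).descFactorial d : ℝ) * l * u := by
  have h1 := (dv_iter_comp (ContinuousLinearMap.inr ℝ E ℝ) (1 : ℝ) hM hf d).self_of_nhds
  simp only [ContinuousLinearMap.inr_apply] at h1
  have e0 : ((0 : E), (0 : ℝ)) = 0 := rfl
  rw [e0] at h1
  rw [← h1, (dv_iter_congr h 1 d).self_of_nhds, dv_one_iter]
  let p : Polynomial ℝ := ∑ i ∈ Finset.range d, Polynomial.C (c i) * Polynomial.X ^ i
  let q : Polynomial ℝ := p + Polynomial.C u * Polynomial.X ^ (d + 1)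
  have e1 : (fun t : ℝ => ∑ i ∈ Finset.range d, c i * (l + t) ^ i + (l + t) ^ (d + 1) * u) =
      fun t => (fun x => q.eval x) (l + t) := by
    ext t
    simp [q, p, Polynomial.eval_finsetSum, mul_comm u]
  rw [e1, ← iteratedDeriv_eq_iterate, iteratedDeriv_comp_const_add d (fun x => q.eval x) l]
  simp only [add_zero]
  rw [iteratedDeriv_eq_iterate, deriv_iter_poly]
  have e2 : Polynomial.derivative^[d] p = 0 := by
    rcases Nat.eq_zero_or_pos d with rfl | hd
    · simp [p]
    · refine Polynomial.iterate_derivative_eq_zero ?_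
      refine lt_of_le_of_lt (Polynomial.natDegree_sum_le_of_forall_le (n := d - 1) _ _ fun i hi => ?_) 
        (by omega)
      refine (Polynomial.natDegree_C_mul_X_pow_le _ _).trans ?_
      simp at hi; omega
  simp only [q]
  rw [iterate_map_add, e2, Polynomial.iterate_derivative_C_mul,
    Polynomial.iterate_derivative_X_pow_eq_natCast_mul]
  simp
  ring

end LG


namespace LG

open Filter Topology Set
open scoped ContDiff Nat

set_option linter.unusedSectionVars false

variable {M : ℕ → ℝ} {n : ℕ}

/-- the statement to be proved by induction on the order `d` in `y` -/
def DD (M : ℕ → ℝ) (n d : ℕ) : Prop :=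
  ∀ (b : (Fin n → ℝ) → ℝ) (F : (Fin n → ℝ) × ℝ → ℝ), Q M b → (¬ ∀ᶠ x in 𝓝 0, b x = 0) → Q M F →
    dy^[d] F 0 ≠ 0 → Res M (NC' M) (fun p => b p.1 * F p)

/-- the prepared form -/
def GF (d : ℕ) (α β : Fin n → ℕ) (b : (Fin n → ℝ) → ℝ) (c : ℕ → (Fin n → ℝ) → ℝ)
    (u : (Fin n → ℝ) × ℝ → ℝ) (p : (Fin n → ℝ) × ℝ) : ℝ :=
  mon β p.1 * b p.1 *
    (∑ i ∈ Finset.range d, mon ((d - i) • α) p.1 * c i p.1 * p.2 ^ i + p.2 ^ d * u p)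

lemma smul_ne {α : Fin n → ℕ} (hα : α ≠ 0) {k : ℕ} (hk : k ≠ 0) : k • α ≠ 0 := by
  obtain ⟨i, hi⟩ := Function.ne_iff.1 hα
  refine Function.ne_iff.2 ⟨i, ?_⟩
  simpa using ⟨hk, hi⟩

set_option maxHeartbeats 1000000 in
lemma claimB (hM : HQ M) (d : ℕ) (hD : ∀ j < d, DD M n j) (s : ℕ) :
    ∀ (α : Fin n → ℕ) (_ : ∑ i, α i = s) (β : Fin n → ℕ) (b : (Fin n → ℝ) → ℝ)
      (c : ℕ → (Fin n → ℝ) → ℝ) (u : (Fin n → ℝ) × ℝ → ℝ) (_ : Q M b) (_ : b 0 ≠ 0)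
      (_ : ∀ i, Q M (c i)) (_ : Q M u) (_ : u 0 ≠ 0) (i0 : ℕ) (_ : i0 < d) (_ : c i0 0 ≠ 0)
      (_ : ∀ i, i + 1 = d → ∀ᶠ x in 𝓝 0, c i x = 0),
      Res M (NC' M) (GF d α β b c u) := by
  have hM' := hM.toHM
  induction s with
  | zero =>
    intro α hα β b c u hb hb0 hc hu hu0 i0 hi0 hci0 hcd
    have hα0 : α = 0 := by
      ext i
      have := Finset.sum_eq_zero_iff.1 hα i (Finset.mem_univ i)
      simpa using this
    subst hα0
    have hF : Q M (fun p : (Fin n → ℝ) × ℝ => ∑ i ∈ Finset.range d, c i p.1 * p.2 ^ i + p.2 ^ d * u p) :=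
      (Q.sum hM' _ fun i _ => ((hc i).fst hM').mul hM' ((Q.y hM').pow hM' i)).add hM'
        (((Q.y hM').pow hM' d).mul hM' hu)
    have h1 := (taylor_coeff hM' d hc hu (Eventually.of_forall fun p => rfl)).self_of_nhds.1 i0 hi0
    have h2 := hD i0 hi0 (fun x => mon β x * b x) _ ((Q.mon hM' β).mul hM' hb)
      (mon_mul_ne hb.continuousAt hb0) hF (by
        rw [show (0 : (Fin n → ℝ) × ℝ) = (0, 0) from rfl]
        rw [h1]
        exact mul_ne_zero (by positivity) hci0)
    refine h2.congr NC'.congr _ (Eventually.of_forall fun p => ?_)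
    simp [GF, mon_zero]
  | succ s ih =>
    intro α hα β b c u hb hb0 hc hu hu0 i0 hi0 hci0 hcd
    obtain ⟨k, hk⟩ : ∃ i, α i ≠ 0 := by
      by_contra hcon
      push Not at hcon
      simp [hcon] at hα
    classical
    have hα' := sub_single hk
    set α' := α - Pi.single k 1 with hα'd
    have hs : ∑ i, α' i = s := by
      have : ∑ j, α j = ∑ j, α' j + 1 := by
        conv_lhs => rw [hα']
        simp [Finset.sum_add_distrib]
      omega
    have hαne : α ≠ 0 := fun h => hk (by rw [h]; rfl)
    have hy : Q M (fun p : (Fin n → ℝ) × ℝ => p.2) := Q.y hM'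
    refine .step (bl k) (Q.bl hM' k) (bl_zero k) (Cov.bl k) _ fun j => ?_
    have hub : Q M (fun p => u (bl k j p)) := hu.comp hM' (Q.bl hM' k j) (bl_zero k j)
    have hub0 : u (bl k j 0) ≠ 0 := by rwa [bl_zero]
    cases j with
    | none =>
      refine .base _ ?_
      have hupd0 : Function.update (0 : Fin n → ℝ) k ((0 : Fin n → ℝ) k * 0) = 0 := by simp
      have hbx : Q M (fun p : (Fin n → ℝ) × ℝ => b (Function.update p.1 k (p.1 k * p.2))) :=
        hb.comp hM' (Q.upd hM' k) (by simp)
      have hcx : ∀ i, Q M (fun p : (Fin n → ℝ) × ℝ => c i (Function.update p.1 k (p.1 k * p.2))) :=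
        fun i => (hc i).comp hM' (Q.upd hM' k) (by simp)
      refine ⟨β, β k + d, fun p => b (Function.update p.1 k (p.1 k * p.2)) *
        (∑ i ∈ Finset.range d, mon ((d - i) • α) p.1 * p.2 ^ ((d - i) * (α k - 1)) *
          c i (Function.update p.1 k (p.1 k * p.2)) + u (bl k none p)), ?_, ?_, ?_⟩
      · exact hbx.mul hM' ((Q.sum hM' _ fun i _ => (((Q.mon hM' _).fst hM').mul hM'
          (hy.pow hM' _)).mul hM' (hcx i)).add hM' hub)
      · refine mul_ne_zero (by simpa using hb0) ?_
        rw [Finset.sum_eq_zero, zero_add]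
        · exact hub0
        · intro i hi
          rw [Finset.mem_range] at hi
          rw [Prod.fst_zero, mon_zero_ne (smul_ne hαne (by omega)), zero_mul, zero_mul]
      · refine Eventually.of_forall fun p => ?_
        simp only [GF, bl]
        have e : ∀ i ∈ Finset.range d, mon ((d - i) • α) (Function.update p.1 k (p.1 k * p.2)) *
            c i (Function.update p.1 k (p.1 k * p.2)) * p.2 ^ i =
            p.2 ^ d * (mon ((d - i) • α) p.1 * p.2 ^ ((d - i) * (α k - 1)) *
              c i (Function.update p.1 k (p.1 k * p.2))) := by
          intro i hi
          rw [Finset.mem_range] at hi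
          rw [mon_upd]
          have e1 : p.2 ^ ((d - i) • α) k * p.2 ^ i = p.2 ^ d * p.2 ^ ((d - i) * (α k - 1)) := by
            rw [← pow_add, ← pow_add]
            congr 1
            simp only [Pi.smul_apply, smul_eq_mul]
            obtain ⟨a, ha⟩ : ∃ a, α k = a + 1 := ⟨α k - 1, by omega⟩
            obtain ⟨m, hm⟩ : ∃ m, d = i + m := ⟨d - i, by omega⟩
            rw [ha, hm]
            simp only [Nat.add_sub_cancel_left, Nat.add_sub_cancel]
            ring
          linear_combination (mon ((d - i) • α) p.1 *
              c i (Function.update p.1 k (p.1 k * p.2))) * e1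
        rw [Finset.sum_congr rfl e, ← Finset.mul_sum, mon_upd, pow_add]
        ring
    | some l =>
      have key : ∀ p, GF d α β b c u (bl k (some l) p) =
          mon (β + Pi.single k d) p.1 * b p.1 * (∑ i ∈ Finset.range d,
            mon ((d - i) • α') p.1 * c i p.1 * (l + p.2) ^ i + (l + p.2) ^ d * u (bl k (some l) p)) := by
        intro p
        simp only [GF, bl]
        have e : ∀ i ∈ Finset.range d, mon ((d - i) • α) p.1 * c i p.1 * (p.1 k * (l + p.2)) ^ i =
            p.1 k ^ d * (mon ((d - i) • α') p.1 * c i p.1 * (l + p.2) ^ i) := by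
          intro i hi
          rw [Finset.mem_range] at hi
          have e1 : p.1 k ^ (d - i) * p.1 k ^ i = p.1 k ^ d := by
            rw [← pow_add]; congr 1; omega
          have e2 : mon ((d - i) • α) p.1 = mon ((d - i) • α') p.1 * p.1 k ^ (d - i) := by
            conv_lhs => rw [hα']
            rw [mon_smul, mon_smul, mon_add, mon_single, pow_one, mul_pow]
          rw [e2, mul_pow]
          linear_combination (mon ((d - i) • α') p.1 * c i p.1 * (l + p.2) ^ i) * e1
        rw [Finset.sum_congr rfl e, ← Finset.mul_sum, mon_add, mon_single, mul_pow]
        ring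
      have hH : Q M (fun p : (Fin n → ℝ) × ℝ => ∑ i ∈ Finset.range d,
            mon ((d - i) • α') p.1 * c i p.1 * (l + p.2) ^ i +
              (l + p.2) ^ d * u (bl k (some l) p)) := by
        have hly := (Q.const (E := (Fin n → ℝ) × ℝ) hM' l).add hM' hy
        exact (Q.sum hM' _ fun i _ => (((Q.mon hM' _).fst hM').mul hM' ((hc i).fst hM')).mul hM'
          (hly.pow hM' i)).add hM' ((hly.pow hM' d).mul hM' hub)
      by_cases hl : l = 0
      · subst hl
        refine (ih α' hs (β + Pi.single k d) b c (fun p => u (bl k (some 0) p)) hb hb0 hc hub hub0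
          i0 hi0 hci0 hcd).congr NC'.congr _ (Eventually.of_forall fun p => ?_)
        simp only []
        rw [key p]
        simp [GF]
      by_cases hα0 : α' = 0
      · obtain ⟨e, rfl⟩ : ∃ e, d = e + 1 := ⟨d - 1, by omega⟩
        have h2 := hD e (by omega) (fun x => mon (β + Pi.single k (e + 1)) x * b x) _
          ((Q.mon hM' _).mul hM' hb) (mon_mul_ne hb.continuousAt hb0) hH
        have e3 : (fun p => GF (e + 1) α β b c u (bl k (some l) p)) = _ := funext key
        rw [e3]
        refine h2 ?_
        rw [dy_poly hM' hH (fun i => c i 0) (u 0) l]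
        · refine mul_ne_zero (mul_ne_zero ?_ hl) hu0
          have : (e + 1).descFactorial e ≠ 0 := by
            rw [Ne, Nat.descFactorial_eq_zero_iff_lt]; omega
          exact_mod_cast this
        · refine Eventually.of_forall fun t => ?_
          have hce : c e 0 = 0 := (hcd e rfl).self_of_nhds
          simp only [hα0, smul_zero, mon_zero, one_mul]
          rw [Finset.sum_range_succ, hce]
          simp [bl]
          left; rfl
      · refine .base _ ⟨β + Pi.single k d, 0, fun p => b p.1 * (∑ i ∈ Finset.range d,
            mon ((d - i) • α') p.1 * c i p.1 * (l + p.2) ^ i +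
              (l + p.2) ^ d * u (bl k (some l) p)), (hb.fst hM').mul hM' hH, ?_,
              Eventually.of_forall fun p => ?_⟩
        · refine mul_ne_zero (by simpa using hb0) ?_
          rw [Finset.sum_eq_zero, zero_add]
          · refine mul_ne_zero (pow_ne_zero _ ?_) hub0
            simpa using hl
          · intro i hi
            rw [Finset.mem_range] at hi
            rw [Prod.fst_zero, mon_zero_ne (smul_ne hα0 (by omega)), zero_mul, zero_mul]
        · simp only []
          rw [key p]; ring

end LG


namespace LG

open Filter Topology Set
open scoped ContDiff Nat

set_option linter.unusedSectionVars false

variable {M : ℕ → ℝ} {n : ℕ}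

lemma fac_div {d i : ℕ} (h : i < d) : (d - i) * (d ! / (d - i)) = d ! :=
  Nat.mul_div_cancel' (Nat.dvd_factorial (by omega) (by omega))

/-- discriminant-like product -/
def Dsc (d : ℕ) (T : Finset ℕ) (R : Finset (ℕ × ℕ)) (b : (Fin n → ℝ) → ℝ)
    (c : ℕ → (Fin n → ℝ) → ℝ) (x : Fin n → ℝ) : ℝ :=
  b x * ((∏ i ∈ T, c i x) *
    ∏ q ∈ R, (c q.1 x ^ (d ! / (d - q.1)) - c q.2 x ^ (d ! / (d - q.2))))

lemma tend_fst0 : Tendsto (fun p : (Fin n → ℝ) × ℝ => p.1) (𝓝 0) (𝓝 0) :=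
  continuous_fst.tendsto' _ _ rfl

lemma claimC_base (hM : HQ M) (d : ℕ) (hD : ∀ j < d, DD M n j) (T : Finset ℕ)
    (R : Finset (ℕ × ℕ)) (hT : ∀ i ∈ T, i + 1 < d)
    (b : (Fin n → ℝ) → ℝ) (c : ℕ → (Fin n → ℝ) → ℝ) (u : (Fin n → ℝ) × ℝ → ℝ)
    (hb : Q M b) (hc : ∀ i, Q M (c i)) (hu : Q M u) (hu0 : u 0 ≠ 0)
    (hcT : ∀ i < d, i ∉ T → ∀ᶠ x in 𝓝 0, c i x = 0)
    (hR : ∀ i ∈ T, ∀ j ∈ T, (i, j) ∉ R →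
      ∀ᶠ x in 𝓝 0, c i x ^ (d ! / (d - i)) - c j x ^ (d ! / (d - j)) = 0)
    (h : NC M (Dsc d T R b c)) :
    Res M (NC' M) (fun p => b p.1 * (∑ i ∈ Finset.range d, c i p.1 * p.2 ^ i + p.2 ^ d * u p)) := by
  classical
  have hM' := hM.toHM
  have hQT : Q M (fun x => ∏ i ∈ T, c i x) := Q.prod hM' _ fun i _ => hc i
  have hQq : ∀ q : ℕ × ℕ, Q M (fun x => c q.1 x ^ (d ! / (d - q.1)) - c q.2 x ^ (d ! / (d - q.2))) :=
    fun q => ((hc _).pow hM' _).sub hM' ((hc _).pow hM' _)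
  have hQR : Q M (fun x => ∏ q ∈ R, (c q.1 x ^ (d ! / (d - q.1)) - c q.2 x ^ (d ! / (d - q.2)))) :=
    Q.prod hM' _ fun q _ => hQq q
  have nb : NC M b := NC.factor hM hb (hQT.mul hM' hQR) h
  have n1 : NC M (fun x => (∏ i ∈ T, c i x) *
    ∏ q ∈ R, (c q.1 x ^ (d ! / (d - q.1)) - c q.2 x ^ (d ! / (d - q.2)))) :=
    NC.factor hM (hQT.mul hM' hQR) hb (NC.congr _ _ (Eventually.of_forall fun x => by
      simp only [Dsc]; ring) h)
  have nT : NC M (fun x => ∏ i ∈ T, c i x) := NC.factor hM hQT hQR n1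
  have nR : NC M (fun x => ∏ q ∈ R, (c q.1 x ^ (d ! / (d - q.1)) - c q.2 x ^ (d ! / (d - q.2)))) :=
    NC.factor hM hQR hQT (NC.congr _ _ (Eventually.of_forall fun x => by
      simp only []; ring) n1)
  have nc : ∀ i ∈ T, NC M (c i) := fun i hi => NC.factor_prod hM T (fun i _ => hc i) nT i hi
  have nq : ∀ q ∈ R, NC M (fun x => c q.1 x ^ (d ! / (d - q.1)) - c q.2 x ^ (d ! / (d - q.2))) :=
    fun q hq => NC.factor_prod hM R (fun q _ => hQq q) nR q hq
  obtain ⟨β, w, hw, hw0, hbw⟩ := nb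
  have nc' : ∀ i, ∃ (a : Fin n → ℕ) (v : (Fin n → ℝ) → ℝ), Q M v ∧ (i ∈ T → v 0 ≠ 0 ∧
      ∀ᶠ x in 𝓝 0, c i x = mon a x * v x) := by
    intro i
    by_cases hi : i ∈ T
    · obtain ⟨a, v, h1, h2, h3⟩ := nc i hi
      exact ⟨a, v, h1, fun _ => ⟨h2, h3⟩⟩
    · exact ⟨0, fun _ => 0, Q.const hM' 0, fun h => absurd h hi⟩
  choose a v hv hcv using nc'
  rcases T.eq_empty_or_nonempty with hTe | hTn
  · refine .base _ ⟨β, d, fun p => w p.1 * u p, (hw.fst hM').mul hM' hu, mul_ne_zero hw0 hu0, ?_⟩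
    have h1 : ∀ᶠ x in 𝓝 (0 : Fin n → ℝ), ∀ i ∈ Finset.range d, c i x = 0 := by
      rw [Filter.eventually_all_finset]
      intro i hi
      exact hcT i (Finset.mem_range.1 hi) (by simp [hTe])
    filter_upwards [tend_fst0.eventually h1, tend_fst0.eventually hbw] with p h1 h2
    rw [Finset.sum_eq_zero (fun i hi => by rw [h1 i hi, zero_mul]), h2]
    ring
  let e : ℕ → ℕ := fun i => d ! / (d - i)
  have hpw : ∀ i ∈ T, ∀ᶠ x in 𝓝 0, c i x ^ e i = mon (e i • a i) x * v i x ^ e i := by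
    intro i hi
    filter_upwards [(hcv i hi).2] with x hx
    rw [hx, mul_pow, mon_smul]
  have hcomp : ∀ i ∈ T, ∀ j ∈ T, e i • a i ≤ e j • a j ∨ e j • a j ≤ e i • a i := by
    intro i hi j hj
    refine comparable hM (u := fun x => v i x ^ e i) (v := fun x => v j x ^ e j)
      ((hv i).pow hM' _) ((hv j).pow hM' _) (pow_ne_zero _ (hcv i hi).1) (pow_ne_zero _ (hcv j hj).1) ?_
    by_cases hij : (i, j) ∈ R
    · left
      refine NC.congr _ _ ?_ (nq _ hij)
      filter_upwards [hpw i hi, hpw j hj] with x h1 h2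
      rw [← h1, ← h2]
    · right
      filter_upwards [hR i hi j hj hij, hpw i hi, hpw j hj] with x h0 h1 h2
      rw [← h1, ← h2]
      exact h0
  obtain ⟨i0, hi0, hmin⟩ := T.exists_min_image (fun i => ∑ k, (e i • a i) k) hTn
  have hle : ∀ i ∈ T, e i0 • a i0 ≤ e i • a i := by
    intro i hi
    rcases hcomp i0 hi0 i hi with h1 | h1
    · exact h1
    · have h2 := hmin i hi
      have h3 : ∑ k, (e i • a i) k = ∑ k, (e i0 • a i0) k :=
        le_antisymm (Finset.sum_le_sum fun k _ => h1 k) h2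
      have h4 := (Finset.sum_eq_sum_iff_of_le (fun k _ => h1 k)).1 h3
      exact fun k => (h4 k (Finset.mem_univ k)).ge
  have hm : d ! ≠ 0 := Nat.factorial_ne_zero d
  let α := e i0 • a i0
  refine .step (fun (s : Fin n → Bool) (p : (Fin n → ℝ) × ℝ) => (ram (d !) s p.1, p.2))
    (fun s => ((Q.ram hM' _ s).fst hM').prodMk hM' (Q.y hM')) (fun s => ?_)
    (Cov.prod (Cov.ram hm)) _ fun s => ?_
  · simp [ram_zero hm]
  have hr0 : ram (d !) s (0 : Fin n → ℝ) = 0 := ram_zero hm s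
  have hrt : Tendsto (ram (d !) s) (𝓝 (0 : Fin n → ℝ)) (𝓝 0) := (Q.ram hM' _ s).tendsto hr0
  let c' : ℕ → (Fin n → ℝ) → ℝ := fun i => if i ∈ T then
    fun x => mon ((d - i) • (e i • a i - α)) x * (sgm (a i) s * v i (ram (d !) s x)) else fun _ => 0
  have hc' : ∀ i, Q M (c' i) := by
    intro i
    by_cases hi : i ∈ T
    · simp only [c', hi, if_true]
      exact (Q.mon hM' _).mul hM' ((Q.const hM' _).mul hM' ((hv i).comp hM' (Q.ram hM' _ s) hr0))
    · simp only [c', hi, if_false]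
      exact Q.const hM' 0
  have hur : Q M (fun p : (Fin n → ℝ) × ℝ => u (ram (d !) s p.1, p.2)) :=
    hu.comp hM' (((Q.ram hM' _ s).fst hM').prodMk hM' (Q.y hM')) (by simp [hr0])
  refine (claimB hM d hD _ α rfl ((d !) • β) (fun x => sgm β s * w (ram (d !) s x)) c'
    (fun p => u (ram (d !) s p.1, p.2)) ((Q.const hM' _).mul hM' (hw.comp hM' (Q.ram hM' _ s) hr0))
    ?_ hc' hur ?_ i0 (by have := hT i0 hi0; omega) ?_ ?_).congr NC'.congr _ ?_
  · rw [hr0]; exact mul_ne_zero (sgm_ne _ _) hw0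
  · simp only [Prod.fst_zero, Prod.snd_zero, hr0]; exact hu0
  · simp only [c', hi0, if_true]
    rw [show e i0 • a i0 - α = 0 from by ext k; simp [α], smul_zero, mon_zero, hr0, one_mul]
    exact mul_ne_zero (sgm_ne _ _) (hcv i0 hi0).1
  · intro i hi
    have : i ∉ T := fun h => by have := hT i h; omega
    simp [c', this]
  · have h1 : ∀ᶠ x in 𝓝 (0 : Fin n → ℝ), ∀ i ∈ Finset.range d,
        c i (ram (d !) s x) = mon ((d - i) • α) x * c' i x := by
      rw [Filter.eventually_all_finset]
      intro i hi
      rw [Finset.mem_range] at hi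
      by_cases hiT : i ∈ T
      · filter_upwards [hrt.eventually (hcv i hiT).2] with x hx
        simp only [c', hiT, if_true]
        rw [hx, mon_ram]
        have e1 : (d !) • a i = (d - i) • α + (d - i) • (e i • a i - α) := by
          rw [← smul_add]
          have : α + (e i • a i - α) = e i • a i := by
            ext k
            have : α k ≤ (e i • a i) k := hle i hiT k
            simp only [Pi.add_apply, Pi.sub_apply]
            omega
          rw [this, smul_smul]
          simp only [e]
          rw [fac_div hi]
        rw [e1, mon_add]
        ring
      · filter_upwards [hrt.eventually (hcT i hi hiT)] with x hx
        simp [c', hiT, hx]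
    filter_upwards [tend_fst0.eventually h1, (hrt.comp tend_fst0).eventually hbw] with p h1 h2
    simp only [GF, Function.comp] at h2 ⊢
    rw [h2, mon_ram]
    rw [Finset.sum_congr rfl fun i hi => by rw [← h1 i hi]]
    ring

lemma claimC (hM : HQ M) (d : ℕ) (hD : ∀ j < d, DD M n j) (T : Finset ℕ)
    (R : Finset (ℕ × ℕ)) (hT : ∀ i ∈ T, i + 1 < d) (f : (Fin n → ℝ) → ℝ) (hf : Res M (NC M) f) :
    ∀ (b : (Fin n → ℝ) → ℝ) (c : ℕ → (Fin n → ℝ) → ℝ) (u : (Fin n → ℝ) × ℝ → ℝ)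
    (_ : Q M b) (_ : ∀ i, Q M (c i)) (_ : Q M u) (_ : u 0 ≠ 0)
    (_ : ∀ i < d, i ∉ T → ∀ᶠ x in 𝓝 0, c i x = 0)
    (_ : ∀ i ∈ T, ∀ j ∈ T, (i, j) ∉ R →
      ∀ᶠ x in 𝓝 0, c i x ^ (d ! / (d - i)) - c j x ^ (d ! / (d - j)) = 0)
    (_ : f = Dsc d T R b c),
    Res M (NC' M) (fun p => b p.1 * (∑ i ∈ Finset.range d, c i p.1 * p.2 ^ i + p.2 ^ d * u p)) := by
  have hM' := hM.toHM
  induction hf with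
  | base f h =>
    intro b c u hb hc hu hu0 hcT hR hfe
    subst hfe
    exact claimC_base hM d hD T R hT b c u hb hc hu hu0 hcT hR h
  | step π hQ h0 hcov f h ih =>
    intro b c u hb hc hu hu0 hcT hR hfe
    have hQ2 := fun j => ((hQ j).fst hM').prodMk hM' (Q.y (E := Fin n → ℝ) hM')
    refine .step (fun j (p : (Fin n → ℝ) × ℝ) => (π j p.1, p.2)) hQ2 (fun j => by simp [h0])
      (Cov.prod hcov) _ fun j => ?_
    have ht := (hQ j).tendsto (h0 j)
    exact ih j (fun x => b (π j x)) (fun i x => c i (π j x)) (fun p => u (π j p.1, p.2))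
      (hb.comp hM' (hQ j) (h0 j)) (fun i => (hc i).comp hM' (hQ j) (h0 j))
      (hu.comp hM' (hQ2 j) (by simp [h0])) (by simp only [Prod.fst_zero, Prod.snd_zero, h0]; exact hu0)
      (fun i hi hiT => ht.eventually (hcT i hi hiT))
      (fun i hi k hk hik => ht.eventually (hR i hi k hk hik))
      (by subst hfe; rfl)

end LG


namespace LG

open Filter Topology Set
open scoped ContDiff Nat

set_option linter.unusedSectionVars false

variable {M : ℕ → ℝ} {n : ℕ}
variable {E F : Type} [NormedAddCommGroup E] [NormedSpace ℝ E]
  [NormedAddCommGroup F] [NormedSpace ℝ F]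

/-- shear -/
def shr (ph : E → ℝ) (p : E × ℝ) : E × ℝ := (p.1, p.2 + ph p.1)

lemma Q.shr (hM : HM M) {ph : E → ℝ} (h : Q M ph) : Q M (LG.shr ph) := by
  have hx : Q M (fun p : E × ℝ => p.1) := Q.clm hM (ContinuousLinearMap.fst ℝ E ℝ)
  exact hx.prodMk hM ((Q.y hM).add hM (h.fst hM))

lemma dy_shr (hM : HM M) {ph : E → ℝ} (h : Q M ph) (h0 : ph 0 = 0) {f : E × ℝ → ℝ} (hf : Q M f)
    (k : ℕ) : ∀ᶠ p in 𝓝 0, dy^[k] (fun p => f (shr ph p)) p = dy^[k] f (shr ph p) := by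
  have hs0 : shr ph 0 = 0 := by simp [shr, h0]
  have ht : Tendsto (shr ph) (𝓝 0) (𝓝 0) := (Q.shr hM h).tendsto hs0
  induction k with
  | zero => simp
  | succ k ih =>
    simp only [Function.iterate_succ_apply']
    have h1 := (hf.dv_iter hM ((0 : E), (1 : ℝ)) k).contDiffAt
    have tf : Tendsto (fun p : E × ℝ => p.1) (𝓝 0) (𝓝 0) := continuous_fst.tendsto' _ _ rfl
    filter_upwards [dv_congr ih ((0 : E), (1 : ℝ)), ih.eventually_nhds, ht.eventually h1,
      tf.eventually h.contDiffAt] with p hp hp0 hp1 hp2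
    have hpe : dy (dy^[k] (fun p => f (shr ph p))) p = dy (fun p => dy^[k] f (shr ph p)) p :=
      (dv_congr hp0 ((0 : E), (1 : ℝ))).self_of_nhds
    rw [hpe]
    have d1 : DifferentiableAt ℝ (dy^[k] f) (shr ph p) := hp1.differentiableAt (by simp)
    have d2 : HasFDerivAt ph (fderiv ℝ ph p.1) p.1 := (hp2.differentiableAt (by simp)).hasFDerivAt
    have d3 : HasFDerivAt (shr ph) ((ContinuousLinearMap.fst ℝ E ℝ).prod
        (ContinuousLinearMap.snd ℝ E ℝ + (fderiv ℝ ph p.1).comp (ContinuousLinearMap.fst ℝ E ℝ))) p :=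
      hasFDerivAt_fst.prodMk (hasFDerivAt_snd.add (d2.comp p hasFDerivAt_fst))
    have d4 := (d1.hasFDerivAt.comp p d3).fderiv
    simp only [dv]
    have e : (fun p => dy^[k] f (shr ph p)) = dy^[k] f ∘ shr ph := rfl
    rw [e, d4]
    simp

lemma ne_mul (hM : HQ M) {f g : E → ℝ} (hf : Q M f) (hg : Q M g) (h1 : ¬ ∀ᶠ x in 𝓝 0, f x = 0)
    (h2 : ¬ ∀ᶠ x in 𝓝 0, g x = 0) : ¬ ∀ᶠ x in 𝓝 0, f x * g x = 0 := fun h =>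
  (hf.mul_zero hM hg h).elim h1 h2

lemma ne_prod (hM : HQ M) {ι : Type} (s : Finset ι) {f : ι → E → ℝ} (hf : ∀ i ∈ s, Q M (f i))
    (h : ∀ i ∈ s, ¬ ∀ᶠ x in 𝓝 0, f i x = 0) : ¬ ∀ᶠ x in 𝓝 0, ∏ i ∈ s, f i x = 0 := by
  classical
  induction s using Finset.induction_on with
  | empty =>
    intro hh
    simpa using hh.self_of_nhds
  | insert a s ha ih =>
    simp only [Finset.prod_insert ha]
    refine ne_mul hM (hf a (by simp)) (Q.prod hM.toHM s fun i hi => hf i (by simp [hi]))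
      (h a (by simp)) (ih (fun i hi => hf i (by simp [hi])) fun i hi => h i (by simp [hi]))

/-- resolution statement in dimension `n` -/
def SS (M : ℕ → ℝ) (n : ℕ) : Prop :=
  ∀ f : (Fin n → ℝ) → ℝ, Q M f → (¬ ∀ᶠ x in 𝓝 0, f x = 0) → Res M (NC M) f

lemma DD_core (hM : HQ M) (hS : SS M n) (d : ℕ) (hD : ∀ j < d, DD M n j)
    (b : (Fin n → ℝ) → ℝ) (F : (Fin n → ℝ) × ℝ → ℝ) (hb : Q M b) (hb0 : ¬ ∀ᶠ x in 𝓝 0, b x = 0)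
    (hF : Q M F) (hd : dy^[d] F 0 ≠ 0)
    (hd1 : ∀ i, i + 1 = d → ∀ᶠ x in 𝓝 0, dy^[i] F (x, 0) = 0) :
    Res M (NC' M) (fun p => b p.1 * F p) := by
  classical
  have hM' := hM.toHM
  obtain ⟨c, u, hc, hu, hcu⟩ := hF.taylorY hM' d
  have ht := taylor_coeff hM' d hc hu hcu
  have hu0 : u 0 ≠ 0 := by
    intro h
    refine hd ?_
    have := ht.self_of_nhds.2
    rw [show ((0 : Fin n → ℝ), (0 : ℝ)) = 0 from rfl, h, mul_zero] at this
    exact this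
  let T := (Finset.range d).filter fun i => ¬ ∀ᶠ x in 𝓝 0, c i x = 0
  let R := (T ×ˢ T).filter fun q => ¬ ∀ᶠ x in 𝓝 0,
    c q.1 x ^ (d ! / (d - q.1)) - c q.2 x ^ (d ! / (d - q.2)) = 0
  have hQq : ∀ q : ℕ × ℕ, Q M (fun x => c q.1 x ^ (d ! / (d - q.1)) - c q.2 x ^ (d ! / (d - q.2))) :=
    fun q => ((hc _).pow hM' _).sub hM' ((hc _).pow hM' _)
  have hQT : Q M (fun x => ∏ i ∈ T, c i x) := Q.prod hM' _ fun i _ => hc i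
  have hQR : Q M (fun x => ∏ q ∈ R, (c q.1 x ^ (d ! / (d - q.1)) - c q.2 x ^ (d ! / (d - q.2)))) :=
    Q.prod hM' _ fun q _ => hQq q
  have hQ : Q M (Dsc d T R b c) := hb.mul hM' (hQT.mul hM' hQR)
  have hne : ¬ ∀ᶠ x in 𝓝 0, Dsc d T R b c x = 0 := by
    refine ne_mul hM hb (hQT.mul hM' hQR) hb0 (ne_mul hM hQT hQR ?_ ?_)
    · exact ne_prod hM T (fun i _ => hc i) fun i hi => (Finset.mem_filter.1 hi).2
    · exact ne_prod hM R (fun q _ => hQq q) fun q hq => (Finset.mem_filter.1 hq).2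
  have h := claimC hM d hD T R (fun i hi => ?_) _ (hS _ hQ hne) b c u hb hc hu hu0 (fun i hi hiT => ?_)
    (fun i hi j hj hij => ?_) rfl
  · refine h.congr NC'.congr _ ?_
    filter_upwards [hcu] with p hp
    rw [hp]
  · have hi' := Finset.mem_filter.1 hi
    have hid := Finset.mem_range.1 hi'.1
    by_contra hcon
    refine hi'.2 ?_
    filter_upwards [ht, hd1 i (by omega)] with x h1 h2
    have h3 := h1.1 i hid
    rw [h2] at h3
    have : (i ! : ℝ) ≠ 0 := by positivity
    exact (mul_eq_zero.1 h3.symm).resolve_left this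
  · by_contra hcon
    exact hiT (Finset.mem_filter.2 ⟨Finset.mem_range.2 hi, hcon⟩)
  · by_contra hcon
    exact hij (Finset.mem_filter.2 ⟨Finset.mem_product.2 ⟨hi, hj⟩, hcon⟩)

lemma DD_all (hM : HQ M) (hS : SS M n) (d : ℕ) : DD M n d := by
  have hM' := hM.toHM
  induction d using Nat.strong_induction_on with
  | _ d hD =>
    intro b F hb hb0 hF hd
    rcases d with _ | e
    · exact DD_core hM hS 0 hD b F hb hb0 hF hd (by simp)
    by_cases he : dy^[e] F 0 = 0
    · obtain ⟨ph, hph, hph0, hx⟩ := (hF.dv_iter hM' ((0 : Fin n → ℝ), (1 : ℝ)) e).implicit hM' he (by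
        rw [Function.iterate_succ_apply'] at hd
        exact hd)
      have hs0 : shr ph (0 : (Fin n → ℝ) × ℝ) = 0 := by simp [shr, hph0]
      refine Res.single (Q.shr hM' hph) hs0 (shr fun x => - ph x) ?_ ?_ ?_
      · exact (Q.shr hM' (hph.neg hM')).tendsto (by simp [shr, hph0])
      · exact Eventually.of_forall fun p => by simp [shr]
      · have hFs : Q M (fun p => F (shr ph p)) := hF.comp hM' (Q.shr hM' hph) hs0
        refine DD_core hM hS (e + 1) hD b (fun p => F (shr ph p)) hb hb0 hFs ?_ ?_
        · have := (dy_shr hM' hph hph0 hF (e + 1)).self_of_nhds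
          rw [this, hs0]
          exact hd
        · intro i hi
          obtain rfl : i = e := by omega
          have t : Tendsto (fun x : Fin n → ℝ => (x, (0 : ℝ))) (𝓝 0) (𝓝 0) :=
            (by fun_prop : Continuous (fun x : Fin n → ℝ => (x, (0 : ℝ)))).tendsto' _ _ rfl
          filter_upwards [t.eventually (dy_shr hM' hph hph0 hF i), hx] with x h1 h2
          rw [h1]
          simpa [shr] using h2
    · exact hD e (by omega) b F hb hb0 hF he

/-- coordinates on `ℝ^{n+1}` -/
noncomputable def spl (n : ℕ) : (Fin (n + 1) → ℝ) ≃L[ℝ] (Fin n → ℝ) × ℝ :=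
  ((Fin.consEquivL ℝ (fun _ : Fin (n + 1) => ℝ)).symm).trans
    (ContinuousLinearEquiv.prodComm ℝ ℝ (Fin n → ℝ))

lemma spl_fst (x : Fin (n + 1) → ℝ) (i : Fin n) : (spl n x).1 i = x i.succ := rfl
lemma spl_snd (x : Fin (n + 1) → ℝ) : (spl n x).2 = x 0 := rfl

lemma NC_of_NC' (hM : HM M) (f : (Fin n → ℝ) × ℝ → ℝ) (h : NC' M f) :
    NC M (fun x => f (spl n x)) := by
  obtain ⟨γ, k, u, hu, hu0, hx⟩ := h
  refine ⟨Fin.cons k γ, fun x => u (spl n x), hu.comp_clm hM (spl n).toContinuousLinearMap, by simpa using hu0, ?_⟩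
  have t : Tendsto (spl n) (𝓝 0) (𝓝 0) := (spl n).continuous.tendsto' _ _ (map_zero _)
  filter_upwards [t.eventually hx] with x hx
  rw [hx]
  have : mon (Fin.cons k γ) x = x 0 ^ k * mon γ (spl n x).1 := by
    simp only [mon, Fin.prod_univ_succ, Fin.cons_zero, Fin.cons_succ, spl_fst]
  rw [this, spl_snd]
  ring

lemma SS_all (hM : HQ M) (n : ℕ) : SS M n := by
  have hM' := hM.toHM
  induction n with
  | zero =>
    intro f hf hne
    refine .base _ ⟨0, f, hf, fun h0 => hne ?_,
      Eventually.of_forall fun x => by rw [mon_zero, one_mul]⟩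
    exact Eventually.of_forall fun x => by rw [Subsingleton.elim x 0, h0]
  | succ n ih =>
    intro f hf hne
    obtain ⟨v, d, hd⟩ := hf.exists_dv hM hne
    by_cases hf0 : f 0 = 0
    swap
    · exact .base _ ⟨0, f, hf, hf0, by simp [mon_zero]⟩
    have hv : v ≠ 0 := by
      rintro rfl
      rcases d with _ | d
      · exact hd hf0
      · rw [Function.iterate_succ_apply'] at hd
        simp [dv] at hd
    let e := (spl n).symm
    have he : e (0, 1) ≠ 0 := by
      intro h
      rw [ContinuousLinearEquiv.map_eq_zero_iff] at h
      simpa using congrArg Prod.snd h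
    obtain ⟨A, hA⟩ := SeparatingDual.exists_continuousLinearEquiv_apply_eq (R := ℝ) he hv
    have hfA : Q M (fun x => f (A x)) := hf.comp_clm hM' A.toContinuousLinearMap
    refine Res.single (π := A) (Q.clm hM' A.toContinuousLinearMap) (map_zero _) A.symm
      (A.symm.continuous.tendsto' _ _ (map_zero _)) (by simp) ?_
    have hG : Q M (fun p => f (A (e p))) := hfA.comp_clm hM' e.toContinuousLinearMap
    have hG0 : dy^[d] (fun p => f (A (e p))) 0 ≠ 0 := by
      have := (dv_iter_comp (A.toContinuousLinearMap.comp e.toContinuousLinearMap) ((0 : Fin n → ℝ), (1 : ℝ)) hM' hf d).self_of_nhds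
      simp only [ContinuousLinearMap.comp_apply, ContinuousLinearEquiv.coe_coe, hA, map_zero] at this
      rw [this]
      exact hd
    have h1 := DD_all hM ih d (fun _ => 1) _ (Q.const hM' 1) (by
      intro h; simpa using h.self_of_nhds) hG hG0
    have h2 := Res.transfer hM' (spl n) (NC_of_NC' hM') h1
    simpa [e] using h2

end LG


namespace LG

open Filter Topology Set
open scoped ContDiff Nat

set_option linter.unusedSectionVars false

variable {M : ℕ → ℝ} {n : ℕ}
variable {E F : Type} [NormedAddCommGroup E] [NormedSpace ℝ E]
  [NormedAddCommGroup F] [NormedSpace ℝ F]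

/-- gradient inequality germ -/
def GI (f : E → ℝ) : Prop :=
  ∃ C : ℝ, 0 < C ∧ ∃ μ : ℝ, 0 < μ ∧ μ ≤ 1 ∧ ∀ᶠ x in 𝓝 0, C * |f x| ^ (1 - μ) ≤ ‖fderiv ℝ f x‖

lemma exists_lower {J : Type} (T : Finset J) (h : J → ℝ) (hh : ∀ j, 0 < h j) :
    ∃ c : ℝ, 0 < c ∧ c ≤ 1 ∧ ∀ j ∈ T, c ≤ h j := by
  classical
  induction T using Finset.induction_on with
  | empty => exact ⟨1, one_pos, le_rfl, by simp⟩
  | insert a s ha ih =>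
    obtain ⟨c, h1, h2, h3⟩ := ih
    refine ⟨min c (h a), lt_min h1 (hh a), (min_le_left _ _).trans h2, ?_⟩
    intro j hj
    rcases Finset.mem_insert.1 hj with rfl | hj
    · exact min_le_right _ _
    · exact (min_le_left _ _).trans (h3 j hj)

lemma GI.of_zero {f : E → ℝ} (h : ∀ᶠ x in 𝓝 0, f x = 0) : GI f := by
  refine ⟨1, one_pos, 1 / 2, by norm_num, by norm_num, ?_⟩
  filter_upwards [h] with x hx
  rw [hx, abs_zero, Real.zero_rpow (by norm_num)]
  simp

lemma GI.of_NC (hM : HM M) {f : (Fin n → ℝ) → ℝ} (h : NC M f) (hf0 : f 0 = 0) : GI f := by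
  obtain ⟨γ, u, hu, hu0, hx⟩ := h
  have hγ : γ ≠ 0 := by
    rintro rfl
    have := hx.self_of_nhds
    rw [hf0, mon_zero, one_mul] at this
    exact hu0 this.symm
  obtain ⟨i1, hi1⟩ := Function.ne_iff.1 hγ
  let S : Finset (Fin n) := Finset.univ.filter fun i => γ i ≠ 0
  have hS : S.Nonempty := ⟨i1, by simpa [S] using hi1⟩
  let m := ∑ i, γ i
  let a := |u 0| / 2
  let B := 2 * |u 0|
  have hu0' : 0 < |u 0| := abs_pos.2 hu0
  have ha : 0 < a := by positivity
  have hB : 0 < B := by positivity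
  let μ : ℝ := 1 / ((m : ℝ) + 1)
  have hμ : 0 < μ := by positivity
  have hm1 : (1 : ℝ) ≤ m := by
    have : 1 ≤ m := by
      have h1 : γ i1 ≤ m := Finset.single_le_sum (f := γ) (fun _ _ => Nat.zero_le _) (Finset.mem_univ i1)
      have h2 : γ i1 ≠ 0 := hi1
      omega
    exact_mod_cast this
  have hμ1 : μ < 1 := by
    rw [div_lt_one (by positivity)]; linarith
  refine ⟨a / (2 * B) * a ^ μ, by positivity, μ, hμ, hμ1.le, ?_⟩
  have hua : ∀ᶠ x in 𝓝 0, a < |u x| :=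
    hu.continuousAt.abs.eventually (lt_mem_nhds (by simp only [a]; linarith))
  have huB : ∀ᶠ x in 𝓝 0, |u x| < B :=
    hu.continuousAt.abs.eventually (gt_mem_nhds (by simp only [B]; linarith))
  have hdu : ∀ᶠ x in 𝓝 (0 : Fin n → ℝ), ‖x‖ * ‖fderiv ℝ u x‖ < a / 2 := by
    have hq := (hu.fderiv hM).continuousAt
    have : Tendsto (fun x : Fin n → ℝ => ‖x‖ * ‖fderiv ℝ u x‖) (𝓝 0) (𝓝 (‖(0 : Fin n → ℝ)‖ * ‖fderiv ℝ u 0‖)) :=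
      (continuous_norm.tendsto _).mul hq.norm
    rw [norm_zero, zero_mul] at this
    exact this.eventually (gt_mem_nhds (by positivity))
  have h1 : ∀ᶠ x in 𝓝 (0 : Fin n → ℝ), ‖x‖ < 1 := by
    filter_upwards [Metric.ball_mem_nhds (0 : Fin n → ℝ) one_pos] with x hx
    simpa using hx
  filter_upwards [hx.eventually_nhds, hua, huB, hdu, h1, hu.contDiffAt] with x hx hua huB hdu h1 hcd
  have hfx := hx.self_of_nhds
  have hmu : 1 - μ ≠ 0 := by linarith
  by_cases hfz : f x = 0
  · rw [hfz, abs_zero, Real.zero_rpow hmu, mul_zero]; positivity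
  obtain ⟨i, hiS, hmin⟩ := S.exists_min_image (fun i => |x i|) hS
  have hγi : γ i ≠ 0 := (Finset.mem_filter.1 hiS).2
  have hxi : x i ≠ 0 := by
    intro h
    rw [hfx, mon_eq_zero i hγi h, zero_mul] at hfz
    exact hfz rfl
  classical
  -- derivative along the ray
  let p : ℝ → Fin n → ℝ := fun y => Function.update x i (x i * y)
  have hp1 : p 1 = x := by simp [p]
  have hpd : HasDerivAt p (x i • Pi.single i (1 : ℝ)) 1 := by
    rw [hasDerivAt_pi]
    intro j
    by_cases hj : j = i
    · subst hj
      simpa [p] using (hasDerivAt_id (1 : ℝ)).const_mul (x j)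
    · simpa [p, hj] using hasDerivAt_const (1 : ℝ) (x j)
  have dfu : DifferentiableAt ℝ u x := hcd.differentiableAt (by simp)
  have dmon : DifferentiableAt ℝ (mon γ) x := by
    unfold mon; fun_prop
  have dff : DifferentiableAt ℝ f x := (dmon.mul dfu).congr_of_eventuallyEq hx
  have e1 : HasDerivAt (fun y => f (p y)) (fderiv ℝ f x (x i • Pi.single i (1 : ℝ))) 1 := by
    have := dff.hasFDerivAt
    rw [← hp1] at this
    have := this.comp_hasDerivAt 1 hpd
    rwa [hp1] at this
  have e2 : HasDerivAt (fun y => u (p y)) (fderiv ℝ u x (x i • Pi.single i (1 : ℝ))) 1 := by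
    have := dfu.hasFDerivAt
    rw [← hp1] at this
    have := this.comp_hasDerivAt 1 hpd
    rwa [hp1] at this
  have e3 : HasDerivAt (fun y => mon γ x * y ^ γ i * u (p y))
      (mon γ x * (γ i * 1 ^ (γ i - 1)) * u (p 1) +
        mon γ x * 1 ^ γ i * fderiv ℝ u x (x i • Pi.single i (1 : ℝ))) 1 :=
    ((hasDerivAt_pow (γ i) (1 : ℝ)).const_mul (mon γ x)).mul e2
  have e4 : (fun y => f (p y)) =ᶠ[𝓝 1] fun y => mon γ x * y ^ γ i * u (p y) := by
    have tp : Tendsto p (𝓝 1) (𝓝 x) := by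
      have := hpd.continuousAt.tendsto; rwa [hp1] at this
    filter_upwards [tp.eventually hx] with y hy
    rw [hy, mon_upd]
  have e5 := e1.unique (e3.congr_of_eventuallyEq e4)
  rw [hp1] at e5
  simp only [one_pow, mul_one] at e5
  -- estimates
  have ns : ‖(Pi.single i (1 : ℝ) : Fin n → ℝ)‖ = 1 := by
    rw [Pi.norm_single]; simp
  have b1 : |fderiv ℝ u x (x i • Pi.single i (1 : ℝ))| ≤ a / 2 := by
    refine ((fderiv ℝ u x).le_opNorm _).trans ?_
    rw [norm_smul, ns, mul_one]
    have := norm_le_pi_norm x i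
    nlinarith [norm_nonneg (fderiv ℝ u x)]
  have b2 : |fderiv ℝ f x (x i • Pi.single i (1 : ℝ))| ≤ |x i| * ‖fderiv ℝ f x‖ := by
    refine ((fderiv ℝ f x).le_opNorm _).trans ?_
    rw [norm_smul, ns, mul_one, Real.norm_eq_abs, mul_comm]
  have b3 : |mon γ x| * (a / 2) ≤ |fderiv ℝ f x (x i • Pi.single i (1 : ℝ))| := by
    rw [e5]
    have : mon γ x * γ i * u x + mon γ x * fderiv ℝ u x (x i • Pi.single i (1 : ℝ)) =
      mon γ x * (γ i * u x + fderiv ℝ u x (x i • Pi.single i (1 : ℝ))) := by ring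
    rw [this, abs_mul]
    refine mul_le_mul_of_nonneg_left ?_ (abs_nonneg _)
    have h2 : a ≤ |(γ i : ℝ) * u x| := by
      rw [abs_mul, abs_of_nonneg (Nat.cast_nonneg _)]
      have : (1 : ℝ) ≤ γ i := by exact_mod_cast Nat.one_le_iff_ne_zero.2 hγi
      nlinarith
    have h3 := abs_sub_abs_le_abs_sub ((γ i : ℝ) * u x) (-(fderiv ℝ u x (x i • Pi.single i (1 : ℝ))))
    rw [abs_neg, sub_neg_eq_add] at h3
    linarith
  have hxi1 : |x i| ≤ 1 := (norm_le_pi_norm x i).trans h1.le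
  have b4 : |x i| ^ (m + 1) ≤ |mon γ x| := by
    have : |x i| ^ m ≤ |mon γ x| := by
      rw [mon, Finset.abs_prod, ← Finset.prod_pow_eq_pow_sum]
      refine Finset.prod_le_prod (fun _ _ => by positivity) fun j _ => ?_
      rw [abs_pow]
      by_cases hj : γ j = 0
      · simp [hj]
      · exact pow_le_pow_left₀ (abs_nonneg _) (hmin j (by simpa [S] using hj)) _
    refine le_trans ?_ this
    exact pow_le_pow_of_le_one (abs_nonneg _) hxi1 (by omega)
  have hfa : |f x| = |mon γ x| * |u x| := by rw [hfx, abs_mul]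
  have hfp : 0 < |f x| := abs_pos.2 hfz
  have b5 : |x i| ^ (m + 1) ≤ |f x| / a := by
    rw [le_div_iff₀ ha, hfa]
    exact mul_le_mul b4 hua.le ha.le (abs_nonneg _)
  have b6 : |x i| ≤ (|f x| / a) ^ μ := by
    have h2 := Real.rpow_le_rpow (by positivity) b5 hμ.le
    have h3 : (|x i| ^ (m + 1)) ^ μ = |x i| := by
      have : μ = ((m + 1 : ℕ) : ℝ)⁻¹ := by simp [μ]
      rw [this]
      exact Real.pow_rpow_inv_natCast (abs_nonneg _) (by omega)
    rwa [h3] at h2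
  have b7 : a / (2 * B) * |f x| ≤ |mon γ x| * (a / 2) := by
    rw [hfa, div_mul_eq_mul_div, div_le_iff₀ (by positivity)]
    nlinarith [mul_le_mul_of_nonneg_left huB.le (mul_nonneg ha.le (abs_nonneg (mon γ x)))]
  have b8 : a / (2 * B) * |f x| ≤ (|f x| / a) ^ μ * ‖fderiv ℝ f x‖ :=
    (b7.trans (b3.trans b2)).trans (mul_le_mul_of_nonneg_right b6 (norm_nonneg _))
  rw [Real.div_rpow hfp.le ha.le] at b8
  have e6 : |f x| = |f x| ^ (1 - μ) * |f x| ^ μ := by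
    rw [← Real.rpow_add hfp]; simp
  have hP : 0 < |f x| ^ μ := Real.rpow_pos_of_pos hfp _
  have hA : 0 < a ^ μ := Real.rpow_pos_of_pos ha _
  replace b8 := mul_le_mul_of_nonneg_right b8 hA.le
  rw [show |f x| ^ μ / a ^ μ * ‖fderiv ℝ f x‖ * a ^ μ = |f x| ^ μ * ‖fderiv ℝ f x‖ by
    field_simp] at b8
  rw [← mul_le_mul_iff_right₀ hP]
  calc |f x| ^ μ * (a / (2 * B) * a ^ μ * |f x| ^ (1 - μ))
      = a / (2 * B) * (|f x| ^ (1 - μ) * |f x| ^ μ) * a ^ μ := by ring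
    _ = a / (2 * B) * |f x| * a ^ μ := by rw [← e6]
    _ ≤ _ := b8

lemma GI.of_Res (hM : HM M) {f : (Fin n → ℝ) → ℝ} (h : Res M (NC M) f) :
    Q M f → f 0 = 0 → GI f := by
  induction h with
  | base f h => intro _ h0; exact GI.of_NC hM h h0
  | step π hQ h0 hcov f h ih =>
    rename_i J
    intro hf hf0
    have hG : ∀ j, GI (fun x => f (π j x)) := fun j =>
      ih j (hf.comp hM (hQ j) (h0 j)) (by simp [h0, hf0])
    choose C hC μ hμ hμ1 hG using hG
    let L : J → ℝ := fun j => ‖fderiv ℝ (π j) 0‖ + 1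
    have hL : ∀ j, 0 < L j := fun j => by positivity
    have hfs : ∀ᶠ z in 𝓝 0, |f z| < 1 :=
      hf.continuousAt.abs.eventually (gt_mem_nhds (by simp [hf0]))
    have key : ∀ j, ∀ᶠ x in 𝓝 0, |f (π j x)| < 1 ∧
        C j / L j * |f (π j x)| ^ (1 - μ j) ≤ ‖fderiv ℝ f (π j x)‖ := by
      intro j
      have ht := (hQ j).tendsto (h0 j)
      have hl : ∀ᶠ x in 𝓝 0, ‖fderiv ℝ (π j) x‖ < L j :=
        ((hQ j).fderiv hM).continuousAt.norm.eventually (gt_mem_nhds (by simp [L]))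
      filter_upwards [hG j, ht.eventually hfs, ht.eventually hf.contDiffAt, (hQ j).contDiffAt, hl]
        with x h1 h2 h3 h4 h5
      refine ⟨h2, ?_⟩
      have d1 : DifferentiableAt ℝ f (π j x) := h3.differentiableAt (by simp)
      have d2 : DifferentiableAt ℝ (π j) x := h4.differentiableAt (by simp)
      have e : fderiv ℝ (fun x => f (π j x)) x = (fderiv ℝ f (π j x)).comp (fderiv ℝ (π j) x) :=
        fderiv_comp x d1 d2
      rw [e] at h1
      have h6 := h1.trans ((fderiv ℝ f (π j x)).opNorm_comp_le _)
      rw [div_mul_eq_mul_div, div_le_iff₀ (hL j)]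
      exact h6.trans (mul_le_mul_of_nonneg_left h5.le (norm_nonneg _))
    obtain ⟨T, hT⟩ := hcov _ key
    obtain ⟨c, hc, hc1, hcT⟩ := exists_lower T (fun j => C j / L j) (fun j => div_pos (hC j) (hL j))
    obtain ⟨ν, hν, hν1, hνT⟩ := exists_lower T μ hμ
    refine ⟨c, hc, ν, hν, hν1, ?_⟩
    filter_upwards [hT] with z hz
    simp only [mem_iUnion] at hz
    obtain ⟨j, hj, x, ⟨hx1, hx2⟩, rfl⟩ := hz
    refine le_trans ?_ hx2
    refine mul_le_mul (hcT j hj) ?_ (by positivity) (div_pos (hC j) (hL j)).le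
    exact Real.rpow_le_rpow_of_exponent_ge' (abs_nonneg _) hx1.le (by linarith [hμ1 j])
      (by linarith [hνT j hj])

lemma GI_all (hM : HQ M) {f : (Fin n → ℝ) → ℝ} (hf : Q M f) (h0 : f 0 = 0) : GI f := by
  by_cases h : ∀ᶠ x in 𝓝 0, f x = 0
  · exact GI.of_zero h
  · exact GI.of_Res hM.toHM (SS_all hM n f hf h) hf h0

end LG


namespace LG

open Filter Topology Set
open scoped ContDiff Nat

set_option linter.unusedSectionVars false

variable {M : ℕ → ℝ} {N : ℕ}

lemma HQ_of (hpos : ∀ j, 0 < M j) (hmono : Monotone M) (hM0 : M 0 = 1)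
    (hlog : ∀ j : ℕ, M (j+1) / M j ≤ M (j+2) / M (j+1))
    (hqa : ∑' k : ℕ, ENNReal.ofReal (M k / (((k : ℝ) + 1) * M (k+1))) = ⊤)
    (hder : ∃ C : ℝ, ∀ j : ℕ, 1 ≤ j → (M (j+1) / M j) ^ ((1 : ℝ) / j) ≤ C) : HQ M := by
  have hr : Monotone fun j => M (j + 1) / M j := monotone_nat_of_le_succ hlog
  refine { pos := hpos, one_le := fun j => ?_, zero := hM0, mul_le := ?_, der := ?_, log := hlog, qa := ?_ }
  · rw [← hM0]; exact hmono (Nat.zero_le j)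
  · intro i j
    induction j with
    | zero => simp [hM0]
    | succ j ih =>
      have h1 : M (j + 1) / M j ≤ M (i + j + 1) / M (i + j) := hr (by omega : j ≤ i + j)
      rw [div_le_div_iff₀ (hpos _) (hpos _)] at h1
      have h2 := hpos j
      have h3 := hpos (i + j + 1)
      have h4 := hpos (j + 1)
      rw [← add_assoc]
      refine le_of_mul_le_mul_right ?_ h2
      calc M i * M (j + 1) * M j = M (j + 1) * (M i * M j) := by ring
        _ ≤ M (j + 1) * M (i + j) := mul_le_mul_of_nonneg_left ih h4.le
        _ ≤ _ := h1
  · obtain ⟨C, hC⟩ := hder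
    refine ⟨M 1 + 1, |C| + 1, by linarith [hpos 1], by positivity, fun j => ?_⟩
    rcases Nat.eq_zero_or_pos j with rfl | hj
    · simp [hM0]
    · have h1 := hC j hj
      have h0 : 0 ≤ M (j + 1) / M j := (div_pos (hpos _) (hpos _)).le
      have h2 : (M (j + 1) / M j) ^ ((1 : ℝ) / j) ≤ |C| + 1 := h1.trans (by linarith [le_abs_self C])
      have h3 := pow_le_pow_left₀ (Real.rpow_nonneg h0 _) h2 j
      rw [one_div, Real.rpow_inv_natCast_pow h0 (by omega), div_le_iff₀ (hpos j)] at h3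
      refine h3.trans ?_
      refine mul_le_mul_of_nonneg_right ?_ (hpos j).le
      have : 0 < (|C| + 1) ^ j := by positivity
      nlinarith [hpos 1]
  · intro h
    exact h.tsum_ofReal_ne_top hqa

/-- Euclidean space -/
abbrev Eu (N : ℕ) := EuclideanSpace ℝ (Fin N)

/-- iterated partial derivatives along a list -/
noncomputable def pdl (L : List (Fin N)) (f : Eu N → ℝ) : Eu N → ℝ := L.foldr pd f

lemma pdl_append (L L' : List (Fin N)) (f : Eu N → ℝ) : pdl (L ++ L') f = pdl L (pdl L' f) := by
  simp [pdl, List.foldr_append]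

lemma pdl_replicate (k : ℕ) (i : Fin N) (f : Eu N → ℝ) :
    pdl (List.replicate k i) f = (pd i)^[k] f := by
  induction k with
  | zero => rfl
  | succ k ih =>
    rw [Function.iterate_succ_apply', ← ih]; rfl

lemma foldr_eq_pdl (α : Fin N → ℕ) (f : Eu N → ℝ) (l : List (Fin N)) :
    l.foldr (fun i g => (pd i)^[α i] g) f = pdl (l.flatMap fun i => List.replicate (α i) i) f := by
  induction l with
  | nil => rfl
  | cons a l ih => rw [List.foldr_cons, ih, List.flatMap_cons, pdl_append, pdl_replicate]

lemma pd_eqOn {U : Set (Eu N)} (hU : IsOpen U) {f g : Eu N → ℝ} (h : EqOn f g U) (i : Fin N) :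
    EqOn (pd i f) (pd i g) U := by
  intro x hx
  have : f =ᶠ[𝓝 x] g := by filter_upwards [hU.mem_nhds hx] with y hy using h hy
  simp only [pd, this.fderiv_eq]

lemma pd_smooth {U : Set (Eu N)} {f : Eu N → ℝ} (hf : ∀ x ∈ U, ContDiffAt ℝ ∞ f x) (i : Fin N) :
    ∀ x ∈ U, ContDiffAt ℝ ∞ (pd i f) x := by
  intro x hx
  exact ((hf x hx).fderiv_right (m := ∞) (by simp)).clm_apply contDiffAt_const

lemma pdl_smooth {U : Set (Eu N)} {f : Eu N → ℝ} (hf : ∀ x ∈ U, ContDiffAt ℝ ∞ f x)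
    (L : List (Fin N)) : ∀ x ∈ U, ContDiffAt ℝ ∞ (pdl L f) x := by
  induction L with
  | nil => exact hf
  | cons a L ih => exact pd_smooth ih a

lemma pd_comm {U : Set (Eu N)} {f : Eu N → ℝ} (hf : ∀ x ∈ U, ContDiffAt ℝ ∞ f x) (i j : Fin N) :
    EqOn (pd i (pd j f)) (pd j (pd i f)) U := by
  intro x hx
  have h1 := hf x hx
  have hs : IsSymmSndFDerivAt ℝ f x := h1.isSymmSndFDerivAt
    (by simp only [minSmoothness_of_isRCLikeNormedField]; exact WithTop.coe_le_coe.2 (le_top : (2:ℕ∞) ≤ ⊤))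
  have h2 : DifferentiableAt ℝ (fderiv ℝ f) x :=
    (h1.fderiv_right (m := ∞) (by simp)).differentiableAt (by simp)
  have e : ∀ v w : Eu N, fderiv ℝ (fun y => fderiv ℝ f y v) x w = fderiv ℝ (fderiv ℝ f) x w v := by
    intro v w
    rw [fderiv_clm_apply h2 (differentiableAt_const v)]
    simp
  unfold pd
  rw [e, e]
  exact hs _ _

lemma pdl_perm {U : Set (Eu N)} (hU : IsOpen U) {f : Eu N → ℝ} (hf : ∀ x ∈ U, ContDiffAt ℝ ∞ f x)
    {L L' : List (Fin N)} (h : L.Perm L') : EqOn (pdl L f) (pdl L' f) U := by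
  induction h with
  | nil => exact fun _ _ => rfl
  | cons a _ ih => exact pd_eqOn hU ih a
  | swap a b l => exact pd_comm (pdl_smooth hf l) b a
  | trans _ _ h1 h2 => exact h1.trans h2

lemma pdl_iter {U : Set (Eu N)} (hU : IsOpen U) {f : Eu N → ℝ} (hf : ∀ x ∈ U, ContDiffAt ℝ ∞ f x)
    (m : ℕ) : ∀ (s : Fin m → Fin N), ∀ x ∈ U, iteratedFDeriv ℝ m f x
      (fun k => EuclideanSpace.single (s k) (1 : ℝ)) = pdl (List.ofFn s) f x := by
  induction m with
  | zero => intro s x hx; simp [pdl]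
  | succ m ih =>
    intro s x hx
    rw [iteratedFDeriv_succ_apply_left, List.ofFn_succ]
    have h1 : DifferentiableAt ℝ (iteratedFDeriv ℝ m f) x :=
      ((hf x hx).iteratedFDeriv_right (m := 1) (i := m) (by exact_mod_cast le_top)).differentiableAt
        (by simp)
    have h2 : (fun y => iteratedFDeriv ℝ m f y (fun k => EuclideanSpace.single (s k.succ) (1 : ℝ)))
        =ᶠ[𝓝 x] pdl (List.ofFn fun k => s k.succ) f := by
      filter_upwards [hU.mem_nhds hx] with y hy using ih _ y hy
    have h3 := h2.fderiv_eq (𝕜 := ℝ)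
    have h4 := (ContinuousMultilinearMap.apply ℝ (fun _ : Fin m => Eu N) ℝ
      (fun k => EuclideanSpace.single (s k.succ) (1 : ℝ))).hasFDerivAt.comp x h1.hasFDerivAt
    have h5 := h4.fderiv
    have h6 : pdl (s 0 :: List.ofFn fun k => s k.succ) f x =
      fderiv ℝ (pdl (List.ofFn fun k => s k.succ) f) x (EuclideanSpace.single (s 0) 1) := rfl
    rw [h6, ← h3]
    have h7 : (fun y => iteratedFDeriv ℝ m f y (fun k => EuclideanSpace.single (s k.succ) (1 : ℝ))) =
      ⇑(ContinuousMultilinearMap.apply ℝ (fun _ : Fin m => Eu N) ℝ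
      (fun k => EuclideanSpace.single (s k.succ) (1 : ℝ))) ∘ iteratedFDeriv ℝ m f := rfl
    rw [h7, h5]
    rfl

lemma perm_count (L : List (Fin N)) :
    L.Perm ((Finset.univ : Finset (Fin N)).toList.flatMap fun i => List.replicate (L.count i) i) := by
  rw [List.perm_iff_count]
  intro a
  rw [List.count_flatMap]
  have : (List.count a ∘ fun i => List.replicate (L.count i) i) =
      fun i => if i = a then L.count i else 0 := by
    ext i; simp [List.count_replicate]
  rw [this, Finset.sum_map_toList]
  simp

lemma mult_bound (m : ℕ) (T : ContinuousMultilinearMap ℝ (fun _ : Fin m => Eu N) ℝ) (c : ℝ)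
    (hc : 0 ≤ c)
    (h : ∀ s : Fin m → Fin N, |T (fun k => EuclideanSpace.single (s k) (1 : ℝ))| ≤ c) :
    ‖T‖ ≤ (N : ℝ) ^ m * c := by
  refine T.opNorm_le_bound (by positivity) fun v => ?_
  have hv : v = fun k => ∑ i : Fin N, (v k i) • (EuclideanSpace.single i (1 : ℝ) : Eu N) := by
    ext k j
    simp [Finset.sum_apply, Pi.single_apply]
  have e : T v = ∑ s : Fin m → Fin N, (∏ k, v k (s k)) •
      T (fun k => EuclideanSpace.single (s k) (1 : ℝ)) := by
    conv_lhs => rw [hv]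
    rw [T.map_sum]
    refine Finset.sum_congr rfl fun s _ => ?_
    rw [T.map_smul_univ]
  rw [e]
  refine (norm_sum_le _ _).trans ?_
  have : ∀ s ∈ (Finset.univ : Finset (Fin m → Fin N)), ‖(∏ k, v k (s k)) •
      T (fun k => EuclideanSpace.single (s k) (1 : ℝ))‖ ≤ (∏ k, ‖v k‖) * c := by
    intro s _
    rw [norm_smul, norm_prod]
    exact mul_le_mul (Finset.prod_le_prod (fun _ _ => norm_nonneg _)
      fun k _ => PiLp.norm_apply_le (v k) (s k)) (h s) (norm_nonneg _) (by positivity)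
  refine (Finset.sum_le_card_nsmul _ _ _ this).trans (le_of_eq ?_)
  simp
  ring

lemma Q_of_CRM (hM : HM M) {U : Set (Eu N)} (hU : IsOpen U) {f : Eu N → ℝ} (hf : CRM M U f)
    {a : Eu N} (ha : a ∈ U) : Q M (fun x => f (a + x)) := by
  obtain ⟨hs, hb⟩ := hf
  have hs' : ∀ x ∈ U, ContDiffAt ℝ ∞ f x := fun x hx => hs.contDiffAt (hU.mem_nhds hx)
  obtain ⟨r, hr, hrU⟩ := Metric.nhds_basis_closedBall.mem_iff.1 (hU.mem_nhds ha)
  obtain ⟨A, B, hA, hB, hAB⟩ := hb _ hrU (isCompact_closedBall a r)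
  refine ⟨A, ((N : ℝ) + 1) * B, hA, by positivity, ?_⟩
  have t : Tendsto (fun x : Eu N => a + x) (𝓝 0) (𝓝 a) :=
    (by fun_prop : Continuous fun x : Eu N => a + x).tendsto' _ _ (by simp)
  filter_upwards [t (Metric.closedBall_mem_nhds a hr)] with x hx
  have hxU := hrU hx
  refine ⟨(hs' _ hxU).comp x (by fun_prop), fun m => ?_⟩
  rw [iteratedFDeriv_comp_add_left]
  have hMm := hM.pos m
  refine (mult_bound m _ (A * B ^ m * ((m ! : ℝ) * M m)) (by positivity) fun s => ?_).trans ?_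
  · rw [pdl_iter hU hs' m s _ hxU]
    set L := List.ofFn s with hL
    have hLm : L.length = m := by simp [hL]
    rw [pdl_perm hU hs' (perm_count L) hxU, ← foldr_eq_pdl]
    have h1 := hAB _ hx (fun i => L.count i)
    have hsum : ∑ i, L.count i = m := by
      have := Multiset.sum_count_eq_card (s := (Finset.univ : Finset (Fin N))) (m := (L : Multiset (Fin N)))
        (by simp)
      simpa [hLm] using this
    rw [hsum] at h1
    have hp : (0 : ℝ) < ∏ i, ((L.count i)! : ℝ) := Finset.prod_pos fun i _ => by positivity
    rw [one_div, inv_mul_le_iff₀ hp] at h1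
    refine h1.trans ?_
    have h2 : (∏ i, ((L.count i)! : ℝ)) ≤ (m ! : ℝ) := by
      have := Nat.le_of_dvd (Nat.factorial_pos _)
        (Nat.prod_factorial_dvd_factorial_sum Finset.univ fun i => L.count i)
      rw [hsum] at this
      exact_mod_cast this
    calc _ ≤ (m ! : ℝ) * (A * B ^ m * M m) := mul_le_mul_of_nonneg_right h2 (by positivity)
      _ = _ := by ring
  · rw [mul_pow]
    have : (N : ℝ) ^ m ≤ ((N : ℝ) + 1) ^ m := pow_le_pow_left₀ (by positivity) (by linarith) _
    calc _ ≤ ((N : ℝ) + 1) ^ m * (A * B ^ m * ((m ! : ℝ) * M m)) :=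
          mul_le_mul_of_nonneg_right this (by positivity)
      _ = _ := by ring

lemma grad_norm (f : Eu N → ℝ) (x : Eu N) :
    ‖fderiv ℝ f x‖ ≤ ‖(EuclideanSpace.equiv (Fin N) ℝ).symm (fun i => pd i f x)‖ := by
  refine ContinuousLinearMap.opNorm_le_bound _ (norm_nonneg _) fun v => ?_
  have hv : v = ∑ i : Fin N, (v i) • (EuclideanSpace.single i (1 : ℝ) : Eu N) := by
    ext j
    simp [Finset.sum_apply, Pi.single_apply]
  have e : fderiv ℝ f x v =
      inner ℝ ((EuclideanSpace.equiv (Fin N) ℝ).symm (fun i => pd i f x)) v := by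
    conv_lhs => rw [hv]
    rw [map_sum]
    simp [PiLp.inner_apply, pd]
  rw [e]
  exact norm_inner_le_norm _ _

lemma rp_le {t H μ ν : ℝ} (ht : 0 ≤ t) (hH : 1 ≤ H) (htH : t ≤ H) (hν : 0 < ν) (hνμ : ν ≤ μ)
    (hμ : μ ≤ 1) : t ^ (1 - ν) ≤ H * t ^ (1 - μ) := by
  rcases le_or_gt t 1 with h | h
  · have h1 : t ^ (1 - ν) ≤ t ^ (1 - μ) :=
      Real.rpow_le_rpow_of_exponent_ge' ht h (by linarith) (by linarith)
    nlinarith [Real.rpow_nonneg ht (1 - μ)]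
  · have h1 : t ^ (1 - ν) ≤ t := by
      conv_rhs => rw [← Real.rpow_one t]
      exact Real.rpow_le_rpow_of_exponent_le h.le (by linarith)
    have h2 : 1 ≤ t ^ (1 - μ) := Real.one_le_rpow h.le (by linarith)
    nlinarith

lemma local_GI (hM : HQ M) {U : Set (Eu N)} (hU : IsOpen U) {f : Eu N → ℝ} (hf : CRM M U f)
    (hcrit : ∀ x ∈ U, (∀ i, pd i f x = 0) → f x = 0) {a : Eu N} (ha : a ∈ U) :
    ∃ C : ℝ, 0 < C ∧ ∃ μ : ℝ, 0 < μ ∧ μ ≤ 1 ∧ ∀ᶠ x in 𝓝 a, C * |f x| ^ (1 - μ) ≤ ‖fderiv ℝ f x‖ := by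
  have hcd : ∀ x ∈ U, ContDiffAt ℝ ∞ f x := fun x hx => hf.1.contDiffAt (hU.mem_nhds hx)
  by_cases hfa : f a = 0
  · let e : (Fin N → ℝ) ≃L[ℝ] Eu N := (EuclideanSpace.equiv (Fin N) ℝ).symm
    have hq : Q M (fun x => f (a + e x)) :=
      (Q_of_CRM hM.toHM hU hf ha).comp_clm hM.toHM e.toContinuousLinearMap
    obtain ⟨C, hC, μ, hμ, hμ1, h⟩ := GI_all hM hq (by simp [hfa])
    let L := ‖e.toContinuousLinearMap‖ + 1
    have hL : 0 < L := by positivity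
    refine ⟨C / L, by positivity, μ, hμ, hμ1, ?_⟩
    have t : Tendsto (fun x : Eu N => e.symm (x - a)) (𝓝 a) (𝓝 0) :=
      (by fun_prop : Continuous fun x : Eu N => e.symm (x - a)).tendsto' _ _ (by simp)
    filter_upwards [t.eventually h, hU.mem_nhds ha] with x hx hxU
    have hxx : a + e (e.symm (x - a)) = x := by simp
    rw [hxx] at hx
    have d1 : HasFDerivAt f (fderiv ℝ f x) (a + e (e.symm (x - a))) := by
      rw [hxx]; exact ((hcd x hxU).differentiableAt (by simp)).hasFDerivAt
    have d2 : HasFDerivAt (fun y => a + e y) e.toContinuousLinearMap (e.symm (x - a)) :=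
      e.hasFDerivAt.const_add a
    have d3 : HasFDerivAt (fun y => f (a + e y)) ((fderiv ℝ f x).comp e.toContinuousLinearMap)
        (e.symm (x - a)) :=
      HasFDerivAt.comp (g := f) (f := fun y => a + e y) (e.symm (x - a)) d1 d2
    have d4 : fderiv ℝ (fun y => f (a + e y)) (e.symm (x - a)) =
      (fderiv ℝ f x).comp e.toContinuousLinearMap := d3.fderiv
    rw [d4] at hx
    rw [div_mul_eq_mul_div, div_le_iff₀ hL]
    refine hx.trans (((fderiv ℝ f x).opNorm_comp_le _).trans ?_)
    exact mul_le_mul_of_nonneg_left (by simp [L]) (norm_nonneg _)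
  · have hd : 0 < ‖fderiv ℝ f a‖ := by
      rw [norm_pos_iff]
      intro h
      exact hfa (hcrit a ha fun i => by simp [pd, h])
    refine ⟨‖fderiv ℝ f a‖ / 2, by positivity, 1, one_pos, le_rfl, ?_⟩
    have hc : ContinuousAt (fderiv ℝ f) a :=
      ((hcd a ha).fderiv_right (m := ∞) (by simp)).continuousAt
    filter_upwards [hc.norm.eventually (lt_mem_nhds (half_lt_self hd))] with x hx
    simpa using hx.le

end LG

/-- Łojasiewicz gradient inequality in the class `C^ℝ_M`. -/
theorem stmt13 {N : ℕ} (M : ℕ → ℝ)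
    (hpos : ∀ j, 0 < M j) (hmono : Monotone M) (hM0 : M 0 = 1)
    (hlog : ∀ j : ℕ, M (j+1) / M j ≤ M (j+2) / M (j+1))
    (hqa : ∑' k : ℕ, ENNReal.ofReal (M k / (((k : ℝ) + 1) * M (k+1))) = ⊤)
    (hder : ∃ C : ℝ, ∀ j : ℕ, 1 ≤ j → (M (j+1) / M j) ^ ((1 : ℝ) / j) ≤ C)
    (U : Set (EuclideanSpace ℝ (Fin N))) (hUopen : IsOpen U) (hUconn : IsConnected U)
    (f : EuclideanSpace ℝ (Fin N) → ℝ) (hf : CRM M U f)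
    (hcrit : ∀ x ∈ U, (∀ i, pd i f x = 0) → f x = 0)
    (K : Set (EuclideanSpace ℝ (Fin N))) (hKcpt : IsCompact K) (hKU : K ⊆ U) :
    ∃ C : ℝ, 0 < C ∧ ∃ μ : ℝ, 0 < μ ∧ μ ≤ 1 ∧
      ∃ W : Set (EuclideanSpace ℝ (Fin N)), IsOpen W ∧ K ⊆ W ∧ W ⊆ U ∧
        ∀ x ∈ W,
          C * |f x| ^ ((1 : ℝ) - μ) ≤
            ‖(EuclideanSpace.equiv (Fin N) ℝ).symm (fun i => pd i f x)‖ := by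
  have hM := LG.HQ_of hpos hmono hM0 hlog hqa hder
  have hloc : ∀ a : K, ∃ C : ℝ, 0 < C ∧ ∃ μ : ℝ, 0 < μ ∧ μ ≤ 1 ∧
      ∃ V : Set (EuclideanSpace ℝ (Fin N)), IsOpen V ∧ a.1 ∈ V ∧ V ⊆ U ∧
        ∀ x ∈ V, |f x| ≤ |f a| + 1 ∧ C * |f x| ^ (1 - μ) ≤ ‖fderiv ℝ f x‖ := by
    intro a
    have ha := hKU a.2
    obtain ⟨C, hC, μ, hμ, hμ1, h⟩ := LG.local_GI hM hUopen hf hcrit ha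
    refine ⟨C, hC, μ, hμ, hμ1, ?_⟩
    have hc : ContinuousAt f a := (hf.1.contDiffAt (hUopen.mem_nhds ha)).continuousAt
    have hb : ∀ᶠ x in nhds a.1, |f x| < |f a| + 1 :=
      hc.abs.eventually (gt_mem_nhds (by linarith))
    obtain ⟨V, hV, hVo, haV⟩ := mem_nhds_iff.1 ((h.and hb).and (hUopen.mem_nhds ha))
    exact ⟨V, hVo, haV, fun x hx => (hV hx).2, fun x hx => ⟨(hV hx).1.2.le, (hV hx).1.1⟩⟩
  choose C hC μ hμ hμ1 V hVo haV hVU hV using hloc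
  obtain ⟨T, hT⟩ := hKcpt.elim_finite_subcover V hVo
    (fun x hx => Set.mem_iUnion.2 ⟨⟨x, hx⟩, haV _⟩)
  have hH : ∀ a : K, 1 ≤ |f a| + 1 := fun a => by linarith [abs_nonneg (f a)]
  have hH0 : ∀ a : K, 0 < |f a| + 1 := fun a => one_pos.trans_le (hH a)
  obtain ⟨c, hc, hc1, hcT⟩ := LG.exists_lower T (fun a => C a / (|f a| + 1))
    (fun a => div_pos (hC a) (hH0 a))
  obtain ⟨ν, hν, hν1, hνT⟩ := LG.exists_lower T μ hμ
  refine ⟨c, hc, ν, hν, hν1, ⋃ a ∈ T, V a, isOpen_biUnion fun a _ => hVo a, hT, ?_, ?_⟩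
  · exact Set.iUnion₂_subset fun a _ => hVU a
  · intro x hx
    obtain ⟨a, haT, hxa⟩ := Set.mem_iUnion₂.1 hx
    obtain ⟨h1, h2⟩ := hV a x hxa
    refine le_trans ?_ (h2.trans (LG.grad_norm f x))
    have h3 := LG.rp_le (abs_nonneg (f x)) (hH a) h1 hν (hνT a haT) (hμ1 a)
    have h4 := hcT a haT
    rw [le_div_iff₀ (hH0 a)] at h4
    calc c * |f x| ^ (1 - ν) ≤ c * ((|f a| + 1) * |f x| ^ (1 - μ a)) :=
          mul_le_mul_of_nonneg_left h3 hc.le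
      _ = c * (|f a| + 1) * |f x| ^ (1 - μ a) := by ring
      _ ≤ _ := mul_le_mul_of_nonneg_right h4 (Real.rpow_nonneg (abs_nonneg _) _)
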